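/- Generalized drift identification: for the strong solution $x(t,z)$ constructed above and for every $\theta\in\mathbb R^d$ and every continuous compactly supported $\varphi:\mathbb R^d\to\mathbb R$, $\lim_{t\downarrow 0}\frac{1}{t}\int_{\mathbb R^d}\varphi(z)\,\mathbb E\,(x(t,z)-z,\theta)\,dz=\int_S \varphi(z)\,(q\nu+\alpha(z),\theta)\,d\sigma_z$, where $d\sigma$ is Lebesgue measure on the hyperplane $S$. -/

import Mathlib

/-!
Write `L(t, a) = ∫₀ᵗ p_s(a) ds`, with `p_s` the centred Gaussian density of variance `s`, for the
expected local time at `0` of a Brownian motion started at `a` (`expLT`). Two facts give the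
theorem: uniformly in the starting point,
`E (x(t,z) - z, θ) = (qν + α(z^S), θ) L(t, (z,ν)) + o(1) L(t, (z,ν))` as `t ↓ 0` (`drift_error`),
and `L(t, a) / t` is an approximate identity in `a` (`tendsto_expLT_integral`), because
`∫ L(t, a) da = t` and `L(t, ·)` concentrates at `0`. Decomposing `z = aν + Jy` turns the latter into
convergence of `L(t, (z,ν)) dz / t` to Lebesgue measure on the hyperplane (`tendsto_slice`).

For the first fact, take expectations in the equation. The increment of `w` is centred, and so is the
integral against `w̃(η)` (`stoch_integral_bounds`), so only the drift integral is left. What remains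
is to know `E η_t`, and to replace `α(x^S(τ))` by `α(z^S)`.

*The mean of the local time.* The `ν`-component of `x` is a skew Brownian motion `a + q η + b`.
Since `η` grows only at its zeros, where the derivative of `cos` vanishes, `cos (l x)` satisfies the
same conditional formula as for a Brownian motion (`SkewOne.integral_cos`), which is proved by a
telescoping sum over partitions instead of Itô's formula. Hence `|x_t|` has the law of `|a + b_t|`.
Occupation times of `[-ε, ε]` therefore have Brownian means, and their second moments are bounded
by the Markov-type estimate `SkewOne.measure_abs_le_le`; letting `ε ↓ 0` gives `E η_t = L(t, a)` and
`E η_t² ≤ 2 √t L(t, a)` (`SkewOne.moments`).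

*The stochastic integral.* Given the whole path of `w`, the times `η_t` are deterministic and the
increments of `w̃` are still independent of its past. The Riemann sums are transforms of `w̃` at
times known from `w`, approximated by transforms on a deterministic grid (`transform_random`). They
are centred, and their second moment, weighted by any nonnegative function of `w`, is at most a
multiple of the weighted mean of `η_t`.

*Freezing the drift.* By the Lipschitz bound, the error is at most a multiple of the integral against
`dη` of the displacement of `x^S`. That displacement consists of the drift, of size `η_t`, of the
stochastic integral, and of the projection of `w` to the hyperplane. The last one is independent of
`η` (`IsWiener.indep_proj`), hence has mean square at most `m t` under the weight `dη`. Everything is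
therefore small compared with `E η_t`, with modulus `rho` (`weighted_displacement`).
-/

open MeasureTheory ProbabilityTheory Filter
open scoped RealInnerProductSpace

noncomputable section

variable {Ω : Type} [MeasurableSpace Ω]

/-- A standard one-dimensional Wiener process on `(Ω, P)`. -/
structure IsWiener1 (P : Measure Ω) (w : ℝ → Ω → ℝ) : Prop where
  meas : ∀ t, Measurable (w t)
  start : ∀ᵐ ω ∂P, w 0 ω = 0
  cont : ∀ᵐ ω ∂P, Continuous fun t => w t ω
  incr_indep : ∀ s t : ℝ, 0 ≤ s → s ≤ t →
    IndepFun (fun ω => w t ω - w s ω) (fun ω (u : Set.Icc (0:ℝ) s) => w u ω) P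
  incr_law : ∀ s t : ℝ, 0 ≤ s → s ≤ t →
    Measure.map (fun ω => w t ω - w s ω) P = gaussianReal 0 (Real.toNNReal (t - s))

/-- A standard Wiener process with values in a Euclidean space `E`:
every projection on a unit vector of an increment is a centered Gaussian of
variance `t - s`, and increments are independent of the past. -/
structure IsWiener {E : Type} [NormedAddCommGroup E] [InnerProductSpace ℝ E]
    [MeasurableSpace E] [BorelSpace E] (P : Measure Ω) (w : ℝ → Ω → E) : Prop where
  meas : ∀ t, Measurable (w t)
  start : ∀ᵐ ω ∂P, w 0 ω = 0
  cont : ∀ᵐ ω ∂P, Continuous fun t => w t ω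
  incr_indep : ∀ s t : ℝ, 0 ≤ s → s ≤ t →
    IndepFun (fun ω => w t ω - w s ω) (fun ω (u : Set.Icc (0:ℝ) s) => w u ω) P
  incr_law : ∀ θ : E, ‖θ‖ = 1 → ∀ s t : ℝ, 0 ≤ s → s ≤ t →
    Measure.map (fun ω => ⟪w t ω - w s ω, θ⟫) P = gaussianReal 0 (Real.toNNReal (t - s))

/-- A standard Wiener process taking values in the hyperplane `S` orthogonal to `ν`. -/
structure IsWienerIn {E : Type} [NormedAddCommGroup E] [InnerProductSpace ℝ E]
    [MeasurableSpace E] [BorelSpace E] (P : Measure Ω) (ν : E) (w : ℝ → Ω → E) : Prop where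
  meas : ∀ t, Measurable (w t)
  start : ∀ᵐ ω ∂P, w 0 ω = 0
  cont : ∀ᵐ ω ∂P, Continuous fun t => w t ω
  mem : ∀ t ω, ⟪w t ω, ν⟫ = 0
  incr_indep : ∀ s t : ℝ, 0 ≤ s → s ≤ t →
    IndepFun (fun ω => w t ω - w s ω) (fun ω (u : Set.Icc (0:ℝ) s) => w u ω) P
  incr_law : ∀ θ : E, ‖θ‖ = 1 → ⟪θ, ν⟫ = 0 → ∀ s t : ℝ, 0 ≤ s → s ≤ t →
    Measure.map (fun ω => ⟪w t ω - w s ω, θ⟫) P = gaussianReal 0 (Real.toNNReal (t - s))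

/-- Two processes are independent (as path-valued random variables). -/
def IndepProc {E F : Type} [MeasurableSpace E] [MeasurableSpace F]
    (P : Measure Ω) (w : ℝ → Ω → E) (w' : ℝ → Ω → F) : Prop :=
  IndepFun (fun ω (t : ℝ) => w t ω) (fun ω (t : ℝ) => w' t ω) P

/-- The natural filtration `F^w_t = σ{w(u), 0 ≤ u ≤ t}` of a process `w`. -/
def natFilt {E : Type} [MeasurableSpace E] (w : ℝ → Ω → E) (t : ℝ) : MeasurableSpace Ω :=
  ⨆ u ∈ Set.Icc (0:ℝ) t, MeasurableSpace.comap (w u) inferInstance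

/-- The σ-algebra `F̃_t = σ{ {w̃(s) ∈ Γ} ∩ {η_t ≥ s} : s ≥ 0, Γ Borel }`. -/
def tildeFilt {E : Type} [MeasurableSpace E] (wt : ℝ → Ω → E) (η : ℝ → Ω → ℝ) (t : ℝ) :
    MeasurableSpace Ω :=
  MeasurableSpace.generateFrom
    {A | ∃ s : ℝ, 0 ≤ s ∧ ∃ Γ : Set E, MeasurableSet Γ ∧
      A = {ω | wt s ω ∈ Γ ∧ s ≤ η t ω}}

/-- The enlarged filtration `M_t = F^w_t ∨ F̃_t`. -/
def MFilt {E F : Type} [MeasurableSpace E] [MeasurableSpace F]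
    (w : ℝ → Ω → E) (wt : ℝ → Ω → F) (η : ℝ → Ω → ℝ) (t : ℝ) : MeasurableSpace Ω :=
  natFilt w t ⊔ tildeFilt wt η t

/-- `η` is a continuous nondecreasing process, adapted to the natural filtration of `w`,
starting at `0`. -/
structure NiceEta {E : Type} [MeasurableSpace E] (P : Measure Ω) (w : ℝ → Ω → E)
    (η : ℝ → Ω → ℝ) : Prop where
  adapted : ∀ t : ℝ, 0 ≤ t → Measurable[natFilt w t] (η t)
  cont : ∀ᵐ ω ∂P, Continuous fun t => η t ω
  mono : ∀ᵐ ω ∂P, Monotone fun t => η t ω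
  zero : ∀ᵐ ω ∂P, η 0 ω = 0

/-- `(x¹, η)` is a skew Brownian motion pair with parameter `q`, driven by the
one-dimensional Wiener process `w1` and started at `a`: `x¹(t) = a + q η_t + w¹(t)`
and `η` is the symmetric local time of `x¹` at `0`. -/
structure IsSkewLT (P : Measure Ω) (q : ℝ) (w1 : ℝ → Ω → ℝ) (a : ℝ)
    (x1 : ℝ → Ω → ℝ) (η : ℝ → Ω → ℝ) : Prop where
  adapted_x : ∀ t : ℝ, 0 ≤ t → Measurable[natFilt w1 t] (x1 t)
  adapted_eta : ∀ t : ℝ, 0 ≤ t → Measurable[natFilt w1 t] (η t)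
  cont : ∀ᵐ ω ∂P, Continuous fun t => η t ω
  mono : ∀ᵐ ω ∂P, Monotone fun t => η t ω
  zero : ∀ᵐ ω ∂P, η 0 ω = 0
  eqn : ∀ t : ℝ, 0 ≤ t → ∀ᵐ ω ∂P, x1 t ω = a + q * η t ω + w1 t ω
  localTime : ∀ t : ℝ, 0 ≤ t → ∀ᵐ ω ∂P,
    Tendsto (fun ε : ℝ =>
        (1 / (2 * ε)) * ∫ τ in (0:ℝ)..t, (if |x1 τ ω| ≤ ε then (1:ℝ) else 0))
      (nhdsWithin 0 (Set.Ioi 0)) (nhds (η t ω))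

/-- Orthogonal projection on the hyperplane orthogonal to the unit vector `ν`. -/
def projS {E : Type} [NormedAddCommGroup E] [InnerProductSpace ℝ E] (ν : E) (v : E) : E :=
  v - ⟪v, ν⟫ • ν

/-- `x` solves, on `[s, ∞)`, the SDE
`x(t) = ξ + ∫_s^t (qν + α(xˢ(τ))) dη_τ + ∫_s^t β̃(xˢ(τ)) dζ_τ + w(t) - w(s)`,
the two integrals being understood as limits in probability of left Riemann sums
(Lebesgue–Stieltjes resp. Itô integrals). -/
structure SolvesFrom {E : Type} [NormedAddCommGroup E] [InnerProductSpace ℝ E]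
    [MeasurableSpace E] [BorelSpace E]
    (P : Measure Ω) (Mfil : ℝ → MeasurableSpace Ω) (ν : E) (q : ℝ)
    (α : E → E) (βt : E → E →L[ℝ] E)
    (w : ℝ → Ω → E) (η : ℝ → Ω → ℝ) (ζ : ℝ → Ω → E)
    (s : ℝ) (ξ : Ω → E) (x : ℝ → Ω → E) : Prop where
  init : ∀ᵐ ω ∂P, x s ω = ξ ω
  adapted : ∀ t : ℝ, s ≤ t → Measurable[Mfil t] (x t)
  cont : ∀ᵐ ω ∂P, ContinuousOn (fun t => x t ω) (Set.Ici s)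
  eqn : ∀ t : ℝ, s ≤ t → ∃ A M : Ω → E,
    TendstoInMeasure P
      (fun n ω => ∑ k ∈ Finset.range n,
        (η (s + ((k:ℝ)+1) * (t - s) / n) ω - η (s + (k:ℝ) * (t - s) / n) ω) •
          (q • ν + α (projS ν (x (s + (k:ℝ) * (t - s) / n) ω)))) atTop A ∧
    TendstoInMeasure P
      (fun n ω => ∑ k ∈ Finset.range n,
        (βt (projS ν (x (s + (k:ℝ) * (t - s) / n) ω)))
          (ζ (s + ((k:ℝ)+1) * (t - s) / n) ω - ζ (s + (k:ℝ) * (t - s) / n) ω)) atTop M ∧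
    ∀ᵐ ω ∂P, x t ω = ξ ω + A ω + M ω + (w t ω - w s ω)

set_option linter.unusedSectionVars false

/-! ### Limits in probability -/

/-- Fatou's lemma along a limit in probability. -/
lemma lintegral_le_of_tendstoInMeasure {α : Type*} [MeasurableSpace α] {μ : Measure α}
    {E : Type*} [NormedAddCommGroup E] {f : ℕ → α → E} {g : α → E}
    {Φ : α → E → ENNReal} (hΦc : ∀ a, Continuous (Φ a))
    (hm : ∀ n, AEMeasurable (fun a => Φ a (f n a)) μ)
    (hfg : TendstoInMeasure μ f atTop g) {C : ENNReal}
    (hC : ∀ n, ∫⁻ a, Φ a (f n a) ∂μ ≤ C) :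
    ∫⁻ a, Φ a (g a) ∂μ ≤ C := by
  obtain ⟨ns, -, hns⟩ := hfg.exists_seq_tendsto_ae
  have h1 : ∀ᵐ a ∂μ, Φ a (g a) = liminf (fun i => Φ a (f (ns i) a)) atTop := by
    filter_upwards [hns] with a ha
    exact (((hΦc a).tendsto _).comp ha).liminf_eq.symm
  rw [lintegral_congr_ae h1]
  refine (lintegral_liminf_le' fun n => hm (ns n)).trans ?_
  exact liminf_le_of_le (by isBoundedDefault) fun b hb => by
    obtain ⟨n, hn⟩ := hb.exists
    exact hn.trans (hC _)

/-- Convergence in probability together with an `L²` bound implies convergence of expectations. -/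
lemma tendsto_integral_of_L2_bdd (P : Measure Ω) [IsProbabilityMeasure P]
    {f : ℕ → Ω → ℝ} {g : Ω → ℝ} (hf : ∀ n, AEStronglyMeasurable (f n) P)
    (hfg : TendstoInMeasure P f atTop g) {C : ENNReal} (hCt : C ≠ ⊤)
    (hC : ∀ n, ∫⁻ ω, ‖f n ω‖ₑ ^ 2 ∂P ≤ C) :
    Integrable g P ∧ Tendsto (fun n => ∫ ω, f n ω ∂P) atTop (nhds (∫ ω, g ω ∂P)) := by
  have key : ∀ x y : ENNReal, y ≠ 0 → y ≠ ⊤ → y ≤ x → x ≤ x ^ 2 / y := by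
    intro x y hy hy' hxy
    rw [ENNReal.le_div_iff_mul_le (Or.inl hy) (Or.inl hy'), sq]
    gcongr
  have hgm : AEStronglyMeasurable g P := by
    obtain ⟨ns, -, hns⟩ := hfg.exists_seq_tendsto_ae
    exact aestronglyMeasurable_of_tendsto_ae atTop (fun n => hf (ns n)) hns
  have hg2 : ∫⁻ ω, ‖g ω‖ₑ ^ 2 ∂P ≤ C :=
    lintegral_le_of_tendstoInMeasure (Φ := fun _ x => ‖x‖ₑ ^ 2) (fun _ => by fun_prop)
      (fun n => (hf n).enorm.pow_const 2) hfg hC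
  have hL1 : ∀ h : Ω → ℝ, ∫⁻ ω, ‖h ω‖ₑ ^ 2 ∂P ≤ C → ∫⁻ ω, ‖h ω‖ₑ ∂P < ⊤ := by
    intro h hh
    have : ∀ ω, ‖h ω‖ₑ ≤ 1 + ‖h ω‖ₑ ^ 2 := by
      intro ω
      rcases le_total 1 ‖h ω‖ₑ with h1 | h1
      · calc ‖h ω‖ₑ ≤ ‖h ω‖ₑ ^ 2 / 1 := key _ _ one_ne_zero (by simp) h1
          _ ≤ _ := by simp
      · exact h1.trans (by simp)
    calc ∫⁻ ω, ‖h ω‖ₑ ∂P ≤ ∫⁻ ω, (1 + ‖h ω‖ₑ ^ 2) ∂P := lintegral_mono this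
      _ = 1 + ∫⁻ ω, ‖h ω‖ₑ ^ 2 ∂P := by
        rw [lintegral_add_left measurable_const]; simp
      _ < ⊤ := by
        refine ENNReal.add_lt_top.2 ⟨by simp, hh.trans_lt hCt.lt_top⟩
  have hgi : Integrable g P := ⟨hgm, hL1 g hg2⟩
  have hfi : ∀ n, Integrable (f n) P := fun n => ⟨hf n, hL1 _ (hC n)⟩
  have hui : UnifIntegrable f 1 P := by
    refine unifIntegrable_of le_rfl (by simp) hf fun ε hε => ?_
    refine ⟨Real.toNNReal (C.toReal / ε) + 1, fun n => ?_⟩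
    set c : NNReal := Real.toNNReal (C.toReal / ε) + 1 with hc
    have hc0 : (c : ENNReal) ≠ 0 := by
      simp [hc]
    rw [eLpNorm_one_eq_lintegral_enorm]
    calc ∫⁻ ω, ‖Set.indicator {x | c ≤ ‖f n x‖₊} (f n) ω‖ₑ ∂P
        ≤ ∫⁻ ω, ‖f n ω‖ₑ ^ 2 / c ∂P := by
          refine lintegral_mono fun ω => ?_
          by_cases hω : c ≤ ‖f n ω‖₊
          · rw [Set.indicator_of_mem (by exact hω)]
            exact key _ _ hc0 (by simp) (by exact_mod_cast hω)
          · rw [Set.indicator_of_notMem (by exact hω)]; simp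
      _ = (∫⁻ ω, ‖f n ω‖ₑ ^ 2 ∂P) / c := by
          simp_rw [div_eq_mul_inv]
          rw [lintegral_mul_const' _ _ (by simp [hc0])]
      _ ≤ C / c := by gcongr; exact hC n
      _ ≤ ENNReal.ofReal ε := by
          rw [ENNReal.div_le_iff hc0 (by simp)]
          rw [← ENNReal.ofReal_toReal hCt, ← ENNReal.ofReal_coe_nnreal,
            ← ENNReal.ofReal_mul hε.le]
          refine ENNReal.ofReal_le_ofReal ?_
          have : C.toReal / ε ≤ c := by
            rw [hc]; push_cast
            linarith [Real.le_coe_toNNReal (C.toReal / ε)]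
          rwa [div_le_iff₀' hε] at this
  have hL := tendsto_Lp_finite_of_tendstoInMeasure (p := 1) le_rfl (by simp) hf
    (memLp_one_iff_integrable.2 hgi) hui hfg
  refine ⟨hgi, tendsto_integral_of_L1 g hgm (Eventually.of_forall hfi) ?_⟩
  simpa [eLpNorm_one_eq_lintegral_enorm] using hL

/-! ### Growth of the local time at zeros, and uniform partitions -/

/-- A local time only grows across intervals that contain a zero of the path. -/
lemma exists_zero_of_occupation_lt {x η : ℝ → ℝ} (hx : Continuous x) (hη : Continuous η)
    (hlt : ∀ t : ℚ, 0 ≤ t → Tendsto (fun ε : ℝ =>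
        (1 / (2 * ε)) * ∫ τ in (0:ℝ)..t, (if |x τ| ≤ ε then (1:ℝ) else 0))
      (nhdsWithin 0 (Set.Ioi 0)) (nhds (η t)))
    {s u : ℝ} (hs : 0 ≤ s) (hsu : s ≤ u) (h : η s < η u) : ∃ τ ∈ Set.Icc s u, x τ = 0 := by
  by_contra! hne
  have hsu' : s < u := hsu.lt_of_ne (by rintro rfl; exact lt_irrefl _ h)
  obtain ⟨τ0, hτ0, hmin⟩ := isCompact_Icc.exists_isMinOn (Set.nonempty_Icc.2 hsu)
    (f := fun τ => |x τ|) (hx.abs.continuousOn)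
  have hδ : 0 < |x τ0| := abs_pos.2 (hne τ0 hτ0)
  obtain ⟨m, hm1, hm2⟩ := exists_between h
  have e1 : ∀ᶠ r in nhdsWithin s (Set.Ioi s), η r < m :=
    (hη.tendsto s).eventually (gt_mem_nhds hm1) |>.filter_mono nhdsWithin_le_nhds
  have e2 : ∀ᶠ r in nhdsWithin u (Set.Iio u), m < η r :=
    (hη.tendsto u).eventually (lt_mem_nhds hm2) |>.filter_mono nhdsWithin_le_nhds
  obtain ⟨s1, hs1, hs1'⟩ := (mem_nhdsGT_iff_exists_Ioo_subset).1 e1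
  obtain ⟨u1, hu1, hu1'⟩ := (mem_nhdsLT_iff_exists_Ioo_subset).1 e2
  obtain ⟨s', h1, h1'⟩ := exists_rat_btwn (lt_min hs1 hsu' : s < min s1 u)
  have h1'' := lt_min_iff.1 h1'
  obtain ⟨u', h2, h2'⟩ := exists_rat_btwn (max_lt hu1 h1''.2 : max u1 (s' : ℝ) < u)
  have h2'' := max_lt_iff.1 h2
  have hηs : η s' < m := hs1' ⟨h1, h1''.1⟩
  have hηu : m < η u' := hu1' ⟨h2''.1, h2'⟩
  have hs'0 : (0:ℝ) ≤ s' := hs.trans h1.le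
  have T1 := hlt s' (by exact_mod_cast hs'0)
  have T2 := hlt u' (by exact_mod_cast hs'0.trans h2''.2.le)
  have : η s' = η u' := by
    refine tendsto_nhds_unique T1 (T2.congr' ?_)
    have hε : ∀ᶠ ε : ℝ in nhdsWithin 0 (Set.Ioi 0), ε < |x τ0| :=
      (gt_mem_nhds hδ : ∀ᶠ ε in nhds (0:ℝ), ε < |x τ0|).filter_mono nhdsWithin_le_nhds
    filter_upwards [hε] with ε hε
    congr 1
    have hmeas : Measurable fun τ => if |x τ| ≤ ε then (1:ℝ) else 0 :=
      Measurable.ite (measurableSet_le hx.abs.measurable measurable_const)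
        measurable_const measurable_const
    have hint : ∀ c d : ℝ, IntervalIntegrable
        (fun τ => if |x τ| ≤ ε then (1:ℝ) else 0) volume c d := by
      intro c d
      refine (intervalIntegrable_const (c := (1:ℝ))).mono_fun hmeas.aestronglyMeasurable ?_
      refine Eventually.of_forall fun τ => ?_
      dsimp only; split_ifs <;> simp
    rw [← intervalIntegral.integral_add_adjacent_intervals (hint 0 s') (hint s' u')]
    rw [intervalIntegral.integral_congr (g := fun _ => (0:ℝ)) (a := s') (b := u')]
    · simp
    · intro τ hτ
      rw [Set.uIcc_of_le h2''.2.le] at hτ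
      have := hmin (show τ ∈ Set.Icc s u from ⟨h1.le.trans hτ.1, hτ.2.trans h2'.le⟩)
      have h3 : |x τ0| ≤ |x τ| := this
      simp only
      rw [if_neg (by linarith)]
  linarith

/-- Growth only across zeros is inherited by the truncated pair `(a + q (η ∧ N) + b, η ∧ N)`. -/
lemma exists_zero_truncated {a q N : ℝ} {b η : ℝ → ℝ} (hη : Continuous η) (hm : Monotone η)
    (hg : ∀ s u, 0 ≤ s → s ≤ u → η s < η u → ∃ τ ∈ Set.Icc s u, a + q * η τ + b τ = 0)
    {s u : ℝ} (hs : 0 ≤ s) (hsu : s ≤ u) (h : min (η s) N < min (η u) N) :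
    ∃ τ ∈ Set.Icc s u, a + q * min (η τ) N + b τ = 0 := by
  have hsN : η s < N := by
    by_contra hc
    rw [min_eq_right (not_lt.1 hc)] at h
    exact absurd h (not_lt.2 (min_le_right _ _))
  rcases le_total (η u) N with hu | hu
  · obtain ⟨τ, hτ, h0⟩ := hg s u hs hsu (by
      rwa [min_eq_left hsN.le, min_eq_left hu] at h)
    refine ⟨τ, hτ, ?_⟩
    rwa [min_eq_left ((hm hτ.2).trans hu)]
  · obtain ⟨v, hv, hvN⟩ := intermediate_value_Icc hsu hη.continuousOn
      (show N ∈ Set.Icc (η s) (η u) from ⟨hsN.le, hu⟩)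
    obtain ⟨τ, hτ, h0⟩ := hg s v hs hv.1 (by rw [hvN]; exact hsN)
    refine ⟨τ, ⟨hτ.1, hτ.2.trans hv.2⟩, ?_⟩
    rwa [min_eq_left ((hm hτ.2).trans hvN.le)]

/-- The change of `cos` under a shift by `B` is of second order when `D` is small too, because the
derivative of `cos` vanishes at `0`. -/
lemma abs_cos_sub_cos_le (D B : ℝ) : |Real.cos D - Real.cos (D - B)| ≤ |B| * (|D| + |B|) := by
  rw [Real.cos_sub_cos]
  have h1 : (D + (D - B)) / 2 = D - B / 2 := by ring
  have h2 : (D - (D - B)) / 2 = B / 2 := by ring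
  rw [h1, h2, abs_mul, abs_mul]
  have h3 : |Real.sin (D - B / 2)| ≤ |D| + |B| / 2 := by
    calc _ ≤ |D - B / 2| := Real.abs_sin_le_abs
      _ ≤ |D| + |B / 2| := abs_sub _ _
      _ = _ := by rw [abs_div]; norm_num
  have h4 : |Real.sin (B / 2)| ≤ |B| / 2 := by
    calc _ ≤ |B / 2| := Real.abs_sin_le_abs
      _ = _ := by rw [abs_div]; norm_num
  have h5 : |(-2:ℝ)| = 2 := by norm_num
  rw [h5]
  calc 2 * |Real.sin (D - B / 2)| * |Real.sin (B / 2)|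
      ≤ 2 * (|D| + |B| / 2) * (|B| / 2) := by gcongr
    _ ≤ _ := by nlinarith [abs_nonneg D, abs_nonneg B, mul_nonneg (abs_nonneg D) (abs_nonneg B),
        mul_nonneg (abs_nonneg B) (abs_nonneg B)]

lemma abs_cos_sub_cos_le' (D B : ℝ) : |Real.cos D - Real.cos (D - B)| ≤ |B| := by
  have := Real.lipschitzWith_cos.dist_le_mul D (D - B)
  simpa [Real.dist_eq] using this

/-- The `k`-th point of the uniform partition of `[s, u]` into `n` intervals. -/
def partPt (s u : ℝ) (n k : ℕ) : ℝ := s + (k:ℝ) * (u - s) / n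

lemma partPt_zero (s u : ℝ) (n : ℕ) : partPt s u n 0 = s := by simp [partPt]

lemma partPt_last (s u : ℝ) {n : ℕ} (hn : 0 < n) : partPt s u n n = u := by
  have : (n:ℝ) ≠ 0 := by positivity
  simp only [partPt]; field_simp; ring

lemma partPt_mono {s u : ℝ} (h : s ≤ u) (n : ℕ) : Monotone (partPt s u n) := by
  intro j k hjk
  have : 0 ≤ u - s := sub_nonneg.2 h
  simp only [partPt]
  gcongr

lemma partPt_succ_sub (s u : ℝ) (n k : ℕ) :
    partPt s u n (k+1) - partPt s u n k = (u - s) / n := by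
  simp only [partPt]; push_cast; ring

lemma partPt_mem {s u : ℝ} (h : s ≤ u) {n k : ℕ} (hn : 0 < n) (hk : k ≤ n) :
    partPt s u n k ∈ Set.Icc s u := by
  constructor
  · simpa [partPt_zero] using partPt_mono h n (Nat.zero_le k)
  · simpa [partPt_last s u hn] using partPt_mono h n hk

/-- Along refining partitions, the one-step errors made by freezing the increasing part of
`y = a + q ψ + b` in `cos (l y)` have vanishing sum, because `ψ` only grows near zeros of `y`. -/
lemma tendsto_sum_cos_error {l q : ℝ} {y ψ : ℝ → ℝ} (hy : Continuous y) (hψ : Continuous ψ)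
    (hm : Monotone ψ) {s u : ℝ} (hsu : s ≤ u)
    (hg : ∀ c d, s ≤ c → c ≤ d → ψ c < ψ d → ∃ τ ∈ Set.Icc c d, y τ = 0) :
    Tendsto (fun n : ℕ => ∑ k ∈ Finset.range n,
      |Real.cos (l * y (partPt s u n (k+1))) - Real.cos (l * y (partPt s u n (k+1))
        - l * q * (ψ (partPt s u n (k+1)) - ψ (partPt s u n k)))|) atTop (nhds 0) := by
  have hyu := isCompact_Icc.uniformContinuousOn_of_continuous
    (hy.continuousOn (s := Set.Icc s u))
  have hψu := isCompact_Icc.uniformContinuousOn_of_continuous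
    (hψ.continuousOn (s := Set.Icc s u))
  rw [Metric.uniformContinuousOn_iff] at hyu hψu
  rw [Metric.tendsto_atTop]
  intro ε hε
  set R : ℝ := |l * q| * (ψ u - ψ s) with hR
  have hR0 : 0 ≤ R := mul_nonneg (abs_nonneg _) (sub_nonneg.2 (hm hsu))
  set e : ℝ := ε / ((R + 1) * (|l| + |l * q| + 1)) with he
  have he0 : 0 < e := by positivity
  obtain ⟨δ1, hδ1, H1⟩ := hyu e he0
  obtain ⟨δ2, hδ2, H2⟩ := hψu e he0
  obtain ⟨n0, hn0⟩ := exists_nat_gt ((u - s) / min δ1 δ2)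
  refine ⟨n0 + 1, fun n hn => ?_⟩
  have hn1 : 0 < n := by omega
  have hmin : 0 < min δ1 δ2 := lt_min hδ1 hδ2
  have hstep : (u - s) / n < min δ1 δ2 := by
    rw [div_lt_iff₀ (by positivity)]
    rw [div_lt_iff₀ hmin] at hn0
    have : (n0:ℝ) ≤ n := by exact_mod_cast (by omega : n0 ≤ n)
    nlinarith
  rw [Real.dist_eq, sub_zero, abs_of_nonneg (Finset.sum_nonneg fun _ _ => abs_nonneg _)]
  have hterm : ∀ k ∈ Finset.range n,
      |Real.cos (l * y (partPt s u n (k+1))) - Real.cos (l * y (partPt s u n (k+1))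
        - l * q * (ψ (partPt s u n (k+1)) - ψ (partPt s u n k)))| ≤
      |l * q| * (ψ (partPt s u n (k+1)) - ψ (partPt s u n k)) * ((|l| + |l * q|) * e) := by
    intro k hk
    have hk' := Finset.mem_range.1 hk
    have m1 := partPt_mem hsu hn1 hk'.le
    have m2 := partPt_mem hsu hn1 (show k + 1 ≤ n by omega)
    have hle := partPt_mono hsu n (Nat.le_succ k)
    have hd := partPt_succ_sub s u n k
    set c := partPt s u n k
    set d := partPt s u n (k+1)
    change c ≤ d at hle
    have hψle : ψ c ≤ ψ d := hm hle
    rcases hψle.eq_or_lt with heq | hlt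
    · rw [heq]; simp
    · obtain ⟨τ, hτ, hτ0⟩ := hg c d m1.1 hle hlt
      have hτm : τ ∈ Set.Icc s u := ⟨m1.1.trans hτ.1, hτ.2.trans m2.2⟩
      have hyd : |y d| ≤ e := by
        have := H1 d m2 τ hτm (by
          rw [Real.dist_eq, abs_of_nonneg (by linarith [hτ.2])]
          linarith [hτ.1, min_le_left δ1 δ2])
        rw [hτ0, Real.dist_eq, sub_zero] at this
        exact this.le
      have hψd : |ψ d - ψ c| ≤ e := by
        have := H2 d m2 c m1 (by
          rw [Real.dist_eq, abs_of_nonneg (by linarith)]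
          linarith [min_le_right δ1 δ2])
        rw [Real.dist_eq] at this
        exact this.le
      refine (abs_cos_sub_cos_le _ _).trans ?_
      rw [abs_mul (l * q), abs_mul l (y d)]
      rw [abs_of_nonneg (sub_nonneg.2 hψle)] at hψd ⊢
      have h0 : 0 ≤ ψ d - ψ c := sub_nonneg.2 hψle
      rw [add_mul]
      gcongr
  refine (Finset.sum_le_sum hterm).trans_lt ?_
  rw [← Finset.sum_mul, ← Finset.mul_sum, Finset.sum_range_sub (fun k => ψ (partPt s u n k)),
    partPt_last s u hn1, partPt_zero]
  calc R * ((|l| + |l * q|) * e) ≤ R * ((|l| + |l * q| + 1) * e) :=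
        mul_le_mul_of_nonneg_left (mul_le_mul_of_nonneg_right (by linarith) he0.le) hR0
    _ < (R + 1) * ((|l| + |l * q| + 1) * e) := by
        have : 0 < (|l| + |l * q| + 1) * e := by positivity
        nlinarith
    _ = ε := by rw [he]; field_simp

/-! ### One-dimensional Brownian motion -/

lemma natFilt_le {E : Type} [MeasurableSpace E] {w : ℝ → Ω → E} (hw : ∀ t, Measurable (w t))
    (t : ℝ) : natFilt w t ≤ ‹MeasurableSpace Ω› :=
  iSup₂_le fun u _ => (hw u).comap_le

lemma natFilt_mono {E : Type} [MeasurableSpace E] (w : ℝ → Ω → E) {s t : ℝ} (h : s ≤ t) :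
    natFilt w s ≤ natFilt w t :=
  biSup_mono fun _ hu => ⟨hu.1, hu.2.trans h⟩

lemma measurable_natFilt {E : Type} [MeasurableSpace E] (w : ℝ → Ω → E) {s t : ℝ}
    (hs : 0 ≤ s) (h : s ≤ t) : Measurable[natFilt w t] (w s) :=
  Measurable.of_comap_le (le_iSup₂_of_le s ⟨hs, h⟩ le_rfl)

/-- A one-dimensional Brownian motion, with the independence of increments expressed through
the natural filtration. -/
structure IsBM1 (P : Measure Ω) (b : ℝ → Ω → ℝ) : Prop where
  meas : ∀ t, Measurable (b t)
  start : ∀ᵐ ω ∂P, b 0 ω = 0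
  cont : ∀ᵐ ω ∂P, Continuous fun t => b t ω
  indep : ∀ s u : ℝ, 0 ≤ s → s ≤ u →
    Indep (MeasurableSpace.comap (fun ω => b u ω - b s ω) inferInstance) (natFilt b s) P
  law : ∀ s t : ℝ, 0 ≤ s → s ≤ t →
    Measure.map (fun ω => b t ω - b s ω) P = gaussianReal 0 (Real.toNNReal (t - s))

lemma integral_cos_sin_gaussian (v : NNReal) (l : ℝ) :
    ∫ x, Real.cos (l * x) ∂(gaussianReal 0 v) = Real.exp (-(l ^ 2 * v / 2)) ∧
    ∫ x, Real.sin (l * x) ∂(gaussianReal 0 v) = 0 := by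
  have h := charFun_gaussianReal (μ := 0) (v := v) l
  rw [charFun_apply_real] at h
  have hint : Integrable (fun x : ℝ => Complex.exp (l * x * Complex.I)) (gaussianReal 0 v) := by
    refine Integrable.of_bound (C := 1) (by fun_prop) (Eventually.of_forall fun x => ?_)
    rw [← Complex.ofReal_mul, Complex.norm_exp_ofReal_mul_I]
  have hR : Complex.exp (l * (0:ℝ) * Complex.I - v * l ^ 2 / 2)
      = ((Real.exp (-(l ^ 2 * v / 2)) : ℝ) : ℂ) := by
    push_cast; congr 1; ring
  rw [hR] at h
  have h1 := congrArg Complex.re h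
  have h2 := congrArg Complex.im h
  have i1 := integral_re hint
  have i2 := integral_im hint
  simp only [RCLike.re_eq_complex_re, RCLike.im_eq_complex_im] at i1 i2
  rw [← i1, Complex.ofReal_re] at h1
  rw [← i2, Complex.ofReal_im] at h2
  refine ⟨?_, ?_⟩
  · refine Eq.trans ?_ h1; congr 1; ext x
    rw [← Complex.ofReal_mul, Complex.exp_ofReal_mul_I_re]
  · refine Eq.trans ?_ h2; congr 1; ext x
    rw [← Complex.ofReal_mul, Complex.exp_ofReal_mul_I_im]

namespace IsBM1
variable {P : Measure Ω} {b : ℝ → Ω → ℝ}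

lemma integral_cos_sin (hb : IsBM1 P b) {s u : ℝ} (hs : 0 ≤ s) (hsu : s ≤ u) (l : ℝ) :
    ∫ ω, Real.cos (l * (b u ω - b s ω)) ∂P = Real.exp (-(l ^ 2 * (u - s) / 2)) ∧
    ∫ ω, Real.sin (l * (b u ω - b s ω)) ∂P = 0 := by
  have hm : Measurable (fun ω => b u ω - b s ω) := (hb.meas u).sub (hb.meas s)
  have h := integral_cos_sin_gaussian (Real.toNNReal (u - s)) l
  rw [← hb.law s u hs hsu, integral_map hm.aemeasurable (by fun_prop),
    integral_map hm.aemeasurable (by fun_prop), Real.coe_toNNReal _ (sub_nonneg.2 hsu)] at h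
  exact h

/-- Freezing everything before time `s`, a Brownian increment damps `cos` by its
characteristic function. -/
lemma integral_cos_step [IsProbabilityMeasure P] (hb : IsBM1 P b) {s u : ℝ} (hs : 0 ≤ s) (hsu : s ≤ u) (l : ℝ)
    {Y ξ : Ω → ℝ} (hY : Measurable[natFilt b s] Y) (hξ : Measurable[natFilt b s] ξ)
    (hY1 : ∀ ω, |Y ω| ≤ 1) :
    ∫ ω, Y ω * Real.cos (l * (ξ ω + (b u ω - b s ω))) ∂P
      = Real.exp (-(l ^ 2 * (u - s) / 2)) * ∫ ω, Y ω * Real.cos (l * ξ ω) ∂P := by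
  have hm : Measurable (fun ω => b u ω - b s ω) := (hb.meas u).sub (hb.meas s)
  have hle := natFilt_le hb.meas s
  have hY' : Measurable Y := hY.mono hle le_rfl
  have hξ' : Measurable ξ := hξ.mono hle le_rfl
  have hind : ∀ f : ℝ → ℝ, Measurable f → ∀ g : ℝ → ℝ, Measurable g →
      ∫ ω, (Y ω * g (l * ξ ω)) * f (l * (b u ω - b s ω)) ∂P
        = (∫ ω, Y ω * g (l * ξ ω) ∂P) * ∫ ω, f (l * (b u ω - b s ω)) ∂P := by
    intro f hf g hg
    have h1 : Measurable[natFilt b s] (fun ω => Y ω * g (l * ξ ω)) :=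
      hY.mul (hg.comp (hξ.const_mul l))
    have h2 : IndepFun (fun ω => Y ω * g (l * ξ ω)) (fun ω => f (l * (b u ω - b s ω))) P := by
      rw [IndepFun_iff_Indep]
      refine indep_of_indep_of_le_left (indep_of_indep_of_le_right (hb.indep s u hs hsu).symm ?_)
        h1.comap_le
      exact ((hf.comp (measurable_const_mul l)).comp (comap_measurable _)).comap_le
    exact h2.integral_fun_mul_eq_mul_integral
      (hY'.mul (hg.comp (hξ'.const_mul l))).aestronglyMeasurable
      (hf.comp (hm.const_mul l)).aestronglyMeasurable
  have hib : ∀ f g : ℝ → ℝ, Measurable f → Measurable g → (∀ x, |f x| ≤ 1) → (∀ x, |g x| ≤ 1) →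
      Integrable (fun ω => (Y ω * g (l * ξ ω)) * f (l * (b u ω - b s ω))) P := by
    intro f g hf hg hf1 hg1
    refine Integrable.of_bound (C := 1) ((hY'.mul (hg.comp (hξ'.const_mul l))).mul
      (hf.comp (hm.const_mul l))).aestronglyMeasurable (Eventually.of_forall fun ω => ?_)
    rw [Real.norm_eq_abs, abs_mul, abs_mul]
    exact mul_le_one₀ (mul_le_one₀ (hY1 ω) (abs_nonneg _) (hg1 _)) (abs_nonneg _) (hf1 _)
  have hsplit : ∀ ω, Y ω * Real.cos (l * (ξ ω + (b u ω - b s ω)))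
      = (Y ω * Real.cos (l * ξ ω)) * Real.cos (l * (b u ω - b s ω))
        - (Y ω * Real.sin (l * ξ ω)) * Real.sin (l * (b u ω - b s ω)) := by
    intro ω
    rw [mul_add, Real.cos_add]; ring
  simp_rw [hsplit]
  rw [integral_sub (hib _ _ (by fun_prop) (by fun_prop) Real.abs_cos_le_one Real.abs_cos_le_one)
    (hib _ _ (by fun_prop) (by fun_prop) Real.abs_sin_le_one Real.abs_sin_le_one),
    hind _ (by fun_prop) _ (by fun_prop), hind _ (by fun_prop) _ (by fun_prop),
    (hb.integral_cos_sin hs hsu l).1, (hb.integral_cos_sin hs hsu l).2]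
  ring

end IsBM1

/-! ### The modulus of skew Brownian motion -/

namespace IsBM1
variable {P : Measure Ω} {b : ℝ → Ω → ℝ}

/-- If `ψ` is a bounded, adapted, increasing process which only grows near zeros of
`y = a + q ψ + b`, then `y` satisfies the same `cos`-formula as a Brownian motion. -/
lemma integral_cos_of_growth [IsProbabilityMeasure P] (hb : IsBM1 P b) {a q N : ℝ}
    {ψ : ℝ → Ω → ℝ}
    (had : ∀ t, 0 ≤ t → Measurable[natFilt b t] (ψ t))
    (hc : ∀ᵐ ω ∂P, Continuous fun t => ψ t ω) (hm : ∀ᵐ ω ∂P, Monotone fun t => ψ t ω)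
    (hg : ∀ᵐ ω ∂P, ∀ c d, 0 ≤ c → c ≤ d → ψ c ω < ψ d ω →
      ∃ τ ∈ Set.Icc c d, a + q * ψ τ ω + b τ ω = 0)
    {s u : ℝ} (hs : 0 ≤ s) (hsu : s ≤ u) (hN : ∀ᵐ ω ∂P, ψ u ω - ψ s ω ≤ N) (l : ℝ)
    {Y : Ω → ℝ} (hY : Measurable[natFilt b s] Y) (hY1 : ∀ ω, |Y ω| ≤ 1) :
    ∫ ω, Y ω * Real.cos (l * (a + q * ψ u ω + b u ω)) ∂P
      = Real.exp (-(l ^ 2 * (u - s) / 2)) *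
        ∫ ω, Y ω * Real.cos (l * (a + q * ψ s ω + b s ω)) ∂P := by
  set y : ℝ → Ω → ℝ := fun t ω => a + q * ψ t ω + b t ω with hy
  have hyad : ∀ t, 0 ≤ t → Measurable[natFilt b t] (y t) := fun t ht =>
    (((had t ht).const_mul q).const_add a).add (measurable_natFilt b ht le_rfl)
  have hym : ∀ t, 0 ≤ t → Measurable (y t) := fun t ht =>
    (hyad t ht).mono (natFilt_le hb.meas t) le_rfl
  have hψm : ∀ t, 0 ≤ t → Measurable (ψ t) := fun t ht =>
    (had t ht).mono (natFilt_le hb.meas t) le_rfl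
  have hYm : Measurable Y := hY.mono (natFilt_le hb.meas s) le_rfl
  set err : ℕ → ℕ → Ω → ℝ := fun n k ω =>
    |Real.cos (l * y (partPt s u n (k+1)) ω) - Real.cos (l * y (partPt s u n (k+1)) ω
        - l * q * (ψ (partPt s u n (k+1)) ω - ψ (partPt s u n k) ω))| with herr
  have hpt : ∀ n k, 0 ≤ partPt s u n k := fun n k => hs.trans (by
    simpa [partPt_zero] using partPt_mono hsu n (Nat.zero_le k))
  have hptm : ∀ n, Monotone (partPt s u n) := partPt_mono hsu
  have herrm : ∀ n k, Measurable (err n k) := by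
    intro n k
    have h1 := hym _ (hpt n (k+1))
    have h2 := hψm _ (hpt n (k+1))
    have h3 := hψm _ (hpt n k)
    simp only [herr]
    exact ((Real.measurable_cos.comp (h1.const_mul l)).sub (Real.measurable_cos.comp
      ((h1.const_mul l).sub ((h2.sub h3).const_mul (l * q))))).abs
  have herri : ∀ n k, Integrable (err n k) P := by
    intro n k
    refine Integrable.of_bound (C := 2) (herrm n k).aestronglyMeasurable
      (Eventually.of_forall fun ω => ?_)
    simp only [herr]
    rw [Real.norm_eq_abs, abs_abs]
    refine (abs_sub _ _).trans ?_
    linarith [Real.abs_cos_le_one (l * y (partPt s u n (k+1)) ω),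
      Real.abs_cos_le_one (l * y (partPt s u n (k+1)) ω
        - l * q * (ψ (partPt s u n (k+1)) ω - ψ (partPt s u n k) ω))]
  have hbi : ∀ f : Ω → ℝ, Measurable f → Integrable (fun ω => Y ω * Real.cos (f ω)) P := by
    intro f hf
    refine Integrable.of_bound (C := 1) (hYm.mul (Real.measurable_cos.comp hf)).aestronglyMeasurable
      (Eventually.of_forall fun ω => ?_)
    rw [Real.norm_eq_abs, abs_mul]
    exact mul_le_one₀ (hY1 ω) (abs_nonneg _) (Real.abs_cos_le_one _)
  set I : ℝ → ℝ := fun t => ∫ ω, Y ω * Real.cos (l * y t ω) ∂P with hI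
  have hstep : ∀ n k, |I (partPt s u n (k+1)) -
      Real.exp (-(l ^ 2 * (partPt s u n (k+1) - partPt s u n k) / 2)) * I (partPt s u n k)|
      ≤ ∫ ω, err n k ω ∂P := by
    intro n k
    have hle := hptm n (Nat.le_succ k)
    have hsle : s ≤ partPt s u n k := by
      simpa [partPt_zero] using partPt_mono hsu n (Nat.zero_le k)
    simp only [hI]
    rw [← hb.integral_cos_step (hpt n k) hle l (hY.mono (natFilt_mono b hsle) le_rfl)
      (hyad _ (hpt n k)) hY1]
    have hyy : Measurable fun ω => y (partPt s u n k) ω +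
        (b (partPt s u n (k+1)) ω - b (partPt s u n k) ω) :=
      (hym _ (hpt n k)).add ((hb.meas (partPt s u n (k+1))).sub (hb.meas (partPt s u n k)))
    rw [← integral_sub (hbi _ ((hym _ (hpt n (k+1))).const_mul l)) (hbi _ (hyy.const_mul l))]
    refine (abs_integral_le_integral_abs).trans (integral_mono_of_nonneg
      (Eventually.of_forall fun ω => abs_nonneg _) (herri n k) (Eventually.of_forall fun ω => ?_))
    simp only [herr]
    rw [← mul_sub, abs_mul]
    refine (mul_le_of_le_one_left (abs_nonneg _) (hY1 ω)).trans (le_of_eq ?_)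
    congr 3
    simp only [hy, Nat.succ_eq_add_one]
    ring
  have hind : ∀ n k, |I (partPt s u n k) -
      Real.exp (-(l ^ 2 * (partPt s u n k - s) / 2)) * I s|
      ≤ ∫ ω, ∑ j ∈ Finset.range k, err n j ω ∂P := by
    intro n k
    rw [integral_finsetSum _ fun j _ => herri n j]
    induction k with
    | zero => simp [partPt_zero]
    | succ k ih =>
      rw [Finset.sum_range_succ]
      have h1 := hstep n k
      set c := Real.exp (-(l ^ 2 * (partPt s u n (k+1) - partPt s u n k) / 2)) with hcdef
      have hc1 : c ≤ 1 := by
        rw [hcdef, Real.exp_le_one_iff]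
        have := sub_nonneg.2 (hptm n (Nat.le_succ k))
        have : 0 ≤ l ^ 2 * (partPt s u n (k+1) - partPt s u n k) / 2 := by positivity
        linarith
      have hc0 : 0 ≤ c := (Real.exp_pos _).le
      have hexp : Real.exp (-(l ^ 2 * (partPt s u n (k+1) - s) / 2))
          = c * Real.exp (-(l ^ 2 * (partPt s u n k - s) / 2)) := by
        rw [hcdef, ← Real.exp_add]; congr 1; ring
      calc |I (partPt s u n (k+1)) - Real.exp (-(l ^ 2 * (partPt s u n (k+1) - s) / 2)) * I s|
          = |(I (partPt s u n (k+1)) - c * I (partPt s u n k)) + c * (I (partPt s u n k) -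
            Real.exp (-(l ^ 2 * (partPt s u n k - s) / 2)) * I s)| := by
              rw [hexp]; congr 1; ring
        _ ≤ |I (partPt s u n (k+1)) - c * I (partPt s u n k)| + |c * (I (partPt s u n k) -
            Real.exp (-(l ^ 2 * (partPt s u n k - s) / 2)) * I s)| := abs_add_le _ _
        _ ≤ |I (partPt s u n (k+1)) - c * I (partPt s u n k)| + |I (partPt s u n k) -
            Real.exp (-(l ^ 2 * (partPt s u n k - s) / 2)) * I s| := by
              refine add_le_add_right ?_ _
              rw [abs_mul, abs_of_nonneg hc0]
              exact mul_le_of_le_one_left (abs_nonneg _) hc1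
        _ ≤ _ := by linarith
  have hlim : Tendsto (fun n => ∫ ω, ∑ j ∈ Finset.range n, err n j ω ∂P) atTop
      (nhds (∫ _, (0:ℝ) ∂P)) := by
    refine tendsto_integral_of_dominated_convergence (fun _ => |l * q| * N)
      (fun n => (Finset.measurable_fun_sum _ fun j _ => herrm n j).aestronglyMeasurable)
      (integrable_const _) (fun n => ?_) ?_
    · filter_upwards [hm, hN] with ω hω hNω
      rw [Real.norm_eq_abs, abs_of_nonneg (Finset.sum_nonneg fun _ _ => abs_nonneg _)]
      rcases Nat.eq_zero_or_pos n with rfl | hn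
      · have : ψ s ω ≤ ψ u ω := hω hsu
        have : 0 ≤ N := by linarith
        simp; positivity
      have : ∀ j ∈ Finset.range n, err n j ω ≤
          |l * q| * (ψ (partPt s u n (j+1)) ω - ψ (partPt s u n j) ω) := by
        intro j _
        refine (abs_cos_sub_cos_le' _ _).trans ?_
        rw [abs_mul (l * q), abs_of_nonneg (sub_nonneg.2 (hω (hptm n (Nat.le_succ j))))]
      refine (Finset.sum_le_sum this).trans ?_
      rw [← Finset.mul_sum, Finset.sum_range_sub (fun k => ψ (partPt s u n k) ω),
        partPt_last s u hn, partPt_zero]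
      gcongr
    · filter_upwards [hm, hc, hb.cont, hg] with ω h1 h2 h3 h4
      exact tendsto_sum_cos_error (y := fun t => y t ω) (ψ := fun t => ψ t ω)
        ((continuous_const.add (h2.const_mul q)).add h3) h2 h1 hsu
        (fun c d hc hcd h => h4 c d (hs.trans hc) hcd h)
  rw [integral_zero] at hlim
  have hfin : |I u - Real.exp (-(l ^ 2 * (u - s) / 2)) * I s| ≤ 0 := by
    refine ge_of_tendsto hlim ?_
    filter_upwards [eventually_gt_atTop 0] with n hn
    have := hind n n
    rwa [partPt_last s u hn] at this
  exact sub_eq_zero.1 (abs_nonpos_iff.1 hfin)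

end IsBM1

/-- The law of `|ξ|` on an event `B` is determined by the integrals of `cos (l ξ)` over `B`. -/
lemma measure_abs_le_eq_of_cos {P : Measure Ω} [IsFiniteMeasure P] {ξ ξ' : Ω → ℝ}
    (hξ : Measurable ξ) (hξ' : Measurable ξ') {B : Set Ω}
    (h : ∀ l : ℝ, ∫ ω in B, Real.cos (l * ξ ω) ∂P = ∫ ω in B, Real.cos (l * ξ' ω) ∂P) (ε : ℝ) :
    P (B ∩ {ω | |ξ ω| ≤ ε}) = P (B ∩ {ω | |ξ' ω| ≤ ε}) := by
  have hcf : ∀ f : Ω → ℝ, Measurable f → ∀ l : ℝ,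
      charFun ((P.restrict B).map f + (P.restrict B).map (fun ω => - f ω)) l
        = ((2 * ∫ ω in B, Real.cos (l * f ω) ∂P : ℝ) : ℂ) := by
    intro f hf l
    have hi : ∀ μ : Measure ℝ, IsFiniteMeasure μ →
        Integrable (fun x : ℝ => Complex.exp (l * x * Complex.I)) μ := by
      intro μ _
      refine Integrable.of_bound (C := 1) (by fun_prop) (Eventually.of_forall fun x => ?_)
      rw [← Complex.ofReal_mul, Complex.norm_exp_ofReal_mul_I]
    rw [charFun_apply_real, integral_add_measure (hi _ inferInstance) (hi _ inferInstance),
      integral_map hf.aemeasurable (by fun_prop),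
      integral_map (φ := fun ω => - f ω) hf.neg.aemeasurable (by fun_prop), ← integral_add]
    · rw [← integral_const_mul, ← integral_complex_ofReal]
      congr 1; ext ω
      push_cast
      rw [Complex.two_cos]
      congr 2; ring
    · exact (hi _ inferInstance : Integrable _ ((P.restrict B).map f)).comp_measurable hf
    · exact (hi _ inferInstance :
        Integrable _ ((P.restrict B).map (fun ω => - f ω))).comp_measurable hf.neg
  have hmeas : (P.restrict B).map ξ + (P.restrict B).map (fun ω => - ξ ω)
      = (P.restrict B).map ξ' + (P.restrict B).map (fun ω => - ξ' ω) := by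
    refine Measure.ext_of_charFun ?_
    ext l
    rw [hcf ξ hξ, hcf ξ' hξ', h l]
  have hI : MeasurableSet (Set.Icc (-ε) ε) := measurableSet_Icc
  have hval : ∀ f : Ω → ℝ, Measurable f →
      ((P.restrict B).map f + (P.restrict B).map (fun ω => - f ω)) (Set.Icc (-ε) ε)
        = 2 * P (B ∩ {ω | |f ω| ≤ ε}) := by
    intro f hf
    have e1 : f ⁻¹' (Set.Icc (-ε) ε) = {ω | |f ω| ≤ ε} := by
      ext ω; simp [abs_le]
    have e2 : (fun ω => - f ω) ⁻¹' (Set.Icc (-ε) ε) = {ω | |f ω| ≤ ε} := by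
      ext ω; simp only [Set.mem_preimage, Set.mem_Icc, Set.mem_ofPred_eq, abs_le]
      constructor <;> rintro ⟨h1, h2⟩ <;> constructor <;> linarith
    rw [Measure.add_apply, Measure.map_apply hf hI,
      Measure.map_apply (f := fun ω => - f ω) hf.neg hI, e1, e2,
      Measure.restrict_apply (measurableSet_le hf.abs measurable_const), Set.inter_comm, two_mul]
  have := hval ξ hξ
  rw [hmeas, hval ξ' hξ'] at this
  exact ((ENNReal.mul_right_inj (by simp) (by simp)).1 this).symm

/-- The pair `(x, η)` with `x = a + q η + b`, `b` a Brownian motion and `η` the symmetric local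
time of `x` at `0`. -/
structure SkewOne (P : Measure Ω) (q a : ℝ) (b η : ℝ → Ω → ℝ) : Prop where
  bm : IsBM1 P b
  adapted : ∀ t : ℝ, 0 ≤ t → Measurable[natFilt b t] (η t)
  cont : ∀ᵐ ω ∂P, Continuous fun t => η t ω
  mono : ∀ᵐ ω ∂P, Monotone fun t => η t ω
  zero : ∀ᵐ ω ∂P, η 0 ω = 0
  localTime : ∀ t : ℝ, 0 ≤ t → ∀ᵐ ω ∂P,
    Tendsto (fun ε : ℝ =>
        (1 / (2 * ε)) * ∫ τ in (0:ℝ)..t, (if |a + q * η τ ω + b τ ω| ≤ ε then (1:ℝ) else 0))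
      (nhdsWithin 0 (Set.Ioi 0)) (nhds (η t ω))

namespace SkewOne
variable {P : Measure Ω} {q a : ℝ} {b η : ℝ → Ω → ℝ}

lemma growth (h : SkewOne P q a b η) : ∀ᵐ ω ∂P, ∀ c d, 0 ≤ c → c ≤ d → η c ω < η d ω →
    ∃ τ ∈ Set.Icc c d, a + q * η τ ω + b τ ω = 0 := by
  have hq : ∀ᵐ ω ∂P, ∀ t : ℚ, 0 ≤ t → Tendsto (fun ε : ℝ =>
        (1 / (2 * ε)) * ∫ τ in (0:ℝ)..t, (if |a + q * η τ ω + b τ ω| ≤ ε then (1:ℝ) else 0))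
      (nhdsWithin 0 (Set.Ioi 0)) (nhds (η t ω)) := by
    rw [ae_all_iff]
    intro t
    by_cases ht : 0 ≤ t
    · filter_upwards [h.localTime t (by exact_mod_cast ht)] with ω hω _ using hω
    · exact Eventually.of_forall fun ω h' => absurd h' ht
  filter_upwards [hq, h.cont, h.bm.cont] with ω h1 h2 h3 c d hc hcd hlt
  exact exists_zero_of_occupation_lt (x := fun τ => a + q * η τ ω + b τ ω)
    (η := fun t => η t ω) ((continuous_const.add (h2.const_mul q)).add h3) h2 h1 hc hcd hlt

lemma measurable_eta (h : SkewOne P q a b η) {t : ℝ} (ht : 0 ≤ t) : Measurable (η t) :=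
  (h.adapted t ht).mono (natFilt_le h.bm.meas t) le_rfl

lemma measurable_x (h : SkewOne P q a b η) {t : ℝ} (ht : 0 ≤ t) :
    Measurable[natFilt b t] (fun ω => a + q * η t ω + b t ω) :=
  (((h.adapted t ht).const_mul q).const_add a).add (measurable_natFilt b ht le_rfl)

lemma measurable_x' (h : SkewOne P q a b η) {t : ℝ} (ht : 0 ≤ t) :
    Measurable (fun ω => a + q * η t ω + b t ω) :=
  (h.measurable_x ht).mono (natFilt_le h.bm.meas t) le_rfl

lemma nonneg (h : SkewOne P q a b η) {t : ℝ} (ht : 0 ≤ t) : ∀ᵐ ω ∂P, 0 ≤ η t ω := by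
  filter_upwards [h.mono, h.zero] with ω h1 h2
  rw [← h2]; exact h1 ht

/-- Conditionally on the past, `|x|` evolves like the modulus of a Brownian motion. -/
lemma integral_cos [IsProbabilityMeasure P] (h : SkewOne P q a b η)
    {s u : ℝ} (hs : 0 ≤ s) (hsu : s ≤ u) (l : ℝ)
    {Y : Ω → ℝ} (hY : Measurable[natFilt b s] Y) (hY1 : ∀ ω, |Y ω| ≤ 1) :
    ∫ ω, Y ω * Real.cos (l * (a + q * η u ω + b u ω)) ∂P
      = Real.exp (-(l ^ 2 * (u - s) / 2)) *
        ∫ ω, Y ω * Real.cos (l * (a + q * η s ω + b s ω)) ∂P := by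
  have hYm : Measurable Y := hY.mono (natFilt_le h.bm.meas s) le_rfl
  have hlim : ∀ t, 0 ≤ t → Tendsto (fun N : ℕ =>
      ∫ ω, Y ω * Real.cos (l * (a + q * min (η t ω) N + b t ω)) ∂P) atTop
      (nhds (∫ ω, Y ω * Real.cos (l * (a + q * η t ω + b t ω)) ∂P)) := by
    intro t ht
    refine tendsto_integral_of_dominated_convergence (fun _ => 1) (fun N => ?_)
      (integrable_const _) (fun N => Eventually.of_forall fun ω => ?_)
      (Eventually.of_forall fun ω => ?_)
    · have h1 := h.measurable_eta ht
      have h2 := h.bm.meas t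
      exact (hYm.mul (Real.measurable_cos.comp ((((h1.min measurable_const).const_mul q).const_add
        a |>.add h2).const_mul l))).aestronglyMeasurable
    · rw [Real.norm_eq_abs, abs_mul]
      exact mul_le_one₀ (hY1 ω) (abs_nonneg _) (Real.abs_cos_le_one _)
    · refine tendsto_const_nhds.congr' ?_
      obtain ⟨N0, hN0⟩ := exists_nat_ge (η t ω)
      filter_upwards [eventually_ge_atTop N0] with N hN
      rw [min_eq_left (hN0.trans (by exact_mod_cast hN))]
  refine tendsto_nhds_unique (hlim u (hs.trans hsu)) (((hlim s hs).const_mul _).congr fun N => ?_)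
  refine (h.bm.integral_cos_of_growth (ψ := fun t ω => min (η t ω) N) (N := N)
    (fun t ht => (h.adapted t ht).min measurable_const) ?_ ?_ ?_ hs hsu ?_ l hY hY1).symm
  · filter_upwards [h.cont] with ω h1 using h1.min continuous_const
  · filter_upwards [h.mono] with ω h1 using h1.min monotone_const
  · filter_upwards [h.cont, h.mono, h.growth] with ω h1 h2 h3 c d hc hcd hlt
    exact exists_zero_truncated (η := fun t => η t ω) (b := fun t => b t ω) h1 h2 h3 hc hcd hlt
  · filter_upwards [h.mono, h.zero] with ω h1 h2
    have h3 : 0 ≤ η s ω := by rw [← h2]; exact h1 hs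
    have : (0:ℝ) ≤ min (η s ω) N := le_min h3 (by positivity)
    linarith [min_le_right (η u ω) (N:ℝ)]

lemma measure_abs_le [IsProbabilityMeasure P] (h : SkewOne P q a b η)
    {s u : ℝ} (hs : 0 ≤ s) (hsu : s ≤ u) {B : Set Ω} (hB : MeasurableSet[natFilt b s] B) (ε : ℝ) :
    P (B ∩ {ω | |a + q * η u ω + b u ω| ≤ ε})
      = P (B ∩ {ω | |(a + q * η s ω + b s ω) + (b u ω - b s ω)| ≤ ε}) := by
  have hBm : MeasurableSet B := natFilt_le h.bm.meas s _ hB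
  refine measure_abs_le_eq_of_cos (ξ' := fun ω => (a + q * η s ω + b s ω) + (b u ω - b s ω))
    (h.measurable_x' (hs.trans hsu)) ((h.measurable_x' hs).add ((h.bm.meas u).sub (h.bm.meas s))) (fun l => ?_) ε
  set Y : Ω → ℝ := B.indicator fun _ => 1 with hYdef
  have hY : Measurable[natFilt b s] Y := by
    have hc : Measurable[natFilt b s] (fun _ : Ω => (1:ℝ)) := measurable_const
    exact hc.indicator hB
  have hY1 : ∀ ω, |Y ω| ≤ 1 := by
    intro ω
    rw [hYdef]
    by_cases hω : ω ∈ B <;> simp [hω]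
  have hset : ∀ f : Ω → ℝ, ∫ ω in B, f ω ∂P = ∫ ω, Y ω * f ω ∂P := by
    intro f
    rw [← integral_indicator hBm]
    congr 1; ext ω
    rw [hYdef]
    by_cases hω : ω ∈ B <;> simp [hω]
  rw [hset, hset, h.integral_cos hs hsu l hY hY1,
    h.bm.integral_cos_step hs hsu l hY (h.measurable_x hs) hY1]

end SkewOne

/-! ### Heat kernel bounds and the expected local time -/

/-- The supremum of the Gaussian density of variance `r` (zero for `r ≤ 0`). -/
def kdens (r : ℝ) : ENNReal := ENNReal.ofReal ((Real.sqrt (2 * Real.pi * r))⁻¹)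

/-- The expected local time at `0` accumulated up to time `t` by a Brownian motion started
at `a`. -/
def expLT (t a : ℝ) : ENNReal := ∫⁻ s in Set.Ioc 0 t, gaussianPDF a s.toNNReal 0

lemma kdens_of_nonpos {r : ℝ} (hr : r ≤ 0) : kdens r = 0 := by
  have : Real.sqrt (2 * Real.pi * r) = 0 :=
    Real.sqrt_eq_zero_of_nonpos (mul_nonpos_of_nonneg_of_nonpos (by positivity) hr)
  simp [kdens, this]

lemma measurable_kdens : Measurable kdens := by
  unfold kdens; fun_prop

lemma gaussianPDF_le_kdens (a x : ℝ) {r : ℝ} (hr : 0 ≤ r) :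
    gaussianPDF a r.toNNReal x ≤ kdens r := by
  unfold gaussianPDF kdens gaussianPDFReal
  refine ENNReal.ofReal_le_ofReal ?_
  rw [Real.coe_toNNReal _ hr]
  refine mul_le_of_le_one_right (by positivity) ?_
  rw [Real.exp_le_one_iff]
  rw [neg_div]
  have : 0 ≤ (x - a) ^ 2 / (2 * r) := by positivity
  linarith

lemma lintegral_kdens {t : ℝ} (ht : 0 ≤ t) :
    ∫⁻ r in Set.Ioc 0 t, kdens r ≤ ENNReal.ofReal (Real.sqrt t) := by
  have h1 : ∀ r ∈ Set.Ioc 0 t, kdens r = ENNReal.ofReal ((Real.sqrt (2 * Real.pi))⁻¹ *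
      r ^ (-(1/2) : ℝ)) := by
    intro r hr
    unfold kdens
    rw [Real.sqrt_mul (by positivity), mul_inv, Real.rpow_neg hr.1.le, Real.sqrt_eq_rpow r]
  rw [setLIntegral_congr_fun measurableSet_Ioc h1]
  have hii : IntervalIntegrable (fun r : ℝ => (Real.sqrt (2 * Real.pi))⁻¹ * r ^ (-(1/2) : ℝ))
      volume 0 t :=
    (intervalIntegral.intervalIntegrable_rpow' (by norm_num)).const_mul _
  rw [← ofReal_integral_eq_lintegral_ofReal
    ((intervalIntegrable_iff_integrableOn_Ioc_of_le ht).1 hii)]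
  · refine ENNReal.ofReal_le_ofReal ?_
    rw [← intervalIntegral.integral_of_le ht, intervalIntegral.integral_const_mul,
      integral_rpow (Or.inl (by norm_num))]
    have h2 : (2:ℝ) ≤ Real.sqrt (2 * Real.pi) := by
      refine Real.le_sqrt_of_sq_le ?_
      nlinarith [Real.pi_gt_three]
    have h3 : (-(1/2) : ℝ) + 1 = 1/2 := by norm_num
    rw [h3, Real.zero_rpow (by norm_num), ← Real.sqrt_eq_rpow, sub_zero]
    rw [inv_mul_le_iff₀ (by positivity)]
    have := Real.sqrt_nonneg t
    nlinarith
  · refine (ae_restrict_iff' measurableSet_Ioc).2 (Eventually.of_forall fun r hr => ?_)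
    have := hr.1
    simp only [Pi.zero_apply]
    positivity

lemma expLT_le {t : ℝ} (ht : 0 ≤ t) (a : ℝ) : expLT t a ≤ ENNReal.ofReal (Real.sqrt t) :=
  (setLIntegral_mono measurable_kdens fun _ hs => gaussianPDF_le_kdens a 0 hs.1.le).trans
    (lintegral_kdens ht)

lemma gaussianReal_Icc_le (a ε : ℝ) {r : ℝ} (hr : 0 < r) :
    gaussianReal a r.toNNReal (Set.Icc (-ε) ε) ≤ ENNReal.ofReal (2 * ε) * kdens r := by
  rw [gaussianReal_apply _ (by simpa using hr)]
  calc ∫⁻ x in Set.Icc (-ε) ε, gaussianPDF a r.toNNReal x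
      ≤ ∫⁻ _ in Set.Icc (-ε) ε, kdens r :=
        lintegral_mono fun x => gaussianPDF_le_kdens a x hr.le
    _ = _ := by
      rw [setLIntegral_const, Real.volume_Icc, mul_comm]; congr 2; ring

/-- Small-interval asymptotics of a Gaussian law. -/
lemma tendsto_gaussianReal_Icc (a : ℝ) {r : ℝ} (hr : 0 < r) :
    Tendsto (fun ε : ℝ => ENNReal.ofReal (1 / (2 * ε)) * gaussianReal a r.toNNReal (Set.Icc (-ε) ε))
      (nhdsWithin 0 (Set.Ioi 0)) (nhds (gaussianPDF a r.toNNReal 0)) := by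
  set g : ℝ → ℝ := gaussianPDFReal a r.toNNReal with hg
  have hgc : Continuous g := by
    rw [hg]; unfold gaussianPDFReal; fun_prop
  set G : ℝ → ℝ := fun x => ∫ y in (0:ℝ)..x, g y with hG
  have hder : HasDerivAt G (g 0) 0 :=
    intervalIntegral.integral_hasDerivAt_right (by simp)
      hgc.stronglyMeasurable.stronglyMeasurableAtFilter hgc.continuousAt
  have hG0 : G 0 = 0 := by simp [hG]
  have h1 := hasDerivAt_iff_tendsto_slope.1 hder
  have hp : Tendsto (fun ε : ℝ => ε) (nhdsWithin 0 (Set.Ioi 0)) (nhdsWithin 0 {0}ᶜ) :=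
    tendsto_id.mono_right (nhdsWithin_mono _ fun x hx => (ne_of_gt hx))
  have hn : Tendsto (fun ε : ℝ => -ε) (nhdsWithin 0 (Set.Ioi 0)) (nhdsWithin 0 {0}ᶜ) := by
    refine tendsto_nhdsWithin_iff.2 ⟨?_, ?_⟩
    · have : Tendsto (fun ε : ℝ => -ε) (nhds 0) (nhds (-0)) := (continuous_neg.tendsto 0)
      rw [neg_zero] at this
      exact this.mono_left nhdsWithin_le_nhds
    · filter_upwards [self_mem_nhdsWithin] with ε hε
      exact neg_ne_zero.2 (ne_of_gt hε)
  have h2 := ((h1.comp hp).add (h1.comp hn)).div_const 2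
  rw [add_self_div_two] at h2
  have h3 := (ENNReal.continuous_ofReal.tendsto _).comp h2
  refine h3.congr' ?_
  filter_upwards [self_mem_nhdsWithin] with ε hε
  have hε' : (0:ℝ) < ε := hε
  simp only [Function.comp_apply, slope_def_field, hG0, sub_zero]
  rw [gaussianReal_apply _ (by simpa using hr)]
  unfold gaussianPDF
  rw [← ofReal_integral_eq_lintegral_ofReal (integrable_gaussianPDFReal _ _).integrableOn
    (Eventually.of_forall fun x => gaussianPDFReal_nonneg _ _ x),
    ← ENNReal.ofReal_mul (by positivity)]
  congr 1
  rw [integral_Icc_eq_integral_Ioc, ← intervalIntegral.integral_of_le (by linarith),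
    ← intervalIntegral.integral_add_adjacent_intervals (b := 0)
      (hgc.intervalIntegrable _ _) (hgc.intervalIntegrable _ _),
    intervalIntegral.integral_symm]
  simp only [hG]
  field_simp
  ring

namespace SkewOne
variable {P : Measure Ω} {q a : ℝ} {b η : ℝ → Ω → ℝ}

/-- After any past event, the chance of being within `ε` of `0` is at most the length of the
window times the supremum of the heat kernel. -/
lemma measure_abs_le_le [IsProbabilityMeasure P] (h : SkewOne P q a b η)
    {s u : ℝ} (hs : 0 ≤ s) (hsu : s < u) {B : Set Ω} (hB : MeasurableSet[natFilt b s] B) (ε : ℝ) :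
    P (B ∩ {ω | |a + q * η u ω + b u ω| ≤ ε})
      ≤ ENNReal.ofReal (2 * ε) * kdens (u - s) * P B := by
  have hBm : MeasurableSet B := natFilt_le h.bm.meas s _ hB
  rw [h.measure_abs_le hs hsu.le hB]
  set V : Ω → ℝ × ℝ := fun ω => (B.indicator (fun _ => 1) ω, a + q * η s ω + b s ω) with hV
  set D : Ω → ℝ := fun ω => b u ω - b s ω with hD
  have hVn : Measurable[natFilt b s] V := by
    have hc : Measurable[natFilt b s] (fun _ : Ω => (1:ℝ)) := measurable_const
    exact (hc.indicator hB).prodMk (h.measurable_x hs)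
  have hVm : Measurable V := hVn.mono (natFilt_le h.bm.meas s) le_rfl
  have hDm : Measurable D := (h.bm.meas u).sub (h.bm.meas s)
  have hind : IndepFun V D P := by
    rw [IndepFun_iff_Indep]
    exact indep_of_indep_of_le_left (h.bm.indep s u hs hsu.le).symm hVn.comap_le
  have hprod := (indepFun_iff_map_prod_eq_prod_map_map hVm.aemeasurable hDm.aemeasurable).1 hind
  set T : Set ((ℝ × ℝ) × ℝ) := {p | p.1.1 = 1 ∧ |p.1.2 + p.2| ≤ ε} with hT
  have hTm : MeasurableSet T :=
    (measurableSet_eq_fun (f := fun p : (ℝ × ℝ) × ℝ => p.1.1) (g := fun _ => (1:ℝ))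
      (by fun_prop) (by fun_prop)).inter
    (measurableSet_le (f := fun p : (ℝ × ℝ) × ℝ => |p.1.2 + p.2|) (g := fun _ => ε)
      (by fun_prop) (by fun_prop))
  have hU : MeasurableSet {v : ℝ × ℝ | v.1 = 1} :=
    measurableSet_eq_fun (f := fun p : ℝ × ℝ => p.1) (g := fun _ => (1:ℝ))
      (by fun_prop) (by fun_prop)
  have hset : B ∩ {ω | |a + q * η s ω + b s ω + (b u ω - b s ω)| ≤ ε}
      = (fun ω => (V ω, D ω)) ⁻¹' T := by
    ext ω
    by_cases hω : ω ∈ B <;> simp [hω, hV, hT, hD]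
  rw [hset, ← Measure.map_apply (hVm.prodMk hDm) hTm, hprod, Measure.prod_apply hTm]
  have hPB : P.map V {v | v.1 = 1} = P B := by
    rw [Measure.map_apply hVm hU]
    congr 1; ext ω
    by_cases hω : ω ∈ B <;> simp [hω, hV]
  have hpt : ∀ v : ℝ × ℝ, (P.map D) (Prod.mk v ⁻¹' T) ≤
      Set.indicator {v : ℝ × ℝ | v.1 = 1} (fun _ => ENNReal.ofReal (2 * ε) * kdens (u - s)) v := by
    intro v
    by_cases hv : v.1 = 1
    · rw [Set.indicator_of_mem (by exact hv)]
      have e : Prod.mk v ⁻¹' T = (fun x => v.2 + x) ⁻¹' (Set.Icc (-ε) ε) := by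
        ext x
        simp only [hT, Set.mem_preimage, Set.mem_ofPred_eq, hv, abs_le, true_and, Set.mem_Icc]
      rw [e, ← Measure.map_apply (by fun_prop) measurableSet_Icc, hD, h.bm.law s u hs hsu.le,
        gaussianReal_map_const_add]
      exact gaussianReal_Icc_le _ _ (sub_pos.2 hsu)
    · have : Prod.mk v ⁻¹' T = ∅ := by
        ext x; simp [hT, hv]
      rw [this]; simp
  refine (lintegral_mono hpt).trans (le_of_eq ?_)
  rw [lintegral_indicator_const hU, hPB]

/-- The law of `|x_u|` is that of `|a + b_u|`. -/
lemma measure_abs_le_eq [IsProbabilityMeasure P] (h : SkewOne P q a b η)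
    {u : ℝ} (hu : 0 ≤ u) (ε : ℝ) :
    P {ω | |a + q * η u ω + b u ω| ≤ ε} = gaussianReal a u.toNNReal (Set.Icc (-ε) ε) := by
  have h1 := h.measure_abs_le le_rfl hu (B := Set.univ) MeasurableSet.univ ε
  rw [Set.univ_inter, Set.univ_inter] at h1
  rw [h1]
  have hDm : Measurable (fun ω => b u ω - b 0 ω) := (h.bm.meas u).sub (h.bm.meas 0)
  have h2 : P {ω | |a + q * η 0 ω + b 0 ω + (b u ω - b 0 ω)| ≤ ε}
      = P ((fun ω => b u ω - b 0 ω) ⁻¹' ((fun x => a + x) ⁻¹' (Set.Icc (-ε) ε))) := by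
    refine measure_congr ?_
    filter_upwards [h.zero, h.bm.start] with ω h3 h4
    apply propext
    change |a + q * η 0 ω + b 0 ω + (b u ω - b 0 ω)| ≤ ε ↔ a + (b u ω - b 0 ω) ∈ Set.Icc (-ε) ε
    rw [h3, h4, Set.mem_Icc, ← abs_le]; simp
  rw [h2, ← Measure.map_apply hDm (measurableSet_Icc.preimage (by fun_prop)),
    ← Measure.map_apply (by fun_prop) measurableSet_Icc, h.bm.law 0 u le_rfl hu,
    gaussianReal_map_const_add]
  simp

end SkewOne

/-! ### Moments of the occupation time and of the local time -/

namespace SkewOne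
variable {P : Measure Ω} {q a : ℝ} {b η : ℝ → Ω → ℝ}

/-- A jointly measurable version of the path of `x`, needed for Fubini in the occupation time. -/
lemma exists_modification (h : SkewOne P q a b η) : ∃ x : ℝ → Ω → ℝ,
    Measurable (Function.uncurry x) ∧
      ∀ᵐ ω ∂P, ∀ t, 0 ≤ t → x t ω = a + q * η t ω + b t ω := by
  classical
  have hgood : ∀ᵐ ω ∂P, (Continuous fun t => η t ω) ∧ Continuous fun t => b t ω :=
    h.cont.and h.bm.cont
  obtain ⟨G, hGs, hGm, hG⟩ := exists_measurable_superset_of_null hgood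
  refine ⟨fun t ω => if ω ∈ G then 0 else a + q * η (max t 0) ω + b (max t 0) ω, ?_, ?_⟩
  · refine measurable_uncurry_of_continuous_of_measurable (fun ω => ?_) fun t => ?_
    · by_cases hω : ω ∈ G
      · simp only [hω, if_true]; exact continuous_const
      · simp only [hω, if_false]
        have hω' : (Continuous fun t => η t ω) ∧ Continuous fun t => b t ω := by
          by_contra hc; exact hω (hGs hc)
        have hmx : Continuous fun t : ℝ => max t 0 := by fun_prop
        exact (continuous_const.add ((hω'.1.comp hmx).const_mul q)).add (hω'.2.comp hmx)
    · exact Measurable.ite hGm measurable_const (h.measurable_x' (le_max_right _ _))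
  · have : ∀ᵐ ω ∂P, ω ∉ G := measure_eq_zero_iff_ae_notMem.1 hG
    filter_upwards [this] with ω hω t ht
    simp only [hω, if_false, max_eq_left ht]

/-- First and second moments of the occupation time of `[-ε, ε]`. -/
lemma occupation_moments [IsProbabilityMeasure P] (h : SkewOne P q a b η) {x : ℝ → Ω → ℝ}
    (hxm : Measurable (Function.uncurry x))
    (hx : ∀ᵐ ω ∂P, ∀ t, 0 ≤ t → x t ω = a + q * η t ω + b t ω) {t : ℝ} (ht : 0 ≤ t) (ε : ℝ) :
    (∫⁻ ω, (∫⁻ τ in Set.Ioc 0 t, Set.indicator {τ | |x τ ω| ≤ ε} (fun _ => 1) τ) ∂P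
      = ∫⁻ τ in Set.Ioc 0 t, gaussianReal a τ.toNNReal (Set.Icc (-ε) ε)) ∧
    (∫⁻ ω, (∫⁻ τ in Set.Ioc 0 t, Set.indicator {τ | |x τ ω| ≤ ε} (fun _ => 1) τ) ^ 2 ∂P
      ≤ ENNReal.ofReal (2 * ε) * (2 * ENNReal.ofReal (Real.sqrt t)) *
        ∫⁻ τ in Set.Ioc 0 t, gaussianReal a τ.toNNReal (Set.Icc (-ε) ε)) := by
  set I : ℝ → Ω → ENNReal := fun τ ω => Set.indicator {τ | |x τ ω| ≤ ε} (fun _ => 1) τ with hI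
  set p : ℝ → ENNReal := fun τ => gaussianReal a τ.toNNReal (Set.Icc (-ε) ε) with hp
  have hset : MeasurableSet {z : ℝ × Ω | |x z.1 z.2| ≤ ε} :=
    measurableSet_le hxm.abs measurable_const
  have hIm : Measurable (Function.uncurry I) := by
    have : Function.uncurry I = Set.indicator {z : ℝ × Ω | |x z.1 z.2| ≤ ε} (fun _ => 1) := by
      ext ⟨τ, ω⟩
      by_cases hz : |x τ ω| ≤ ε <;> simp [I, hz]
    rw [this]
    exact measurable_const.indicator hset
  have hIτ : ∀ τ, Measurable (I τ) := fun τ => hIm.comp measurable_prodMk_left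
  have hIω : ∀ ω, Measurable fun τ => I τ ω := fun ω => hIm.comp measurable_prodMk_right
  have hp' : ∀ τ, 0 ≤ τ → ∫⁻ ω, I τ ω ∂P = p τ := by
    intro τ hτ
    rw [hp]
    simp only
    rw [← h.measure_abs_le_eq hτ]
    have hms : MeasurableSet {ω | |x τ ω| ≤ ε} := hset.preimage measurable_prodMk_left
    have e : (I τ) = Set.indicator {ω | |x τ ω| ≤ ε} (fun _ => 1) := by
      ext ω
      by_cases hz : |x τ ω| ≤ ε <;> simp [I, hz]
    rw [e, lintegral_indicator_const hms, one_mul]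
    refine measure_congr ?_
    filter_upwards [hx] with ω hω
    apply propext
    change |x τ ω| ≤ ε ↔ |a + q * η τ ω + b τ ω| ≤ ε
    rw [hω τ hτ]
  have hpm : AEMeasurable p (volume.restrict (Set.Ioc 0 t)) := by
    have h1 : Measurable fun τ => ∫⁻ ω, I τ ω ∂P := hIm.lintegral_prod_right'
    refine ⟨_, h1, (ae_restrict_iff' measurableSet_Ioc).2 (Eventually.of_forall fun τ hτ => ?_)⟩
    exact (hp' τ hτ.1.le).symm
  have hfirst : ∫⁻ ω, (∫⁻ τ in Set.Ioc 0 t, I τ ω) ∂P = ∫⁻ τ in Set.Ioc 0 t, p τ := by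
    rw [lintegral_lintegral_swap (f := fun ω τ => I τ ω) (hIm.comp measurable_swap).aemeasurable]
    exact setLIntegral_congr_fun measurableSet_Ioc fun τ hτ => hp' τ hτ.1.le
  refine ⟨hfirst, ?_⟩
  set c := ENNReal.ofReal (2 * ε) with hc
  -- two-point estimate: at most one of the two terms is nonzero
  have htwo : ∀ τ σ, 0 < τ → 0 < σ → τ ≠ σ →
      ∫⁻ ω, I τ ω * I σ ω ∂P ≤ c * kdens (σ - τ) * p τ + c * kdens (τ - σ) * p σ := by
    have hlt : ∀ τ σ, 0 < τ → τ < σ →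
        ∫⁻ ω, I τ ω * I σ ω ∂P ≤ c * kdens (σ - τ) * p τ := by
      intro τ σ hτ hτσ
      set B : Set Ω := {ω | |a + q * η τ ω + b τ ω| ≤ ε} with hB
      have hBn : MeasurableSet[natFilt b τ] B := by
        have h1 := h.measurable_x hτ.le
        have h2 : B = (fun ω => a + q * η τ ω + b τ ω) ⁻¹' (Set.Icc (-ε) ε) := by
          ext ω; simp only [hB, Set.mem_ofPred_eq, Set.mem_preimage, Set.mem_Icc, abs_le]
        rw [h2]
        exact h1 measurableSet_Icc
      have h3 := h.measure_abs_le_le hτ.le hτσ hBn ε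
      rw [show P B = p τ from h.measure_abs_le_eq hτ.le ε] at h3
      refine le_trans (le_of_eq ?_) h3
      have hms : MeasurableSet (B ∩ {ω | |a + q * η σ ω + b σ ω| ≤ ε}) :=
        (measurableSet_le (h.measurable_x' hτ.le).abs measurable_const).inter
          (measurableSet_le (h.measurable_x' (hτ.trans hτσ).le).abs measurable_const)
      rw [← one_mul (P _), ← lintegral_indicator_const hms]
      refine lintegral_congr_ae ?_
      filter_upwards [hx] with ω hω
      have e1 := hω τ hτ.le
      have e2 := hω σ (hτ.trans hτσ).le
      simp only [hI]
      by_cases h1 : |a + q * η τ ω + b τ ω| ≤ ε <;> by_cases h2 : |a + q * η σ ω + b σ ω| ≤ ε <;>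
        simp [h1, h2, e1, e2, hB]
    intro τ σ hτ hσ hne
    rcases hne.lt_or_gt with hl | hl
    · exact (hlt τ σ hτ hl).trans le_self_add
    · refine (le_of_eq ?_).trans ((hlt σ τ hσ hl).trans le_add_self)
      simp_rw [mul_comm]
  have hsq : ∀ ω, (∫⁻ τ in Set.Ioc 0 t, I τ ω) ^ 2
      = ∫⁻ τ in Set.Ioc 0 t, ∫⁻ σ in Set.Ioc 0 t, I τ ω * I σ ω := by
    intro ω
    simp_rw [lintegral_const_mul _ (hIω ω)]
    rw [lintegral_mul_const _ (hIω ω), sq]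
  have hm3 : Measurable fun z : (Ω × ℝ) × ℝ => I z.1.2 z.1.1 * I z.2 z.1.1 := by
    have h1 : Measurable fun z : (Ω × ℝ) × ℝ => I z.1.2 z.1.1 :=
      hIm.comp (f := fun z : (Ω × ℝ) × ℝ => (z.1.2, z.1.1)) (by fun_prop)
    have h2 : Measurable fun z : (Ω × ℝ) × ℝ => I z.2 z.1.1 :=
      hIm.comp (f := fun z : (Ω × ℝ) × ℝ => (z.2, z.1.1)) (by fun_prop)
    exact h1.mul h2
  have hk : Measurable fun z : ℝ × ℝ => kdens (z.2 - z.1) :=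
    measurable_kdens.comp (by fun_prop)
  have hkk : ∀ τ, 0 < τ → ∫⁻ σ in Set.Ioc 0 t, kdens (σ - τ) ≤ ENNReal.ofReal (Real.sqrt t) := by
    intro τ hτ
    refine le_trans ?_ (lintegral_kdens ht)
    rw [← lintegral_indicator measurableSet_Ioc, ← lintegral_indicator measurableSet_Ioc,
      ← lintegral_sub_right_eq_self (Set.indicator (Set.Ioc 0 t) kdens) τ]
    refine lintegral_mono fun σ => ?_
    by_cases hσ : σ ∈ Set.Ioc 0 t
    · rw [Set.indicator_of_mem hσ]
      rcases le_or_gt (σ - τ) 0 with h0 | h0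
      · rw [kdens_of_nonpos h0]; exact zero_le
      · rw [Set.indicator_of_mem (show σ - τ ∈ Set.Ioc 0 t from ⟨h0, by linarith [hσ.2]⟩)]
    · rw [Set.indicator_of_notMem hσ]; exact zero_le
  calc ∫⁻ ω, (∫⁻ τ in Set.Ioc 0 t, I τ ω) ^ 2 ∂P
      = ∫⁻ ω, (∫⁻ τ in Set.Ioc 0 t, ∫⁻ σ in Set.Ioc 0 t, I τ ω * I σ ω) ∂P := by
        simp_rw [hsq]
    _ = ∫⁻ τ in Set.Ioc 0 t, ∫⁻ σ in Set.Ioc 0 t, ∫⁻ ω, I τ ω * I σ ω ∂P := by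
        rw [lintegral_lintegral_swap]
        · refine lintegral_congr fun τ => ?_
          rw [lintegral_lintegral_swap]
          exact (hm3.comp (f := fun z : Ω × ℝ => ((z.1, τ), z.2)) (by fun_prop)).aemeasurable
        · exact (hm3.lintegral_prod_right').aemeasurable
    _ ≤ ∫⁻ τ in Set.Ioc 0 t, ∫⁻ σ in Set.Ioc 0 t,
          (c * kdens (σ - τ) * p τ + c * kdens (τ - σ) * p σ) := by
        refine setLIntegral_mono' measurableSet_Ioc fun τ hτ => ?_
        refine lintegral_mono_ae ((ae_restrict_iff' measurableSet_Ioc).2 ?_)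
        have hne : ∀ᵐ σ : ℝ, σ ≠ τ := by
          simp [ae_iff]
        filter_upwards [hne] with σ hσ hσ'
        exact htwo τ σ hτ.1 hσ'.1 hσ.symm
    _ = (∫⁻ τ in Set.Ioc 0 t, ∫⁻ σ in Set.Ioc 0 t, c * kdens (σ - τ) * p τ) +
          ∫⁻ τ in Set.Ioc 0 t, ∫⁻ σ in Set.Ioc 0 t, c * kdens (τ - σ) * p σ := by
        rw [← lintegral_add_left']
        · refine lintegral_congr fun τ => ?_
          rw [lintegral_add_left]
          exact ((measurable_kdens.comp (measurable_id.sub_const τ)).const_mul c).mul_const _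
        · refine AEMeasurable.congr (f := fun τ => (∫⁻ σ in Set.Ioc 0 t, c * kdens (σ - τ)) * p τ)
            ?_ (Eventually.of_forall fun τ => ?_)
          · refine AEMeasurable.mul ?_ hpm
            exact ((hk.const_mul c).lintegral_prod_right'
              (ν := volume.restrict (Set.Ioc 0 t))).aemeasurable
          · dsimp only
            rw [lintegral_mul_const]
            exact (measurable_kdens.comp (measurable_id.sub_const τ)).const_mul c
    _ = 2 * ∫⁻ τ in Set.Ioc 0 t, ∫⁻ σ in Set.Ioc 0 t, c * kdens (σ - τ) * p τ := by
        rw [two_mul]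
        congr 1
        rw [lintegral_lintegral_swap]
        refine AEMeasurable.mul ?_ (hpm.comp_quasiMeasurePreserving
          Measure.quasiMeasurePreserving_snd)
        exact ((measurable_kdens.comp (f := fun z : ℝ × ℝ => z.1 - z.2)
          (by fun_prop)).const_mul c).aemeasurable
    _ ≤ 2 * ∫⁻ τ in Set.Ioc 0 t, c * ENNReal.ofReal (Real.sqrt t) * p τ := by
        gcongr 2 * ?_
        refine setLIntegral_mono' measurableSet_Ioc fun τ hτ => ?_
        have hmk : Measurable fun σ => kdens (σ - τ) := measurable_kdens.comp (by fun_prop)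
        rw [lintegral_mul_const _ (hmk.const_mul c)]
        gcongr
        rw [lintegral_const_mul _ hmk]
        gcongr
        exact hkk τ hτ.1
    _ = _ := by
        rw [lintegral_const_mul'' _ hpm]
        ring

end SkewOne

/-- The normalised occupation probabilities of shrinking windows converge to the expected local
time. -/
lemma tendsto_occupation_expLT {t : ℝ} (ht : 0 ≤ t) (a : ℝ) {ε : ℕ → ℝ} (hε : ∀ n, 0 < ε n)
    (hε0 : Tendsto ε atTop (nhds 0)) :
    Tendsto (fun n => ENNReal.ofReal (1 / (2 * ε n)) *
      ∫⁻ τ in Set.Ioc 0 t, gaussianReal a τ.toNNReal (Set.Icc (-ε n) (ε n))) atTop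
      (nhds (expLT t a)) := by
  have hε' : Tendsto ε atTop (nhdsWithin 0 (Set.Ioi 0)) :=
    tendsto_nhdsWithin_iff.2 ⟨hε0, Eventually.of_forall hε⟩
  have hm : ∀ n, Measurable fun τ : ℝ =>
      ∫⁻ x in Set.Icc (-ε n) (ε n), gaussianPDF a τ.toNNReal x := by
    intro n
    refine Measurable.lintegral_prod_right' (f := fun p : ℝ × ℝ => gaussianPDF a p.1.toNNReal p.2)
      (ν := volume.restrict (Set.Icc (-ε n) (ε n))) ?_
    unfold gaussianPDF gaussianPDFReal
    fun_prop
  have hE : ∀ n, ENNReal.ofReal (1 / (2 * ε n)) *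
      ∫⁻ τ in Set.Ioc 0 t, gaussianReal a τ.toNNReal (Set.Icc (-ε n) (ε n))
      = ∫⁻ τ in Set.Ioc 0 t, ENNReal.ofReal (1 / (2 * ε n)) *
        ∫⁻ x in Set.Icc (-ε n) (ε n), gaussianPDF a τ.toNNReal x := by
    intro n
    rw [lintegral_const_mul _ (hm n)]
    congr 1
    refine setLIntegral_congr_fun measurableSet_Ioc fun τ hτ => ?_
    rw [gaussianReal_apply _ (by simpa using hτ.1)]
  simp_rw [hE]
  unfold expLT
  refine tendsto_lintegral_of_dominated_convergence kdens (fun n => (hm n).const_mul _) ?_ ?_ ?_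
  · intro n
    refine (ae_restrict_iff' measurableSet_Ioc).2 (Eventually.of_forall fun τ hτ => ?_)
    have h1 := gaussianReal_Icc_le a (ε n) hτ.1
    rw [gaussianReal_apply _ (by simpa using hτ.1)] at h1
    calc _ ≤ ENNReal.ofReal (1 / (2 * ε n)) * (ENNReal.ofReal (2 * ε n) * kdens τ) := mul_le_mul_right h1 _
      _ = kdens τ := by
        rw [← mul_assoc, ← ENNReal.ofReal_mul (by have := hε n; positivity),
          one_div_mul_cancel (by have := hε n; positivity), ENNReal.ofReal_one, one_mul]
  · exact ((lintegral_kdens ht).trans_lt ENNReal.ofReal_lt_top).ne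
  · refine (ae_restrict_iff' measurableSet_Ioc).2 (Eventually.of_forall fun τ hτ => ?_)
    have h1 := (tendsto_gaussianReal_Icc a hτ.1).comp hε'
    refine h1.congr fun n => ?_
    simp only [Function.comp]
    rw [gaussianReal_apply _ (by simpa using hτ.1)]

namespace SkewOne
variable {P : Measure Ω} {q a : ℝ} {b η : ℝ → Ω → ℝ}

/-- The mean of the local time is the Brownian one whatever the skewness, and its second moment
is controlled by its mean. -/
lemma moments [IsProbabilityMeasure P] (h : SkewOne P q a b η) {t : ℝ} (ht : 0 ≤ t) :
    Integrable (η t) P ∧ ∫ ω, η t ω ∂P = (expLT t a).toReal ∧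
      ∫⁻ ω, ENNReal.ofReal (η t ω) ^ 2 ∂P ≤ ENNReal.ofReal (2 * Real.sqrt t) * expLT t a := by
  obtain ⟨x, hxm, hx⟩ := h.exists_modification
  set ε : ℕ → ℝ := fun n => 1 / ((n : ℝ) + 1) with hεdef
  have hε : ∀ n, 0 < ε n := fun n => by positivity
  have hε0 : Tendsto ε atTop (nhds 0) := tendsto_one_div_add_atTop_nhds_zero_nat
  have hε' : Tendsto ε atTop (nhdsWithin 0 (Set.Ioi 0)) :=
    tendsto_nhdsWithin_iff.2 ⟨hε0, Eventually.of_forall hε⟩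
  set O : ℕ → Ω → ENNReal := fun n ω =>
    ∫⁻ τ in Set.Ioc 0 t, Set.indicator {τ | |x τ ω| ≤ ε n} (fun _ => 1) τ with hO
  set E : ℕ → ENNReal := fun n => ENNReal.ofReal (1 / (2 * ε n)) *
      ∫⁻ τ in Set.Ioc 0 t, gaussianReal a τ.toNNReal (Set.Icc (-ε n) (ε n)) with hE
  have hElim : Tendsto E atTop (nhds (expLT t a)) := tendsto_occupation_expLT ht a hε hε0
  have hxω : ∀ ω, Measurable fun τ => x τ ω := fun ω =>
    hxm.comp (f := fun τ : ℝ => (τ, ω)) (by fun_prop)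
  have hOm : ∀ n, Measurable (O n) := by
    intro n
    have hset : MeasurableSet {z : Ω × ℝ | |x z.2 z.1| ≤ ε n} :=
      measurableSet_le (hxm.comp measurable_swap).abs measurable_const
    have e : (fun z : Ω × ℝ => Set.indicator {τ | |x τ z.1| ≤ ε n} (fun _ => (1:ENNReal)) z.2)
        = Set.indicator {z : Ω × ℝ | |x z.2 z.1| ≤ ε n} (fun _ => 1) := by
      ext ⟨ω, τ⟩
      by_cases hz : |x τ ω| ≤ ε n <;> simp [hz]
    refine Measurable.lintegral_prod_right' (ν := volume.restrict (Set.Ioc 0 t))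
      (f := fun z : Ω × ℝ => Set.indicator {τ | |x τ z.1| ≤ ε n} (fun _ => (1:ENNReal)) z.2) ?_
    rw [e]
    exact measurable_const.indicator hset
  have hOvol : ∀ n ω, O n ω = volume ({τ | |x τ ω| ≤ ε n} ∩ Set.Ioc 0 t) := by
    intro n ω
    have hms : MeasurableSet {τ | |x τ ω| ≤ ε n} :=
      measurableSet_le (hxω ω).abs measurable_const
    simp only [hO]
    rw [lintegral_indicator_const hms, one_mul, Measure.restrict_apply hms]
  have hOtop : ∀ n ω, O n ω ≠ ⊤ := by
    intro n ω
    rw [hOvol]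
    refine ((measure_mono Set.inter_subset_right).trans_lt ?_).ne
    rw [Real.volume_Ioc]; exact ENNReal.ofReal_lt_top
  set f : ℕ → Ω → ℝ := fun n ω => 1 / (2 * ε n) * (O n ω).toReal with hf
  have hfm : ∀ n, Measurable (f n) := fun n => (hOm n).ennreal_toReal.const_mul _
  have hf0 : ∀ n ω, 0 ≤ f n ω := fun n ω => by
    have := hε n
    simp only [hf]; positivity
  have hfe : ∀ n ω, ENNReal.ofReal (f n ω) = ENNReal.ofReal (1 / (2 * ε n)) * O n ω := by
    intro n ω
    have := hε n
    simp only [hf]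
    rw [ENNReal.ofReal_mul (by positivity), ENNReal.ofReal_toReal (hOtop n ω)]
  have hlim : ∀ᵐ ω ∂P, Tendsto (fun n => f n ω) atTop (nhds (η t ω)) := by
    filter_upwards [h.localTime t ht, hx] with ω h1 h2
    refine (h1.comp hε').congr fun n => ?_
    simp only [Function.comp, hf]
    congr 1
    have hms : MeasurableSet {τ | |x τ ω| ≤ ε n} :=
      measurableSet_le (hxω ω).abs measurable_const
    rw [intervalIntegral.integral_of_le ht, hOvol]
    have e : ∀ τ ∈ Set.Ioc 0 t, (if |a + q * η τ ω + b τ ω| ≤ ε n then (1:ℝ) else 0)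
        = Set.indicator {τ | |x τ ω| ≤ ε n} (fun _ => 1) τ := by
      intro τ hτ
      have := h2 τ hτ.1.le
      by_cases hz : |a + q * η τ ω + b τ ω| ≤ ε n <;> simp [hz, this]
    rw [setIntegral_congr_fun measurableSet_Ioc e, integral_indicator_const _ hms,
      smul_eq_mul, mul_one, Measure.real, Measure.restrict_apply hms]
  have hfirst : ∀ n, ∫⁻ ω, ENNReal.ofReal (f n ω) ∂P = E n := by
    intro n
    simp_rw [hfe]
    rw [lintegral_const_mul _ (hOm n), (h.occupation_moments hxm hx ht (ε n)).1]
  have hsecond : ∀ n, ∫⁻ ω, ENNReal.ofReal (f n ω) ^ 2 ∂P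
      ≤ ENNReal.ofReal (2 * Real.sqrt t) * E n := by
    intro n
    simp_rw [hfe, mul_pow]
    rw [lintegral_const_mul _ ((hOm n).pow_const 2)]
    refine (mul_le_mul_right (h.occupation_moments hxm hx ht (ε n)).2 _).trans (le_of_eq ?_)
    have h1 : ENNReal.ofReal (1 / (2 * ε n)) * ENNReal.ofReal (2 * ε n) = 1 := by
      have := hε n
      rw [← ENNReal.ofReal_mul (by positivity), one_div_mul_cancel (by positivity),
        ENNReal.ofReal_one]
    have h2 : ENNReal.ofReal (2 * Real.sqrt t) = 2 * ENNReal.ofReal (Real.sqrt t) := by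
      rw [ENNReal.ofReal_mul (by norm_num)]; simp
    simp only [hE]
    rw [h2]
    generalize (∫⁻ τ in Set.Ioc 0 t, gaussianReal a τ.toNNReal (Set.Icc (-ε n) (ε n))) = V
    calc _ = (ENNReal.ofReal (1 / (2 * ε n)) * ENNReal.ofReal (2 * ε n)) *
          (ENNReal.ofReal (1 / (2 * ε n)) * (2 * ENNReal.ofReal (Real.sqrt t)) * V) := by ring
      _ = _ := by rw [h1]; ring
  have hEle : ∀ n, E n ≤ ENNReal.ofReal (Real.sqrt t) := by
    intro n
    have hh : ∫⁻ τ in Set.Ioc 0 t, gaussianReal a τ.toNNReal (Set.Icc (-ε n) (ε n))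
        ≤ ∫⁻ τ in Set.Ioc 0 t, ENNReal.ofReal (2 * ε n) * kdens τ :=
      setLIntegral_mono' measurableSet_Ioc fun τ hτ => gaussianReal_Icc_le a (ε n) hτ.1
    rw [lintegral_const_mul _ measurable_kdens] at hh
    calc E n ≤ ENNReal.ofReal (1 / (2 * ε n)) * (ENNReal.ofReal (2 * ε n) *
          ∫⁻ τ in Set.Ioc 0 t, kdens τ) := by simp only [hE]; gcongr
      _ = ∫⁻ τ in Set.Ioc 0 t, kdens τ := by
        rw [← mul_assoc, ← ENNReal.ofReal_mul (by have := hε n; positivity),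
          one_div_mul_cancel (by have := hε n; positivity), ENNReal.ofReal_one, one_mul]
      _ ≤ _ := lintegral_kdens ht
  have hL2 := tendsto_integral_of_L2_bdd P (f := f) (g := η t)
    (fun n => (hfm n).aestronglyMeasurable)
    (tendstoInMeasure_of_tendsto_ae (fun n => (hfm n).aestronglyMeasurable) hlim)
    (C := ENNReal.ofReal (2 * Real.sqrt t) * ENNReal.ofReal (Real.sqrt t))
    (ENNReal.mul_ne_top ENNReal.ofReal_ne_top ENNReal.ofReal_ne_top) (fun n => by
      simp_rw [Real.enorm_of_nonneg (hf0 n _)]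
      exact (hsecond n).trans (by gcongr; exact hEle n))
  refine ⟨hL2.1, ?_, ?_⟩
  · refine tendsto_nhds_unique hL2.2 ?_
    have h1 : ∀ n, ∫ ω, f n ω ∂P = (E n).toReal := by
      intro n
      rw [integral_eq_lintegral_of_nonneg_ae (Eventually.of_forall (hf0 n))
        (hfm n).aestronglyMeasurable, hfirst]
    simp_rw [h1]
    exact (ENNReal.tendsto_toReal
      ((expLT_le ht a).trans_lt ENNReal.ofReal_lt_top).ne).comp hElim
  · have hle : ∀ᵐ ω ∂P, ENNReal.ofReal (η t ω) ^ 2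
        = liminf (fun n => ENNReal.ofReal (f n ω) ^ 2) atTop := by
      filter_upwards [hlim] with ω hω
      exact ((((ENNReal.continuous_pow 2).comp ENNReal.continuous_ofReal).tendsto _).comp
        hω).liminf_eq.symm
    rw [lintegral_congr_ae hle]
    refine (lintegral_liminf_le fun n => (hfm n).ennreal_ofReal.pow_const 2).trans ?_
    have h2 : Tendsto (fun n => ENNReal.ofReal (2 * Real.sqrt t) * E n) atTop
        (nhds (ENNReal.ofReal (2 * Real.sqrt t) * expLT t a)) :=
      ENNReal.Tendsto.const_mul hElim (Or.inr ENNReal.ofReal_ne_top)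
    rw [← h2.liminf_eq]
    exact liminf_le_liminf (Eventually.of_forall hsecond)

end SkewOne

/-! ### Components of a Wiener process -/

section Paths

/-- Coordinate space of dimension `m`. -/
abbrev Eu (m : ℕ) : Type := EuclideanSpace ℝ (Fin m)

variable {P : Measure Ω} {m : ℕ}

/-- Independence of the past process, in terms of the natural filtration. -/
lemma indep_natFilt_of_indepFun {E : Type} [MeasurableSpace E] {w : ℝ → Ω → E} {s : ℝ}
    {D : Ω → E} (h : IndepFun D (fun ω (u : Set.Icc (0:ℝ) s) => w u ω) P) :
    Indep (MeasurableSpace.comap D inferInstance) (natFilt w s) P := by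
  have h' : Indep (MeasurableSpace.comap D inferInstance)
      (MeasurableSpace.comap (fun ω (u : Set.Icc (0:ℝ) s) => w u ω) inferInstance) P :=
    (IndepFun_iff_Indep ..).1 h
  refine indep_of_indep_of_le_right h' (iSup₂_le fun u hu => ?_)
  have e : w u = (fun f : (Set.Icc (0:ℝ) s) → E => f ⟨u, hu⟩) ∘
      (fun ω (u : Set.Icc (0:ℝ) s) => w u ω) := rfl
  rw [e, ← MeasurableSpace.comap_comp]
  exact MeasurableSpace.comap_mono (measurable_pi_apply _).comap_le

/-- The component of a Wiener process along a unit vector is a one-dimensional Brownian motion. -/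
lemma IsWiener.isBM1 {w : ℝ → Ω → Eu m} (hw : IsWiener P w) {ν : Eu m} (hν : ‖ν‖ = 1) :
    IsBM1 P (fun t ω => ⟪w t ω, ν⟫) where
  meas t := (hw.meas t).inner_const
  start := by filter_upwards [hw.start] with ω hω; simp [hω]
  cont := by
    filter_upwards [hw.cont] with ω hω
    exact hω.inner continuous_const
  indep s u hs hsu := by
    have h := indep_natFilt_of_indepFun (hw.incr_indep s u hs hsu)
    refine indep_of_indep_of_le_right (indep_of_indep_of_le_left h ?_)
      (iSup₂_mono fun v _ => ?_)
    · have e : (fun ω => ⟪w u ω, ν⟫ - ⟪w s ω, ν⟫)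
          = (fun x : Eu m => ⟪x, ν⟫) ∘ (fun ω => w u ω - w s ω) := by
        ext ω; simp [inner_sub_left]
      rw [e, ← MeasurableSpace.comap_comp]
      exact MeasurableSpace.comap_mono (by fun_prop : Measurable fun x : Eu m => ⟪x, ν⟫).comap_le
    · have e : (fun ω => ⟪w v ω, ν⟫) = (fun x : Eu m => ⟪x, ν⟫) ∘ w v := rfl
      change MeasurableSpace.comap (fun ω => ⟪w v ω, ν⟫) _ ≤ _
      rw [e, ← MeasurableSpace.comap_comp]
      exact MeasurableSpace.comap_mono (by fun_prop : Measurable fun x : Eu m => ⟪x, ν⟫).comap_le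
  law s t hs hst := by
    rw [← hw.incr_law ν hν s t hs hst]
    congr 1; ext ω; simp [inner_sub_left]

/-- The skew pair, with the local time expressed through its own explicit `x`. -/
lemma IsSkewLT.skewOne {q a : ℝ} {w1 x1 η : ℝ → Ω → ℝ} (hw1 : IsBM1 P w1)
    (h : IsSkewLT P q w1 a x1 η)
    (hx : ∀ᵐ ω ∂P, ContinuousOn (fun t => x1 t ω) (Set.Ici 0)) : SkewOne P q a w1 η where
  bm := hw1
  adapted := h.adapted_eta
  cont := h.cont
  mono := h.mono
  zero := h.zero
  localTime t ht := by
    have hq : ∀ᵐ ω ∂P, ∀ r : ℚ, 0 ≤ r → x1 r ω = a + q * η r ω + w1 r ω := by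
      rw [ae_all_iff]
      intro r
      by_cases hr : 0 ≤ r
      · filter_upwards [h.eqn r (by exact_mod_cast hr)] with ω hω _ using hω
      · exact Eventually.of_forall fun ω h' => absurd h' hr
    filter_upwards [h.localTime t ht, hq, h.cont, hw1.cont, hx] with ω h1 h2 h3 h4 h5
    have key : ∀ τ, 0 < τ → x1 τ ω = a + q * η τ ω + w1 τ ω := by
      intro τ hτ
      have hc1 : ContinuousAt (fun t => x1 t ω) τ := h5.continuousAt (Ici_mem_nhds hτ)
      have hc2 : ContinuousAt (fun t => a + q * η t ω + w1 t ω) τ :=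
        ((continuous_const.add (h3.const_mul q)).add h4).continuousAt
      obtain ⟨u, -, hu, hlim⟩ := Real.exists_seq_rat_strictAnti_tendsto τ
      refine tendsto_nhds_unique (hc1.tendsto.comp hlim) ((hc2.tendsto.comp hlim).congr fun n => ?_)
      simp only [Function.comp]
      exact (h2 (u n) (by exact_mod_cast (hτ.trans (hu n)).le)).symm
    refine h1.congr fun ε => ?_
    congr 1
    rw [intervalIntegral.integral_of_le ht, intervalIntegral.integral_of_le ht]
    refine setIntegral_congr_fun measurableSet_Ioc fun τ hτ => ?_
    simp only [key τ hτ.1]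

/-- First two moments of a centred Gaussian variable. -/
lemma moments_of_map_gaussian {f : Ω → ℝ} (hf : Measurable f) {v : NNReal}
    (h : Measure.map f P = gaussianReal 0 v) :
    MemLp f 2 P ∧ ∫ ω, f ω ∂P = 0 ∧ ∫ ω, f ω ^ 2 ∂P = v := by
  have hid : MemLp id 2 (gaussianReal 0 v) := memLp_id_gaussianReal 2
  rw [← h] at hid
  have h2 : MemLp f 2 P := (memLp_map_measure_iff (by fun_prop) hf.aemeasurable).1 hid
  have h0 : ∫ ω, f ω ∂P = 0 := by
    have := integral_id_gaussianReal (μ := 0) (v := v)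
    rw [← h, integral_map hf.aemeasurable (by fun_prop)] at this
    exact this
  refine ⟨h2, h0, ?_⟩
  have h3 := variance_fun_id_gaussianReal (μ := 0) (v := v)
  rw [variance_of_integral_eq_zero (by fun_prop) (by simp), ← h,
    integral_map hf.aemeasurable (by fun_prop)] at h3
  exact h3

lemma IsWiener.law_inner [IsProbabilityMeasure P] {w : ℝ → Ω → Eu m} (hw : IsWiener P w) {s t : ℝ} (hs : 0 ≤ s)
    (hst : s ≤ t) (x : Eu m) :
    Measure.map (fun ω => ⟪w t ω - w s ω, x⟫) P
      = gaussianReal 0 (‖x‖ ^ 2 * (t - s)).toNNReal := by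
  by_cases hx : x = 0
  · subst hx; simp
  have hx' : ‖x‖ ≠ 0 := norm_ne_zero_iff.2 hx
  have h := hw.incr_law (‖x‖⁻¹ • x) (by rw [norm_smul, norm_inv, norm_norm,
    inv_mul_cancel₀ hx']) s t hs hst
  have hm : Measurable (fun ω => ⟪w t ω - w s ω, ‖x‖⁻¹ • x⟫) :=
    ((hw.meas t).sub (hw.meas s)).inner_const
  have e : (fun ω => ⟪w t ω - w s ω, x⟫)
      = (fun r => ‖x‖ * r) ∘ (fun ω => ⟪w t ω - w s ω, ‖x‖⁻¹ • x⟫) := by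
    ext ω; simp only [Function.comp, inner_smul_right]; field_simp
  rw [e, ← Measure.map_map (by fun_prop) hm, h, gaussianReal_map_const_mul]
  congr 1
  · simp
  · ext; simp [Real.toNNReal_of_nonneg, sub_nonneg.2 hst, mul_nonneg]

lemma IsWienerIn.law_inner [IsProbabilityMeasure P] {ν : Eu m} (hν : ‖ν‖ = 1) {w : ℝ → Ω → Eu m}
    (hw : IsWienerIn P ν w) {s t : ℝ} (hs : 0 ≤ s) (hst : s ≤ t) (x : Eu m) :
    Measure.map (fun ω => ⟪w t ω - w s ω, x⟫) P
      = gaussianReal 0 (‖projS ν x‖ ^ 2 * (t - s)).toNNReal := by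
  have e0 : (fun ω => ⟪w t ω - w s ω, x⟫) = fun ω => ⟪w t ω - w s ω, projS ν x⟫ := by
    ext ω; simp [projS, inner_sub_left, inner_sub_right, inner_smul_right, hw.mem]
  rw [e0]
  have hy : ⟪projS ν x, ν⟫ = 0 := by
    simp [projS, inner_sub_left, inner_smul_left, hν]
  generalize projS ν x = y at hy ⊢
  by_cases hx : y = 0
  · subst hx; simp
  have hx' : ‖y‖ ≠ 0 := norm_ne_zero_iff.2 hx
  have h := hw.incr_law (‖y‖⁻¹ • y) (by rw [norm_smul, norm_inv, norm_norm,
    inv_mul_cancel₀ hx']) (by rw [inner_smul_left, hy, mul_zero]) s t hs hst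
  have hm : Measurable (fun ω => ⟪w t ω - w s ω, ‖y‖⁻¹ • y⟫) :=
    ((hw.meas t).sub (hw.meas s)).inner_const
  have e : (fun ω => ⟪w t ω - w s ω, y⟫)
      = (fun r => ‖y‖ * r) ∘ (fun ω => ⟪w t ω - w s ω, ‖y‖⁻¹ • y⟫) := by
    ext ω; simp only [Function.comp, inner_smul_right]; field_simp
  rw [e, ← Measure.map_map (by fun_prop) hm, h, gaussianReal_map_const_mul]
  congr 1
  · simp
  · ext; simp [Real.toNNReal_of_nonneg, sub_nonneg.2 hst, mul_nonneg]

lemma norm_projS_le {ν : Eu m} (hν : ‖ν‖ = 1) (x : Eu m) : ‖projS ν x‖ ≤ ‖x‖ := by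
  refine le_of_sq_le_sq ?_ (norm_nonneg _)
  have : ‖projS ν x‖ ^ 2 = ‖x‖ ^ 2 - ⟪x, ν⟫ ^ 2 := by
    unfold projS
    rw [norm_sub_sq_real, norm_smul, inner_smul_right, hν]
    simp only [Real.norm_eq_abs, mul_one, sq_abs]; ring
  rw [this]; nlinarith [sq_nonneg ⟪x, ν⟫]

lemma enorm_sq_eq_sum (x : Eu m) : ‖x‖ₑ ^ 2 = ∑ i, ‖x i‖ₑ ^ 2 := by
  have h := EuclideanSpace.norm_sq_eq x
  have e : ∀ {F : Type} [NormedAddCommGroup F] (y : F), ‖y‖ₑ ^ 2 = ENNReal.ofReal (‖y‖ ^ 2) := by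
    intro F _ y
    rw [← ofReal_norm, ENNReal.ofReal_pow (norm_nonneg _)]
  rw [e, h, ENNReal.ofReal_sum_of_nonneg (fun _ _ => by positivity)]
  exact Finset.sum_congr rfl fun i _ => (e _).symm

/-- A sequence of variables, each independent of a σ-algebra containing its predecessors, is
independent. -/
lemma iIndepFun_of_past [IsProbabilityMeasure P] {E : Type} [MeasurableSpace E] {f : ℕ → Ω → E}
    {F : ℕ → MeasurableSpace Ω} (hf : ∀ i j, i < j → Measurable[F j] (f i))
    (hind : ∀ j, Indep (MeasurableSpace.comap (f j) inferInstance) (F j) P) : iIndepFun f P := by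
  rw [iIndepFun_iff_measure_inter_preimage_eq_mul]
  intro S
  induction S using Finset.induction_on_max with
  | empty => intro sets _; simp
  | insert n S hS ih =>
    intro sets hsets
    have hn : n ∉ S := fun h => lt_irrefl _ (hS n h)
    rw [Finset.set_biInter_insert, Finset.prod_insert hn,
      ← ih (fun i hi => hsets i (Finset.mem_insert_of_mem hi))]
    refine (Indep_iff _ _ _).1 (hind n) _ _ ⟨_, hsets n (Finset.mem_insert_self _ _), rfl⟩ ?_
    exact Finset.measurableSet_biInter _ fun i hi =>
      hf i n (hS i hi) (hsets i (Finset.mem_insert_of_mem hi))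

/-- A Wiener process is Gaussian, so that uncorrelated components of it are independent. -/
lemma IsWiener.isGaussianProcess [IsProbabilityMeasure P] {w : ℝ → Ω → Eu m} (hw : IsWiener P w) :
    IsGaussianProcess (fun (t : NNReal) ω => w t ω) P := by
  refine HasIndepIncrements.isGaussianProcess (fun t => ?_) ?_ ?_
  · constructor
    refine isGaussian_of_map_eq_gaussianReal fun L => ?_
    refine ⟨0, (‖(InnerProductSpace.toDual ℝ (Eu m)).symm L‖ ^ 2 * ((t : ℝ) - 0)).toNNReal, ?_⟩
    · rw [Measure.map_map (by fun_prop) (hw.meas _)]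
      have h := hw.law_inner le_rfl t.2 ((InnerProductSpace.toDual ℝ (Eu m)).symm L)
      refine Eq.trans (Measure.map_congr ?_) h
      filter_upwards [hw.start] with ω hω
      simp only [Function.comp, hω, sub_zero]
      rw [real_inner_comm, InnerProductSpace.toDual_symm_apply]
      rfl
  · simpa using hw.start
  · rw [hasIndepIncrements_iff_nat]
    intro t ht
    refine iIndepFun_of_past (F := fun j => natFilt w (t j)) (fun i j hij => ?_) fun j => ?_
    · exact (measurable_natFilt w (t (i+1)).2 (by exact_mod_cast ht hij)).sub
        (measurable_natFilt w (t i).2 (by exact_mod_cast ht hij.le))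
    · exact indep_natFilt_of_indepFun (hw.incr_indep _ _ (t j).2 (by exact_mod_cast ht j.le_succ))

lemma IsWiener.memLp_inner [IsProbabilityMeasure P] {w : ℝ → Ω → Eu m} (hw : IsWiener P w)
    {s t : ℝ} (hs : 0 ≤ s) (hst : s ≤ t) (x : Eu m) :
    MemLp (fun ω => ⟪w t ω - w s ω, x⟫) 2 P :=
  (moments_of_map_gaussian ((hw.meas t).sub (hw.meas s)).inner_const
    (hw.law_inner hs hst x)).1

/-- Components along orthogonal directions are uncorrelated, at any two times. -/
lemma IsWiener.covariance_eq_zero [IsProbabilityMeasure P] {w : ℝ → Ω → Eu m} (hw : IsWiener P w)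
    {s t : ℝ} (hs : 0 ≤ s) (hst : s ≤ t) {x y : Eu m} (hxy : ⟪x, y⟫ = 0) :
    cov[fun ω => ⟪w s ω - w 0 ω, x⟫, fun ω => ⟪w t ω - w 0 ω, y⟫; P] = 0 := by
  have hx := hw.memLp_inner le_rfl hs x
  have hy := hw.memLp_inner le_rfl hs y
  have hD := hw.memLp_inner hs hst y
  have e : (fun ω => ⟪w t ω - w 0 ω, y⟫)
      = (fun ω => ⟪w s ω - w 0 ω, y⟫) + fun ω => ⟪w t ω - w s ω, y⟫ := by
    ext ω; simp only [Pi.add_apply, ← inner_add_left]; congr 1; abel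
  rw [e, covariance_add_right hx hy hD]
  have h1 : cov[fun ω => ⟪w s ω - w 0 ω, x⟫, fun ω => ⟪w s ω - w 0 ω, y⟫; P] = 0 := by
    have hv : ∀ z : Eu m, Var[fun ω => ⟪w s ω - w 0 ω, z⟫; P] = ‖z‖ ^ 2 * s := by
      intro z
      obtain ⟨h2, h3, h4⟩ := moments_of_map_gaussian (f := fun ω => ⟪w s ω - w 0 ω, z⟫)
        ((hw.meas s).sub (hw.meas 0)).inner_const (hw.law_inner le_rfl hs z)
      rw [variance_of_integral_eq_zero h2.aemeasurable h3, h4, Real.coe_toNNReal _ (by positivity),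
        sub_zero]
    have e2 : (fun ω => ⟪w s ω - w 0 ω, x + y⟫)
      = (fun ω => ⟪w s ω - w 0 ω, x⟫) + fun ω => ⟪w s ω - w 0 ω, y⟫ := by
      ext ω; simp [inner_add_right]
    have h5 := hv (x + y)
    rw [e2, variance_add hx hy, hv, hv, norm_add_sq_real, hxy] at h5
    linarith
  have h2 : IndepFun (fun ω => ⟪w s ω - w 0 ω, x⟫) (fun ω => ⟪w t ω - w s ω, y⟫) P := by
    rw [IndepFun_iff_Indep]
    have h := (indep_natFilt_of_indepFun (hw.incr_indep s t hs hst)).symm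
    refine indep_of_indep_of_le_right (indep_of_indep_of_le_left h ?_) ?_
    · refine Measurable.comap_le ?_
      exact ((measurable_natFilt w hs le_rfl).sub (measurable_natFilt w le_rfl hs)).inner_const
    · have e : (fun ω => ⟪w t ω - w s ω, y⟫)
          = (fun x : Eu m => ⟪x, y⟫) ∘ (fun ω => w t ω - w s ω) := rfl
      rw [e, ← MeasurableSpace.comap_comp]
      exact MeasurableSpace.comap_mono (by fun_prop : Measurable fun x : Eu m => ⟪x, y⟫).comap_le
  rw [h1, h2.covariance_eq_zero hx hD, add_zero]

/-- The component along `ν` is independent of the component orthogonal to `ν`, as processes. -/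
lemma IsWiener.indep_proj [IsProbabilityMeasure P] {w : ℝ → Ω → Eu m} (hw : IsWiener P w)
    {ν : Eu m} (hν : ‖ν‖ = 1) {s u : ℝ} (hu : 0 ≤ u) :
    Indep (natFilt (fun t ω => ⟪w t ω, ν⟫) s)
      (MeasurableSpace.comap (fun ω => projS ν (w u ω - w 0 ω)) inferInstance) P := by
  lift u to NNReal using hu
  let L : Eu m →L[ℝ] Eu m := (innerSL ℝ ν).smulRight ν
  have hL : ∀ x, L x = ⟪x, ν⟫ • ν := fun x => by simp [L, real_inner_comm]
  let Q : Eu m →L[ℝ] Eu m := ContinuousLinearMap.id ℝ _ - L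
  have hQ : ∀ x, Q x = projS ν x := fun x => by simp [Q, hL, projS]
  set X : NNReal → Ω → Eu m := fun t ω => L (w t ω) with hX
  set Y : Unit → Ω → Eu m := fun _ ω => Q (w u ω - w 0 ω) with hY
  have hmX : ∀ t, Measurable (X t) := fun t => L.measurable.comp (hw.meas t)
  have hmY : ∀ t, Measurable (Y t) := fun t => Q.measurable.comp ((hw.meas u).sub (hw.meas 0))
  have hG : IsGaussianProcess (Sum.elim X Y) P := by
    refine hw.isGaussianProcess.of_isGaussianProcess fun i => ?_
    rcases i with t | i
    · refine ⟨{t}, L.comp (ContinuousLinearMap.proj ⟨t, by simp⟩), fun ω => rfl⟩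
    · refine ⟨{0, u}, Q.comp (ContinuousLinearMap.proj ⟨u, by simp⟩ -
        ContinuousLinearMap.proj ⟨0, by simp⟩), fun ω => rfl⟩
  have hI := hG.indepFun_of_covariance_inner (fun t => (hmX t).aemeasurable)
    (fun t => (hmY t).aemeasurable) (by
      intro t i x y
      have hxe : (fun ω => ⟪x, X t ω⟫) =ᵐ[P] fun ω => ⟪w t ω - w 0 ω, ⟪x, ν⟫ • ν⟫ := by
        filter_upwards [hw.start] with ω hω
        simp only [hX, hL, hω, sub_zero, inner_smul_right]
        ring
      have hye : (fun ω => ⟪y, Y i ω⟫) =ᵐ[P] fun ω => ⟪w u ω - w 0 ω, projS ν y⟫ := by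
        refine Eventually.of_forall fun ω => ?_
        simp only [hY, hQ, projS]
        generalize w u ω - w 0 ω = D
        rw [inner_sub_right, inner_sub_right, inner_smul_right, inner_smul_right,
          real_inner_comm y D]
        ring
      have horth : ⟪⟪x, ν⟫ • ν, projS ν y⟫ = 0 := by
        simp only [projS, inner_smul_left, inner_sub_right, inner_smul_right,
          real_inner_self_eq_norm_sq, hν]
        rw [real_inner_comm y ν]
        simp
        ring
      have hcov : cov[fun ω => ⟪x, X t ω⟫, fun ω => ⟪y, Y i ω⟫; P]
          = cov[fun ω => ⟪w t ω - w 0 ω, ⟪x, ν⟫ • ν⟫, fun ω => ⟪w u ω - w 0 ω, projS ν y⟫; P] := by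
        unfold covariance
        rw [integral_congr_ae hxe, integral_congr_ae hye]
        refine integral_congr_ae ?_
        filter_upwards [hxe, hye] with ω h1 h2
        rw [h1, h2]
      rw [hcov]
      rcases le_total (t : ℝ) u with h | h
      · exact hw.covariance_eq_zero t.2 h horth
      · rw [covariance_comm]
        exact hw.covariance_eq_zero u.2 h (by rw [real_inner_comm, horth]))
  rw [IndepFun_iff_Indep] at hI
  refine indep_of_indep_of_le_right (indep_of_indep_of_le_left hI ?_) ?_
  · refine iSup₂_le fun r hr => Measurable.comap_le ?_
    have e : (fun ω => ⟪w r ω, ν⟫) = (fun f : NNReal → Eu m => ⟪f ⟨r, hr.1⟩, ν⟫) ∘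
        (fun ω s => X s ω) := by
      ext ω
      simp [hX, hL, inner_smul_left, hν]
      rfl
    have hf : Measurable fun f : NNReal → Eu m => ⟪f ⟨r, hr.1⟩, ν⟫ := by fun_prop
    intro B hB
    exact ⟨_, hf hB, (congrArg (fun g => g ⁻¹' B) e).symm⟩
  · refine Measurable.comap_le ?_
    have e : (fun ω => projS ν (w u ω - w 0 ω)) = (fun f : Unit → Eu m => f ()) ∘
        (fun ω s => Y s ω) := by
      ext1 ω
      simp [hY, hQ]
    rw [e]
    have hf : Measurable fun f : Unit → Eu m => f () := by fun_prop
    exact fun B hB => ⟨_, hf hB, rfl⟩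

/-- Conditionally on the component along `ν`, the orthogonal displacement up to time `u` is of
order `√u` in mean square. -/
lemma IsWiener.lintegral_mul_proj_sq_le [IsProbabilityMeasure P] {w : ℝ → Ω → Eu m}
    (hw : IsWiener P w) {ν : Eu m} (hν : ‖ν‖ = 1) {s u : ℝ} (hu : 0 ≤ u) {G : Ω → ENNReal}
    (hG : Measurable[natFilt (fun t ω => ⟪w t ω, ν⟫) s] G) :
    ∫⁻ ω, G ω * ‖projS ν (w u ω - w 0 ω)‖ₑ ^ 2 ∂P
      ≤ ENNReal.ofReal (m * u) * ∫⁻ ω, G ω ∂P := by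
  have hpm : Measurable (fun ω => projS ν (w u ω - w 0 ω)) := by
    have := (hw.meas u).sub (hw.meas 0)
    unfold projS
    exact this.sub (this.inner_const.smul_const _)
  have hle : natFilt (fun t ω => ⟪w t ω, ν⟫) s ≤ ‹MeasurableSpace Ω› :=
    natFilt_le (fun t => (hw.meas t).inner_const) s
  have h2m : Measurable[MeasurableSpace.comap (fun ω => projS ν (w u ω - w 0 ω)) inferInstance]
      (fun ω => ‖projS ν (w u ω - w 0 ω)‖ₑ ^ 2) :=
    (by fun_prop : Measurable fun x : Eu m => ‖x‖ₑ ^ 2).comp (comap_measurable _)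
  rw [lintegral_mul_eq_lintegral_mul_lintegral_of_independent_measurableSpace hle hpm.comap_le
    (hw.indep_proj hν hu) hG h2m, mul_comm]
  gcongr
  have h1 : ∀ i, ∫⁻ ω, ‖(w u ω - w 0 ω) i‖ₑ ^ 2 ∂P ≤ ENNReal.ofReal u := by
    intro i
    have h := moments_of_map_gaussian
      (f := fun ω => ⟪w u ω - w 0 ω, EuclideanSpace.single i (1:ℝ)⟫)
      ((hw.meas u).sub (hw.meas 0)).inner_const
      (hw.law_inner le_rfl hu (EuclideanSpace.single i 1))
    have e : ∀ ω, ‖(w u ω - w 0 ω) i‖ₑ ^ 2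
        = ENNReal.ofReal (⟪w u ω - w 0 ω, EuclideanSpace.single i (1:ℝ)⟫ ^ 2) := by
      intro ω
      rw [EuclideanSpace.inner_single_right, ← ofReal_norm,
        ← ENNReal.ofReal_pow (norm_nonneg _)]
      simp
    simp_rw [e]
    rw [← ofReal_integral_eq_lintegral_ofReal h.1.integrable_sq
      (Eventually.of_forall fun _ => sq_nonneg _), h.2.2]
    refine ENNReal.ofReal_le_ofReal ?_
    simp [hu]
  calc ∫⁻ ω, ‖projS ν (w u ω - w 0 ω)‖ₑ ^ 2 ∂P
      ≤ ∫⁻ ω, ∑ i, ‖(w u ω - w 0 ω) i‖ₑ ^ 2 ∂P := by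
        refine lintegral_mono fun ω => ?_
        rw [← enorm_sq_eq_sum]
        gcongr
        exact enorm_le_iff_norm_le.2 (norm_projS_le hν _)
    _ = ∑ i, ∫⁻ ω, ‖(w u ω - w 0 ω) i‖ₑ ^ 2 ∂P := by
        refine lintegral_finsetSum _ fun i _ => ?_
        have h3 : Measurable fun x : Eu m => ‖x i‖ₑ ^ 2 :=
          ((by fun_prop : Continuous fun x : Eu m => x i).measurable.enorm).pow_const 2
        exact h3.comp ((hw.meas u).sub (hw.meas 0))
    _ ≤ ∑ _i : Fin m, ENNReal.ofReal u := Finset.sum_le_sum fun i _ => h1 i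
    _ = ENNReal.ofReal (m * u) := by
        rw [Finset.sum_const, Finset.card_univ, Fintype.card_fin, nsmul_eq_mul,
          ENNReal.ofReal_mul (by positivity), ENNReal.ofReal_natCast]

/-! ### Martingale transforms of `w̃` at random times -/

/-- A sequence of σ-algebras, each independent of one containing its predecessors, is independent. -/
lemma iIndep_of_past [IsProbabilityMeasure P] {f F : ℕ → MeasurableSpace Ω}
    (hf : ∀ i j, i < j → f i ≤ F j) (hind : ∀ j, Indep (f j) (F j) P) : iIndep f P := by
  rw [iIndep_iff]
  intro S
  induction S using Finset.induction_on_max with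
  | empty => intro sets _; simp
  | insert n S hS ih =>
    intro sets hsets
    have hn : n ∉ S := fun h => lt_irrefl _ (hS n h)
    rw [Finset.set_biInter_insert, Finset.prod_insert hn,
      ← ih (fun i hi => hsets i (Finset.mem_insert_of_mem hi))]
    refine (Indep_iff _ _ _).1 (hind n) _ _ (hsets n (Finset.mem_insert_self _ _)) ?_
    exact Finset.measurableSet_biInter _ fun i hi =>
      hf i n (hS i hi) _ (hsets i (Finset.mem_insert_of_mem hi))

/-- If `mD` is independent of `mN`, and `mW` of both together, then `mD` is independent of `mW` and
`mN` together. -/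
lemma indep_sup_of_indep {Ω : Type} {mD mN mW m0 : MeasurableSpace Ω} {P : Measure Ω}
    [IsProbabilityMeasure P] (hD : mD ≤ m0) (hN : mN ≤ m0) (hW : mW ≤ m0)
    (h1 : Indep mD mN P) (h2 : Indep mW (mD ⊔ mN) P) :
    Indep mD (mW ⊔ mN) P := by
  let f : ℕ → MeasurableSpace Ω := fun
    | 0 => mD
    | 1 => mN
    | 2 => mW
    | _ => ⊥
  let F : ℕ → MeasurableSpace Ω := fun
    | 0 => ⊥
    | 1 => mD
    | 2 => mD ⊔ mN
    | _ => m0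
  have hf : iIndep f P := by
    refine iIndep_of_past (F := F) (fun i j hij => ?_) fun j => ?_
    · match i, j, hij with
      | 0, 1, _ => exact le_rfl
      | 0, 2, _ => exact le_sup_left
      | 1, 2, _ => exact le_sup_right
      | 0, (_ + 3), _ => exact hD
      | 1, (_ + 3), _ => exact hN
      | 2, (_ + 3), _ => exact hW
      | (_ + 3), (_ + 3), _ => exact bot_le
    · match j with
      | 0 => exact indep_bot_right _
      | 1 => exact h1.symm
      | 2 => exact h2
      | (_ + 3) => exact indep_bot_left _
  have h := indep_iSup_of_disjoint (S := {0}) (T := {1, 2}) (fun n => ?_) hf (by simp)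
  · refine indep_of_indep_of_le_right (indep_of_indep_of_le_left h ?_) ?_
    · exact le_iSup₂_of_le 0 rfl le_rfl
    · exact sup_le (le_iSup₂_of_le 2 (by simp) le_rfl) (le_iSup₂_of_le 1 (by simp) le_rfl)
  · match n with
    | 0 => exact hD
    | 1 => exact hN
    | 2 => exact hW
    | (_ + 3) => exact bot_le

/-- The σ-algebra generated by the whole path of `w`, and by `w̃` up to time `a`. -/
abbrev pathFilt {E F : Type} [MeasurableSpace E] [MeasurableSpace F]
    (w : ℝ → Ω → E) (wt : ℝ → Ω → F) (a : ℝ) : MeasurableSpace Ω :=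
  MeasurableSpace.comap (fun ω t => w t ω) inferInstance ⊔ natFilt wt a

/-- The σ-algebra generated by the whole path of `w`. -/
abbrev pathSig {E : Type} [MeasurableSpace E] (w : ℝ → Ω → E) : MeasurableSpace Ω :=
  MeasurableSpace.comap (fun ω t => w t ω) inferInstance

lemma natFilt_le_pathSig {E : Type} [MeasurableSpace E] (w : ℝ → Ω → E) (t : ℝ) :
    natFilt w t ≤ pathSig w := by
  refine iSup₂_le fun u _ => Measurable.comap_le ?_
  exact fun B hB => ⟨_, measurable_pi_apply u hB, rfl⟩

lemma pathSig_le {E : Type} [MeasurableSpace E] {w : ℝ → Ω → E} (hw : ∀ t, Measurable (w t)) :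
    pathSig w ≤ ‹MeasurableSpace Ω› := (measurable_pi_lambda _ hw).comap_le

lemma pathFilt_le {E F : Type} [MeasurableSpace E] [MeasurableSpace F] {w : ℝ → Ω → E}
    {wt : ℝ → Ω → F} (hw : ∀ t, Measurable (w t)) (hwt : ∀ t, Measurable (wt t)) (a : ℝ) :
    pathFilt w wt a ≤ ‹MeasurableSpace Ω› := sup_le (pathSig_le hw) (natFilt_le hwt a)

lemma pathFilt_mono {E F : Type} [MeasurableSpace E] [MeasurableSpace F] (w : ℝ → Ω → E)
    (wt : ℝ → Ω → F) {a b : ℝ} (h : a ≤ b) : pathFilt w wt a ≤ pathFilt w wt b :=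
  sup_le_sup le_rfl (natFilt_mono wt h)

/-- Increments of `w̃` are independent of its past together with the whole path of `w`. -/
lemma indep_pathFilt [IsProbabilityMeasure P] {ν : Eu m} {w wt : ℝ → Ω → Eu m}
    (hw : ∀ t, Measurable (w t)) (hwt : IsWienerIn P ν wt) (hind : IndepProc P w wt) {a b : ℝ}
    (ha : 0 ≤ a) (hab : a ≤ b) :
    Indep (MeasurableSpace.comap (fun ω => wt b ω - wt a ω) inferInstance) (pathFilt w wt a) P := by
  have hD : Measurable (fun ω => wt b ω - wt a ω) := (hwt.meas b).sub (hwt.meas a)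
  refine indep_sup_of_indep hD.comap_le (natFilt_le hwt.meas a) (pathSig_le hw)
    (indep_natFilt_of_indepFun (hwt.incr_indep a b ha hab)) ?_
  refine indep_of_indep_of_le_right ((IndepFun_iff_Indep ..).1 hind)
    (sup_le ?_ (natFilt_le_pathSig wt a))
  refine Measurable.comap_le ?_
  have hf : Measurable fun f : ℝ → Eu m => f b - f a := by fun_prop
  exact fun B hB => ⟨_, hf hB, rfl⟩

lemma indepFun_of_indep {Ω E F : Type} [MeasurableSpace E] [MeasurableSpace F]
    {G m0 : MeasurableSpace Ω} {P : Measure Ω} {D : Ω → E} {f : Ω → F}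
    (h : Indep (MeasurableSpace.comap D inferInstance) G P) (hf : Measurable[G] f) :
    IndepFun f D P :=
  (IndepFun_iff_Indep ..).2 (indep_of_indep_of_le_right h hf.comap_le).symm

/-- A centred increment `D` is orthogonal in `L²` to whatever is known independently of it. -/
lemma integral_inner_eq_zero_of_indep {Ω : Type} {G m0 : MeasurableSpace Ω} {P : Measure Ω}
    [IsProbabilityMeasure P] {D v : Ω → Eu m} (h : Indep (MeasurableSpace.comap D inferInstance) G P)
    (hD : Integrable D P) (hD0 : ∀ y, ∫ ω, ⟪D ω, y⟫ ∂P = 0)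
    (hv : Measurable[G] v) (hvi : Integrable v P) :
    ∫ ω, ⟪v ω, D ω⟫ ∂P = 0 := by
  have hI := indepFun_of_indep h hv
  have hc : ∀ i, Measurable fun x : Eu m => x i := fun i =>
    (by fun_prop : Continuous fun x : Eu m => x i).measurable
  have hIi : ∀ i, IndepFun (fun ω => v ω i) (fun ω => D ω i) P := fun i =>
    hI.comp (hc i) (hc i)
  have hvi' : ∀ i, Integrable (fun ω => v ω i) P := fun i => by
    have := hvi.inner_const (𝕜 := ℝ) (EuclideanSpace.single i (1:ℝ))
    simpa [EuclideanSpace.inner_single_right] using this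
  have hDi' : ∀ i, Integrable (fun ω => D ω i) P := fun i => by
    have := hD.inner_const (𝕜 := ℝ) (EuclideanSpace.single i (1:ℝ))
    simpa [EuclideanSpace.inner_single_right] using this
  have e : ∀ ω, ⟪v ω, D ω⟫ = ∑ i, v ω i * D ω i := fun ω => by
    rw [PiLp.inner_apply]
    exact Finset.sum_congr rfl fun i _ => by simp [mul_comm]
  simp_rw [e]
  rw [integral_finsetSum _ (by exact fun i _ => (hIi i).integrable_mul (hvi' i) (hDi' i))]
  refine Finset.sum_eq_zero fun i _ => ?_
  rw [(hIi i).integral_fun_mul_eq_mul_integral (hvi' i).aestronglyMeasurable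
    (hDi' i).aestronglyMeasurable]
  have := hD0 (EuclideanSpace.single i (1:ℝ))
  simp only [EuclideanSpace.inner_single_right] at this
  simp at this
  rw [this, mul_zero]

/-- The Itô isometry bound for a discrete martingale transform, weighted by a function `g` known
at the initial time. -/
lemma transform_bound [IsProbabilityMeasure P] {G : ℕ → MeasurableSpace Ω}
    (hG : ∀ j, G j ≤ ‹MeasurableSpace Ω›) (hGm : Monotone G) {D b : ℕ → Ω → Eu m}
    (hDm : ∀ j, Measurable[G (j+1)] (D j))
    (hDi : ∀ j, Indep (MeasurableSpace.comap (D j) inferInstance) (G j) P)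
    (hD2 : ∀ j, MemLp (D j) 2 P) (hD0 : ∀ j y, ∫ ω, ⟪D j ω, y⟫ ∂P = 0) {δ : ℝ}
    (hDδ : ∀ j, ∫ ω, ‖D j ω‖ ^ 2 ∂P ≤ δ) (hb : ∀ j, Measurable[G j] (b j)) {R : ℝ}
    (hR : ∀ j ω, ‖b j ω‖ ≤ R) {g : Ω → ℝ} (hg : Measurable[G 0] g) (hg0 : ∀ ω, 0 ≤ g ω) {C : ℝ}
    (hgC : ∀ ω, g ω ≤ C) (J : ℕ) :
    MemLp (fun ω => ∑ j ∈ Finset.range J, ⟪b j ω, D j ω⟫) 2 P ∧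
    ∫ ω, (∑ j ∈ Finset.range J, ⟪b j ω, D j ω⟫) ∂P = 0 ∧
    ∫ ω, g ω * (∑ j ∈ Finset.range J, ⟪b j ω, D j ω⟫) ^ 2 ∂P
      ≤ δ * ∑ j ∈ Finset.range J, ∫ ω, g ω * ‖b j ω‖ ^ 2 ∂P := by
  have hbm : ∀ j, Measurable (b j) := fun j => (hb j).mono (hG j) le_rfl
  have hDm' : ∀ j, Measurable (D j) := fun j => (hDm j).mono (hG _) le_rfl
  have hgm : Measurable g := hg.mono (hG 0) le_rfl
  have hZ : ∀ j, MemLp (fun ω => ⟪b j ω, D j ω⟫) 2 P := fun j => by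
    refine MemLp.of_le_mul (c := R) (hD2 j) ((hbm j).inner (hDm' j)).aestronglyMeasurable
      (Eventually.of_forall fun ω => ?_)
    exact (norm_inner_le_norm _ _).trans (mul_le_mul_of_nonneg_right (hR j ω) (norm_nonneg _))
  have hgC' : ∀ ω, ‖g ω‖ ≤ C := fun ω => by rw [Real.norm_of_nonneg (hg0 ω)]; exact hgC ω
  have hgi : ∀ {f : Ω → ℝ}, Integrable f P → Integrable (fun ω => g ω * f ω) P := fun hf =>
    hf.bdd_mul hgm.aestronglyMeasurable (Eventually.of_forall hgC')
  induction J with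
  | zero => simp
  | succ J ih =>
    obtain ⟨h1, h2, h3⟩ := ih
    simp only [Finset.sum_range_succ]
    set S : Ω → ℝ := fun ω => ∑ j ∈ Finset.range J, ⟪b j ω, D j ω⟫ with hS
    have hSm : Measurable[G J] S := by
      refine Finset.measurable_fun_sum _ fun j hj => ?_
      have hj' := Finset.mem_range.1 hj
      exact ((hb j).mono (hGm hj'.le) le_rfl).inner ((hDm j).mono (hGm hj') le_rfl)
    have hbi : Integrable (b J) P := Integrable.of_bound (hbm J).aestronglyMeasurable R
      (Eventually.of_forall (hR J))
    have hDint : Integrable (D J) P := (hD2 J).integrable (by norm_num)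
    refine ⟨h1.add (hZ J), ?_, ?_⟩
    · rw [integral_add (h1.integrable (by norm_num)) ((hZ J).integrable (by norm_num)), h2,
        integral_inner_eq_zero_of_indep (hDi J) hDint (hD0 J) (hb J) hbi, add_zero]
    · have hcross : ∫ ω, g ω * (S ω * ⟪b J ω, D J ω⟫) ∂P = 0 := by
        have e : ∀ ω, g ω * (S ω * ⟪b J ω, D J ω⟫) = ⟪(g ω * S ω) • b J ω, D J ω⟫ := fun ω => by
          rw [real_inner_smul_left]; ring
        simp_rw [e]
        refine integral_inner_eq_zero_of_indep (hDi J) hDint (hD0 J)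
          (((hg.mono (hGm J.zero_le) le_rfl).mul hSm).smul (hb J)) ?_
        exact (hgi (h1.integrable (by norm_num))).smul_bdd R (hbm J).aestronglyMeasurable
          (Eventually.of_forall (hR J))
      have hsq : ∫ ω, g ω * ⟪b J ω, D J ω⟫ ^ 2 ∂P ≤ δ * ∫ ω, g ω * ‖b J ω‖ ^ 2 ∂P := by
        have hn2 : Measurable fun x : Eu m => ‖x‖ ^ 2 := by fun_prop
        have hb2 : Measurable[G J] (fun ω => g ω * ‖b J ω‖ ^ 2) :=
          (hg.mono (hGm J.zero_le) le_rfl).mul (hn2.comp (hb J))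
        have hI : IndepFun (fun ω => g ω * ‖b J ω‖ ^ 2) (fun ω => ‖D J ω‖ ^ 2) P :=
          (indepFun_of_indep (hDi J) hb2).comp measurable_id hn2
        have hb2i : Integrable (fun ω => g ω * ‖b J ω‖ ^ 2) P := by
          refine hgi (Integrable.of_bound ((hbm J).norm.pow_const 2).aestronglyMeasurable (R ^ 2)
            (Eventually.of_forall fun ω => ?_))
          rw [Real.norm_of_nonneg (by positivity)]
          exact pow_le_pow_left₀ (norm_nonneg _) (hR J ω) 2
        have hD2i : Integrable (fun ω => ‖D J ω‖ ^ 2) P := (hD2 J).integrable_norm_pow (by norm_num)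
        calc ∫ ω, g ω * ⟪b J ω, D J ω⟫ ^ 2 ∂P
            ≤ ∫ ω, (g ω * ‖b J ω‖ ^ 2) * ‖D J ω‖ ^ 2 ∂P := by
              refine integral_mono (hgi (hZ J).integrable_sq) (hI.integrable_mul hb2i hD2i)
                fun ω => ?_
              simp only
              rw [mul_assoc, ← mul_pow, ← sq_abs]
              exact mul_le_mul_of_nonneg_left (pow_le_pow_left₀ (abs_nonneg _)
                (abs_real_inner_le_norm _ _) 2) (hg0 ω)
          _ = (∫ ω, g ω * ‖b J ω‖ ^ 2 ∂P) * ∫ ω, ‖D J ω‖ ^ 2 ∂P :=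
              hI.integral_fun_mul_eq_mul_integral hb2i.aestronglyMeasurable
                hD2i.aestronglyMeasurable
          _ ≤ (∫ ω, g ω * ‖b J ω‖ ^ 2 ∂P) * δ := by
              refine mul_le_mul_of_nonneg_left (hDδ J) (integral_nonneg fun ω => ?_)
              exact mul_nonneg (hg0 ω) (by positivity)
          _ = _ := mul_comm _ _
      have e : ∀ ω, g ω * (S ω + ⟪b J ω, D J ω⟫) ^ 2 = g ω * S ω ^ 2
          + 2 * (g ω * (S ω * ⟪b J ω, D J ω⟫)) + g ω * ⟪b J ω, D J ω⟫ ^ 2 := fun ω => by ring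
      have i1 := hgi h1.integrable_sq
      have i2 : Integrable (fun ω => 2 * (g ω * (S ω * ⟪b J ω, D J ω⟫))) P :=
        (hgi (h1.integrable_mul (hZ J))).const_mul 2
      have i3 := hgi (hZ J).integrable_sq
      change ∫ ω, g ω * (S ω + ⟪b J ω, D J ω⟫) ^ 2 ∂P ≤ _
      simp_rw [e]
      rw [integral_add (by exact i1.add i2) i3, integral_add i1 i2, integral_const_mul, hcross, mul_add]
      linarith

lemma IsWienerIn.moments [IsProbabilityMeasure P] {ν : Eu m} (hν : ‖ν‖ = 1) {wt : ℝ → Ω → Eu m}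
    (hwt : IsWienerIn P ν wt) {a b : ℝ} (ha : 0 ≤ a) (hab : a ≤ b) :
    MemLp (fun ω => wt b ω - wt a ω) 2 P ∧ (∀ y, ∫ ω, ⟪wt b ω - wt a ω, y⟫ ∂P = 0) ∧
      ∫ ω, ‖wt b ω - wt a ω‖ ^ 2 ∂P ≤ m * (b - a) := by
  have hD : Measurable fun ω => wt b ω - wt a ω := (hwt.meas b).sub (hwt.meas a)
  have hm := fun y => moments_of_map_gaussian (f := fun ω => ⟪wt b ω - wt a ω, y⟫) hD.inner_const
    (hwt.law_inner hν ha hab y)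
  have hc : ∀ i, MemLp (fun ω => (wt b ω - wt a ω) i) 2 P := fun i => by
    have := (hm (EuclideanSpace.single i (1:ℝ))).1
    simpa [EuclideanSpace.inner_single_right] using this
  have hsq : ∀ ω, ‖wt b ω - wt a ω‖ ^ 2 = ∑ i, ((wt b ω - wt a ω) i) ^ 2 := fun ω => by
    rw [EuclideanSpace.norm_sq_eq]; simp
  refine ⟨?_, fun y => (hm y).2.1, ?_⟩
  · refine (memLp_two_iff_integrable_sq_norm hD.aestronglyMeasurable).2 ?_
    simp_rw [hsq]
    exact integrable_finsetSum _ fun i _ => (hc i).integrable_sq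
  · simp_rw [hsq]
    rw [integral_finsetSum _ fun i _ => (hc i).integrable_sq]
    have : ∀ i, ∫ ω, ((wt b ω - wt a ω) i) ^ 2 ∂P ≤ b - a := fun i => by
      have h := (hm (EuclideanSpace.single i (1:ℝ))).2.2
      simp only [EuclideanSpace.inner_single_right] at h
      simp only [one_mul, conj_trivial] at h
      rw [h, Real.coe_toNNReal _ (by have := sub_nonneg.2 hab; positivity)]
      have h1 : ‖projS ν (EuclideanSpace.single i (1:ℝ) : Eu m)‖ ≤ 1 := by
        simpa using norm_projS_le hν (EuclideanSpace.single i (1:ℝ) : Eu m)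
      have := mul_le_mul_of_nonneg_right (pow_le_one₀ (n := 2) (norm_nonneg _) h1)
        (sub_nonneg.2 hab)
      linarith
    calc _ ≤ ∑ _i : Fin m, (b - a) := Finset.sum_le_sum fun i _ => this i
      _ = _ := by simp [mul_sub]

/-- The intervals `[H k, H (k+1))` are disjoint, so at most one of them contains `x`. -/
lemma sum_indicator_le {H : ℕ → ℝ} (hH : Monotone H) (x : ℝ) (n : ℕ) :
    ∑ k ∈ Finset.range n, (if H k ≤ x ∧ x < H (k+1) then (1:ℝ) else 0)
      ≤ if x < H n then 1 else 0 := by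
  induction n with
  | zero => simp; split_ifs <;> norm_num
  | succ n ih =>
    rw [Finset.sum_range_succ]
    have := hH n.le_succ
    by_cases h1 : x < H n
    · have h2 : ¬ (H n ≤ x ∧ x < H (n+1)) := fun h => absurd h.1 (not_le.2 h1)
      rw [if_pos h1] at ih
      rw [if_neg h2, if_pos (lt_of_lt_of_le h1 this)]
      linarith
    · rw [if_neg h1] at ih
      by_cases h3 : x < H (n+1)
      · rw [if_pos h3, if_pos ⟨not_lt.1 h1, h3⟩]; linarith
      · rw [if_neg h3, if_neg fun h => h3 h.2]; linarith

/-- At most `M H + 1` of the points `j / M` lie below `H`. -/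
lemma sum_grid_le {H M : ℝ} (hH : 0 ≤ H) (hM : 0 < M) (J : ℕ) :
    ∑ j ∈ Finset.range J, (if (j:ℝ) / M < H then (1:ℝ) else 0) ≤ M * H + 1 := by
  rw [Finset.sum_ite, Finset.sum_const_zero, add_zero, Finset.sum_const, nsmul_eq_mul, mul_one]
  have : (Finset.range J).filter (fun j : ℕ => (j:ℝ) / M < H) ⊆ Finset.range ⌈M * H⌉₊ := by
    intro j hj
    have h := (Finset.mem_filter.1 hj).2
    rw [div_lt_iff₀ hM] at h
    exact Finset.mem_range.2 (Nat.lt_ceil.2 (by linarith))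
  have h2 := Finset.card_le_card this
  rw [Finset.card_range] at h2
  have h3 : ((Finset.range J).filter (fun j : ℕ => (j:ℝ) / M < H)).card ≤ (⌈M * H⌉₊ : ℝ) := by
    exact_mod_cast h2
  exact h3.trans (Nat.ceil_lt_add_one (by positivity)).le

/-- The integrand of the transform on a grid of mesh `1/M`: it equals `B k` on the random interval
`[H k, H (k+1))`. -/
def gridB (H : ℕ → Ω → ℝ) (B : ℕ → Ω → Eu m) (n : ℕ) (x : ℝ) (ω : Ω) : Eu m :=
  ∑ k ∈ Finset.range n, if H k ω ≤ x ∧ x < H (k+1) ω then B k ω else 0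

lemma norm_gridB_sq_le {H : ℕ → Ω → ℝ} {B : ℕ → Ω → Eu m} {ω : Ω} (hH : Monotone fun k => H k ω)
    {R : ℝ} (hR : ∀ k, ‖B k ω‖ ≤ R) (n : ℕ) (x : ℝ) :
    ‖gridB H B n x ω‖ ^ 2 ≤ R ^ 2 * if x < H n ω then 1 else 0 := by
  have hR0 : 0 ≤ R := (norm_nonneg _).trans (hR 0)
  have h1 : ‖gridB H B n x ω‖ ≤ R * if x < H n ω then 1 else 0 := by
    refine (norm_sum_le _ _).trans (le_trans ?_
      (mul_le_mul_of_nonneg_left (sum_indicator_le hH x n) hR0))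
    rw [Finset.mul_sum]
    refine Finset.sum_le_sum fun k _ => ?_
    split_ifs
    · simpa using hR k
    · simp
  refine (pow_le_pow_left₀ (norm_nonneg _) h1 2).trans (le_of_eq ?_)
  split_ifs <;> simp

/-- The second moment and the mean of the transform on a grid. -/
lemma grid_bound [IsProbabilityMeasure P] {ν : Eu m} (hν : ‖ν‖ = 1) {w wt : ℝ → Ω → Eu m}
    (hw : ∀ t, Measurable (w t)) (hwt : IsWienerIn P ν wt) (hind : IndepProc P w wt)
    {H : ℕ → Ω → ℝ} (hHm : ∀ k, Measurable[pathSig w] (H k)) (hH : ∀ ω, Monotone fun k => H k ω)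
    (hH0 : ∀ k ω, 0 ≤ H k ω) {B : ℕ → Ω → Eu m}
    (hB : ∀ k a, 0 ≤ a → Measurable[pathFilt w wt a] ({ω | H k ω ≤ a}.indicator (B k)))
    {R : ℝ} (hR : ∀ k ω, ‖B k ω‖ ≤ R) {g : Ω → ℝ} (hg : Measurable[pathSig w] g)
    (hg0 : ∀ ω, 0 ≤ g ω) {C : ℝ} (hgC : ∀ ω, g ω ≤ C) (n J : ℕ) {M : ℝ} (hM : 0 < M) :
    let S := fun ω => ∑ j ∈ Finset.range J,
      ⟪gridB H B n (j / M) ω, wt ((j + 1) / M) ω - wt (j / M) ω⟫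
    MemLp S 2 P ∧ ∫ ω, S ω ∂P = 0 ∧
    ∫⁻ ω, ENNReal.ofReal (g ω) * ‖S ω‖ₑ ^ 2 ∂P
      ≤ ENNReal.ofReal (m * R ^ 2) * ∫⁻ ω, ENNReal.ofReal (g ω) * ENNReal.ofReal (H n ω + 1 / M) ∂P := by
  intro S
  have hbm : ∀ j : ℕ, Measurable[pathFilt w wt (j / M)] (gridB H B n (j / M)) := by
    intro j
    refine Finset.measurable_fun_sum _ fun k _ => ?_
    have e : (fun ω => if H k ω ≤ j / M ∧ j / M < H (k+1) ω then B k ω else 0)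
        = {ω | (j:ℝ) / M < H (k+1) ω}.indicator ({ω | H k ω ≤ j / M}.indicator (B k)) := by
      ext1 ω
      by_cases h1 : H k ω ≤ j / M <;> by_cases h2 : (j:ℝ) / M < H (k+1) ω <;>
        simp [Set.indicator, h1, h2]
    rw [e]
    refine (hB k _ (by positivity)).indicator ?_
    exact measurableSet_lt measurable_const ((hHm (k+1)).mono le_sup_left le_rfl)
  have hle : ∀ j : ℕ, (j:ℝ) / M ≤ (j + 1) / M := fun j => by gcongr; linarith
  have hpos : ∀ j : ℕ, 0 ≤ (j:ℝ) / M := fun j => by positivity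
  have hmom := fun j : ℕ => hwt.moments hν (hpos j) (hle j)
  have hRg : ∀ (j : ℕ) ω, ‖gridB H B n (j / M) ω‖ ≤ R := by
    intro j ω
    have hR0 : 0 ≤ R := (norm_nonneg _).trans (hR 0 ω)
    refine (pow_le_pow_iff_left₀ (norm_nonneg _) hR0 two_ne_zero).1 ?_
    refine (norm_gridB_sq_le (hH ω) (fun k => hR k ω) n _).trans ?_
    have : (if (j:ℝ) / M < H n ω then (1:ℝ) else 0) ≤ 1 := by split_ifs <;> norm_num
    nlinarith [sq_nonneg R]
  have hDm : ∀ j : ℕ, Measurable[pathFilt w wt ((j + 1 : ℕ) / M)]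
      (fun ω => wt ((j + 1) / M) ω - wt (j / M) ω) := by
    intro j
    have e : ((j + 1 : ℕ) : ℝ) / M = (j + 1) / M := by push_cast; rfl
    rw [e]
    refine Measurable.mono ?_ le_sup_right le_rfl
    exact (measurable_natFilt wt (by positivity) le_rfl).sub
      (measurable_natFilt wt (hpos j) (hle j))
  obtain ⟨h1, h2, h3⟩ := transform_bound (P := P) (G := fun j : ℕ => pathFilt w wt (j / M))
    (fun j => pathFilt_le hw hwt.meas _)
    (fun i j hij => pathFilt_mono w wt (by gcongr))
    (D := fun j ω => wt ((j + 1) / M) ω - wt (j / M) ω) (b := fun j => gridB H B n (j / M))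
    hDm (fun j => indep_pathFilt hw hwt hind (hpos j) (hle j)) (fun j => (hmom j).1)
    (fun j => (hmom j).2.1) (δ := m / M)
    (fun j => (hmom j).2.2.trans (le_of_eq (by field_simp; ring))) hbm hRg
    (hg.mono le_sup_left le_rfl) hg0 hgC J
  refine ⟨h1, h2, ?_⟩
  have hgm : Measurable g := hg.mono (pathSig_le hw) le_rfl
  have hbm' : ∀ j : ℕ, Measurable (gridB H B n (j / M)) := fun j =>
    (hbm j).mono (pathFilt_le hw hwt.meas _) le_rfl
  have hgi : ∀ {f : Ω → ℝ}, Integrable f P → Integrable (fun ω => g ω * f ω) P := fun hf =>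
    hf.bdd_mul hgm.aestronglyMeasurable (Eventually.of_forall fun ω => by
      rw [Real.norm_of_nonneg (hg0 ω)]; exact hgC ω)
  have hgb : ∀ j : ℕ, Integrable (fun ω => g ω * ‖gridB H B n (j / M) ω‖ ^ 2) P := by
    intro j
    refine hgi (Integrable.of_bound ((hbm' j).norm.pow_const 2).aestronglyMeasurable (R ^ 2)
      (Eventually.of_forall fun ω => ?_))
    rw [Real.norm_of_nonneg (by positivity)]
    exact pow_le_pow_left₀ (norm_nonneg _) (hRg j ω) 2
  have hgs : Integrable (fun ω => ∑ j ∈ Finset.range J, g ω * ‖gridB H B n (j / M) ω‖ ^ 2) P :=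
    integrable_finsetSum _ fun j _ => hgb j
  rw [← integral_finsetSum _ fun j _ => hgb j, ← integral_const_mul] at h3
  have hptw : ∀ ω, m / M * ∑ j ∈ Finset.range J, g ω * ‖gridB H B n (j / M) ω‖ ^ 2
      ≤ (m * R ^ 2) * (g ω * (H n ω + 1 / M)) := by
    intro ω
    have : ∑ j ∈ Finset.range J, g ω * ‖gridB H B n (j / M) ω‖ ^ 2
        ≤ g ω * (R ^ 2 * (M * H n ω + 1)) := by
      rw [← Finset.mul_sum]
      refine mul_le_mul_of_nonneg_left ?_ (hg0 ω)
      refine (Finset.sum_le_sum fun j _ =>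
        norm_gridB_sq_le (hH ω) (fun k => hR k ω) n _).trans ?_
      rw [← Finset.mul_sum]
      exact mul_le_mul_of_nonneg_left (sum_grid_le (hH0 n ω) hM J) (sq_nonneg R)
    calc _ ≤ m / M * (g ω * (R ^ 2 * (M * H n ω + 1))) :=
          mul_le_mul_of_nonneg_left this (by positivity)
      _ = _ := by field_simp
  calc ∫⁻ ω, ENNReal.ofReal (g ω) * ‖S ω‖ₑ ^ 2 ∂P
      = ∫⁻ ω, ENNReal.ofReal (g ω * S ω ^ 2) ∂P := by
        refine lintegral_congr fun ω => ?_
        rw [ENNReal.ofReal_mul (hg0 ω), ← ofReal_norm, ← ENNReal.ofReal_pow (norm_nonneg _)]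
        simp
    _ = ENNReal.ofReal (∫ ω, g ω * S ω ^ 2 ∂P) := 
        (ofReal_integral_eq_lintegral_ofReal (hgi h1.integrable_sq)
          (Eventually.of_forall fun ω => mul_nonneg (hg0 ω) (sq_nonneg _))).symm
    _ ≤ ENNReal.ofReal (∫ ω, m / M * ∑ j ∈ Finset.range J, g ω * ‖gridB H B n (j / M) ω‖ ^ 2 ∂P) :=
        ENNReal.ofReal_le_ofReal h3
    _ = ∫⁻ ω, ENNReal.ofReal
          (m / M * ∑ j ∈ Finset.range J, g ω * ‖gridB H B n (j / M) ω‖ ^ 2) ∂P := by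
        refine ofReal_integral_eq_lintegral_ofReal (hgs.const_mul _)
          (Eventually.of_forall fun ω => ?_)
        exact mul_nonneg (by positivity) (Finset.sum_nonneg fun j _ =>
          mul_nonneg (hg0 ω) (sq_nonneg _))
    _ ≤ ∫⁻ ω, ENNReal.ofReal (m * R ^ 2) *
          (ENNReal.ofReal (g ω) * ENNReal.ofReal (H n ω + 1 / M)) ∂P := by
        refine lintegral_mono fun ω => ?_
        rw [← ENNReal.ofReal_mul (hg0 ω), ← ENNReal.ofReal_mul (by positivity)]
        exact ENNReal.ofReal_le_ofReal (hptw ω)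
    _ = _ := by
        refine lintegral_const_mul _ ?_
        exact hgm.ennreal_ofReal.mul
          (((hHm n).mono (pathSig_le hw) le_rfl).add_const _).ennreal_ofReal

/-- Pathwise, transforms on grids of mesh tending to `0` converge to the transform at the random
times `H k`, by continuity of `w̃`. -/
lemma tendsto_grid {H : ℕ → Ω → ℝ} {B : ℕ → Ω → Eu m} {wt : ℝ → Ω → Eu m} {ω : Ω}
    (hH : Monotone fun k => H k ω) (hH0 : ∀ k, 0 ≤ H k ω) (hc : Continuous fun t => wt t ω)
    (n : ℕ) :
    Tendsto (fun N : ℕ => ∑ j ∈ Finset.range ((N + 1) ^ 2),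
        ⟪gridB H B n ((j:ℝ) / ((N:ℝ) + 1)) ω,
          wt (((j:ℝ) + 1) / ((N:ℝ) + 1)) ω - wt ((j:ℝ) / ((N:ℝ) + 1)) ω⟫) atTop
      (nhds (∑ k ∈ Finset.range n, ⟪B k ω, wt (H (k+1) ω) ω - wt (H k ω) ω⟫)) := by
  have hlim : ∀ k, Tendsto (fun N : ℕ => wt ((⌈H k ω * ((N:ℝ) + 1)⌉₊ : ℝ) / ((N:ℝ) + 1)) ω) atTop
      (nhds (wt (H k ω) ω)) := by
    intro k
    refine (hc.tendsto (H k ω)).comp ?_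
    exact (tendsto_nat_ceil_mul_div_atTop (hH0 k)).comp
      (tendsto_atTop_add_const_right _ 1 tendsto_natCast_atTop_atTop)
  have hlim2 : Tendsto (fun N : ℕ => ∑ k ∈ Finset.range n, ⟪B k ω,
      wt ((⌈H (k+1) ω * ((N:ℝ) + 1)⌉₊ : ℝ) / ((N:ℝ) + 1)) ω
        - wt ((⌈H k ω * ((N:ℝ) + 1)⌉₊ : ℝ) / ((N:ℝ) + 1)) ω⟫) atTop
      (nhds (∑ k ∈ Finset.range n, ⟪B k ω, wt (H (k+1) ω) ω - wt (H k ω) ω⟫)) :=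
    tendsto_finsetSum _ fun k _ => tendsto_const_nhds.inner ((hlim (k+1)).sub (hlim k))
  refine hlim2.congr' ?_
  filter_upwards [eventually_ge_atTop ⌈H n ω⌉₊] with N hN
  have hM : (0:ℝ) < (N:ℝ) + 1 := by positivity
  have hHn : H n ω ≤ N := (Nat.ceil_le.1 hN)
  unfold gridB
  simp_rw [sum_inner]
  rw [Finset.sum_comm]
  refine Finset.sum_congr rfl fun k hk => ?_
  have hk' := Finset.mem_range.1 hk
  have hJ : ⌈H (k+1) ω * ((N:ℝ) + 1)⌉₊ ≤ (N + 1) ^ 2 := by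
    refine Nat.ceil_le.2 ?_
    have h1 : H (k+1) ω ≤ N := (hH hk').trans hHn
    push_cast
    nlinarith
  have hcond : ∀ j : ℕ, (H k ω ≤ (j:ℝ) / ((N:ℝ) + 1) ∧ (j:ℝ) / ((N:ℝ) + 1) < H (k+1) ω) ↔
      j ∈ Finset.Ico ⌈H k ω * ((N:ℝ) + 1)⌉₊ ⌈H (k+1) ω * ((N:ℝ) + 1)⌉₊ := by
    intro j
    rw [Finset.mem_Ico, Nat.ceil_le, Nat.lt_ceil, le_div_iff₀ hM, div_lt_iff₀ hM]
  simp_rw [hcond]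
  have hle : ⌈H k ω * ((N:ℝ) + 1)⌉₊ ≤ ⌈H (k+1) ω * ((N:ℝ) + 1)⌉₊ :=
    Nat.ceil_mono (mul_le_mul_of_nonneg_right (hH k.le_succ) hM.le)
  have e : ∀ j : ℕ, ⟪(if j ∈ Finset.Ico ⌈H k ω * ((N:ℝ) + 1)⌉₊ ⌈H (k+1) ω * ((N:ℝ) + 1)⌉₊
        then B k ω else 0), wt (((j:ℝ) + 1) / ((N:ℝ) + 1)) ω - wt ((j:ℝ) / ((N:ℝ) + 1)) ω⟫
      = if j ∈ Finset.Ico ⌈H k ω * ((N:ℝ) + 1)⌉₊ ⌈H (k+1) ω * ((N:ℝ) + 1)⌉₊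
        then ⟪B k ω, wt (((j:ℝ) + 1) / ((N:ℝ) + 1)) ω - wt ((j:ℝ) / ((N:ℝ) + 1)) ω⟫ else 0 := by
    intro j; split_ifs <;> simp
  simp_rw [e]
  rw [← Finset.sum_filter]
  have hf : (Finset.range ((N + 1) ^ 2)).filter (fun j => j ∈
      Finset.Ico ⌈H k ω * ((N:ℝ) + 1)⌉₊ ⌈H (k+1) ω * ((N:ℝ) + 1)⌉₊)
      = Finset.Ico ⌈H k ω * ((N:ℝ) + 1)⌉₊ ⌈H (k+1) ω * ((N:ℝ) + 1)⌉₊ := by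
    ext j
    simp only [Finset.mem_filter, Finset.mem_range, Finset.mem_Ico]
    omega
  rw [hf, ← inner_sum]
  congr 1
  have := Finset.sum_Ico_sub (fun j : ℕ => wt ((j:ℝ) / ((N:ℝ) + 1)) ω) hle
  rw [← this]
  exact Finset.sum_congr rfl fun j _ => by push_cast; rfl

/-- A martingale transform of `w̃` at random times `H k` known from `w`: it has mean zero, and its
second moment is controlled by the last time. -/
lemma transform_random [IsProbabilityMeasure P] {ν : Eu m} (hν : ‖ν‖ = 1) {w wt : ℝ → Ω → Eu m}
    (hw : ∀ t, Measurable (w t)) (hwt : IsWienerIn P ν wt) (hind : IndepProc P w wt)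
    {H : ℕ → Ω → ℝ} (hHm : ∀ k, Measurable[pathSig w] (H k)) (hH : ∀ ω, Monotone fun k => H k ω)
    (hH0 : ∀ k ω, 0 ≤ H k ω) {B : ℕ → Ω → Eu m}
    (hB : ∀ k a, 0 ≤ a → Measurable[pathFilt w wt a] ({ω | H k ω ≤ a}.indicator (B k)))
    {R : ℝ} (hR : ∀ k ω, ‖B k ω‖ ≤ R) (n : ℕ)
    (hfin : ∫⁻ ω, ENNReal.ofReal (H n ω) ∂P ≠ ⊤) :
    let T := fun ω => ∑ k ∈ Finset.range n, ⟪B k ω, wt (H (k+1) ω) ω - wt (H k ω) ω⟫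
    AEMeasurable T P ∧ ∫ ω, T ω ∂P = 0 ∧
    ∀ g : Ω → ℝ, Measurable[pathSig w] g → (∀ ω, 0 ≤ g ω) → (∃ C, ∀ ω, g ω ≤ C) →
      ∫⁻ ω, ENNReal.ofReal (g ω) * ‖T ω‖ₑ ^ 2 ∂P
        ≤ ENNReal.ofReal (m * R ^ 2) * ∫⁻ ω, ENNReal.ofReal (g ω) * ENNReal.ofReal (H n ω) ∂P := by
  intro T
  let S : ℕ → Ω → ℝ := fun N ω => ∑ j ∈ Finset.range ((N + 1) ^ 2),
        ⟪gridB H B n ((j:ℝ) / ((N:ℝ) + 1)) ω,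
          wt (((j:ℝ) + 1) / ((N:ℝ) + 1)) ω - wt ((j:ℝ) / ((N:ℝ) + 1)) ω⟫
  have hlim : ∀ᵐ ω ∂P, Tendsto (fun N => S N ω) atTop (nhds (T ω)) := by
    filter_upwards [hwt.cont] with ω hω
    exact tendsto_grid (hH ω) (fun k => hH0 k ω) hω n
  have hgrid := fun (g : Ω → ℝ) (hg : Measurable[pathSig w] g) (hg0 : ∀ ω, 0 ≤ g ω) (C : ℝ)
      (hgC : ∀ ω, g ω ≤ C) (N : ℕ) => grid_bound hν hw hwt hind hHm hH hH0 hB hR hg hg0 hgC n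
        ((N + 1) ^ 2) (M := (N:ℝ) + 1) (by positivity)
  have h1m : Measurable[pathSig w] (fun _ : Ω => (1:ℝ)) := measurable_const
  have hgrid1 := hgrid (fun _ => 1) h1m (fun _ => zero_le_one) 1 (fun _ => le_rfl)
  have hSm : ∀ N, AEStronglyMeasurable (S N) P := fun N => (hgrid1 N).1.aestronglyMeasurable
  have hmeas : TendstoInMeasure P S atTop T := tendstoInMeasure_of_tendsto_ae hSm hlim
  refine ⟨aemeasurable_of_tendsto_metrizable_ae atTop (fun N => (hSm N).aemeasurable) hlim, ?_, ?_⟩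
  · have hC : ∀ N, ∫⁻ ω, ‖S N ω‖ₑ ^ 2 ∂P
        ≤ ENNReal.ofReal (m * R ^ 2) * (∫⁻ ω, ENNReal.ofReal (H n ω) ∂P + 1) := by
      intro N
      have h := (hgrid1 N).2.2
      simp only [ENNReal.ofReal_one, one_mul] at h
      refine h.trans (mul_le_mul_right ?_ _)
      calc ∫⁻ ω, ENNReal.ofReal (H n ω + 1 / ((N:ℝ) + 1)) ∂P
          ≤ ∫⁻ ω, (ENNReal.ofReal (H n ω) + 1) ∂P := by
            refine lintegral_mono fun ω => ENNReal.ofReal_add_le.trans ?_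
            gcongr
            rw [← ENNReal.ofReal_one]
            refine ENNReal.ofReal_le_ofReal ?_
            rw [div_le_one (by positivity)]
            linarith [Nat.cast_nonneg (α := ℝ) N]
        _ = _ := by rw [lintegral_add_right _ measurable_const]; simp
    obtain ⟨-, h2⟩ := tendsto_integral_of_L2_bdd P hSm hmeas
      (ENNReal.mul_ne_top ENNReal.ofReal_ne_top (ENNReal.add_ne_top.2 ⟨hfin, ENNReal.one_ne_top⟩)) hC
    refine tendsto_nhds_unique h2 ?_
    have : ∀ N, ∫ ω, S N ω ∂P = 0 := fun N => (hgrid1 N).2.1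
    simp [this]
  · rintro g hg hg0 ⟨C, hgC⟩
    have hgm : Measurable g := hg.mono (pathSig_le hw) le_rfl
    have hC : ∀ N : ℕ, ∫⁻ ω, ENNReal.ofReal (g ω) * ‖T ω‖ₑ ^ 2 ∂P ≤ ENNReal.ofReal (m * R ^ 2) *
        (∫⁻ ω, ENNReal.ofReal (g ω) * ENNReal.ofReal (H n ω) ∂P
          + ENNReal.ofReal C * ENNReal.ofReal (1 / ((N:ℝ) + 1))) := by
      intro N
      refine lintegral_le_of_tendstoInMeasure (f := fun k => S (N + k))
        (Φ := fun ω x => ENNReal.ofReal (g ω) * ‖x‖ₑ ^ 2) (fun ω => ?_) (fun k => ?_) ?_ fun k => ?_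
      · exact (ENNReal.continuous_const_mul ENNReal.ofReal_ne_top).comp
          (by fun_prop : Continuous fun x : ℝ => ‖x‖ₑ ^ 2)
      · exact hgm.ennreal_ofReal.aemeasurable.mul ((hSm _).enorm.pow_const 2)
      · intro ε hε
        exact (hmeas ε hε).comp (tendsto_add_atTop_nat N |>.congr fun k => add_comm _ _)
      · refine ((hgrid g hg hg0 C hgC (N + k)).2.2).trans (mul_le_mul_right ?_ _)
        calc ∫⁻ ω, ENNReal.ofReal (g ω) * ENNReal.ofReal (H n ω + 1 / (((N + k : ℕ):ℝ) + 1)) ∂P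
            ≤ ∫⁻ ω, (ENNReal.ofReal (g ω) * ENNReal.ofReal (H n ω)
                + ENNReal.ofReal C * ENNReal.ofReal (1 / ((N:ℝ) + 1))) ∂P := by
              refine lintegral_mono fun ω => ?_
              refine (mul_le_mul_right ENNReal.ofReal_add_le _).trans ?_
              rw [mul_add]
              gcongr
              · exact hgC ω
              · linarith [Nat.cast_nonneg (α := ℝ) k]
          _ = _ := by rw [lintegral_add_right _ measurable_const]; simp
    have hlimC : Tendsto (fun N : ℕ => ENNReal.ofReal (m * R ^ 2) *
        (∫⁻ ω, ENNReal.ofReal (g ω) * ENNReal.ofReal (H n ω) ∂P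
          + ENNReal.ofReal C * ENNReal.ofReal (1 / ((N:ℝ) + 1)))) atTop
        (nhds (ENNReal.ofReal (m * R ^ 2) *
        (∫⁻ ω, ENNReal.ofReal (g ω) * ENNReal.ofReal (H n ω) ∂P
          + ENNReal.ofReal C * ENNReal.ofReal 0))) := by
      refine ENNReal.Tendsto.const_mul (tendsto_const_nhds.add
        (ENNReal.Tendsto.const_mul ?_ (Or.inr ENNReal.ofReal_ne_top)))
        (Or.inr ENNReal.ofReal_ne_top)
      exact ENNReal.tendsto_ofReal tendsto_one_div_add_atTop_nhds_zero_nat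
    have := ge_of_tendsto' hlimC hC
    simpa using this

/-! ### The stochastic integral against `w̃(η)` -/

/-- The running maximum of a real sequence, floored at `0`. -/
def runMax (f : ℕ → ℝ) : ℕ → ℝ
  | 0 => max (f 0) 0
  | k + 1 => max (runMax f k) (f (k + 1))

lemma runMax_monotone (f : ℕ → ℝ) : Monotone (runMax f) :=
  monotone_nat_of_le_succ fun _ => le_max_left _ _

lemma runMax_nonneg (f : ℕ → ℝ) (k : ℕ) : 0 ≤ runMax f k :=
  (le_max_right (f 0) 0).trans (runMax_monotone f (Nat.zero_le k))

lemma le_runMax (f : ℕ → ℝ) (k : ℕ) : f k ≤ runMax f k := by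
  cases k with
  | zero => exact le_max_left _ _
  | succ k => exact le_max_right _ _

lemma runMax_eq {f : ℕ → ℝ} (h0 : 0 ≤ f 0) (hf : Monotone f) (k : ℕ) : runMax f k = f k := by
  induction k with
  | zero => exact max_eq_left h0
  | succ k ih =>
    rw [runMax, ih]
    exact max_eq_right (hf k.le_succ)

lemma measurable_runMax {Ω : Type} {G : MeasurableSpace Ω} {f : ℕ → Ω → ℝ}
    (hf : ∀ k, Measurable (f k)) (k : ℕ) : Measurable fun ω => runMax (fun i => f i ω) k := by
  induction k with
  | zero => exact (hf 0).max measurable_const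
  | succ k ih => exact ih.max (hf (k + 1))

/-- The σ-algebra of the sets whose trace on `S` belongs to `F`. -/
@[reducible] def traceSig {Ω : Type} (F : MeasurableSpace Ω) {S : Set Ω} (hS : MeasurableSet[F] S) :
    MeasurableSpace Ω where
  MeasurableSet' := fun A => MeasurableSet[F] (A ∩ S)
  measurableSet_empty := by simp
  measurableSet_compl := fun A hA => by
    have h : Aᶜ ∩ S = S \ (A ∩ S) := by
      ext ω; simp; tauto
    rw [h]
    exact MeasurableSet.diff hS hA
  measurableSet_iUnion := fun A hA => by
    rw [Set.iUnion_inter]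
    exact MeasurableSet.iUnion hA

/-- A variable measurable with respect to `M_t`, cut off on `{H ≤ a}` for some `H ≥ η_t` that
depends on `w` only, is measurable with respect to the path of `w` and `w̃` up to time `a`. -/
lemma measurable_indicator_of_MFilt {w wt : ℝ → Ω → Eu m} {η : ℝ → Ω → ℝ} {t : ℝ}
    (hη : Measurable[pathSig w] (η t)) {H : Ω → ℝ} (hH : Measurable[pathSig w] H)
    (hle : ∀ ω, η t ω ≤ H ω) {f : Ω → Eu m} (hf : Measurable[MFilt w wt η t] f) {a : ℝ} :
    Measurable[pathFilt w wt a] ({ω | H ω ≤ a}.indicator f) := by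
  have hS : MeasurableSet[pathFilt w wt a] {ω | H ω ≤ a} := by
    have h1 : pathSig w ≤ pathFilt w wt a := le_sup_left
    exact h1 _ (hH measurableSet_Iic)
  have hG : MFilt w wt η t ≤ traceSig (pathFilt w wt a) hS := by
    refine sup_le (fun A hA => ?_) (MeasurableSpace.generateFrom_le ?_)
    · have h1 : natFilt w t ≤ pathFilt w wt a := (natFilt_le_pathSig w t).trans le_sup_left
      exact MeasurableSet.inter (h1 _ hA) hS
    · rintro A ⟨s, hs, Γ, hΓ, rfl⟩
      change MeasurableSet[pathFilt w wt a] _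
      by_cases hsa : s ≤ a
      · have h1 : MeasurableSet[pathFilt w wt a] (wt s ⁻¹' Γ) := by
          have h2 : natFilt wt a ≤ pathFilt w wt a := le_sup_right
          exact h2 _ (measurable_natFilt wt hs hsa hΓ)
        have h3 : MeasurableSet[pathFilt w wt a] {ω | s ≤ η t ω} := by
          have h2 : pathSig w ≤ pathFilt w wt a := le_sup_left
          exact h2 _ (hη measurableSet_Ici)
        exact MeasurableSet.inter (MeasurableSet.inter h1 h3) hS
      · have : {ω | wt s ω ∈ Γ ∧ s ≤ η t ω} ∩ {ω | H ω ≤ a} = ∅ := by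
          ext ω
          simp only [Set.mem_inter_iff, Set.mem_ofPred_eq, Set.mem_empty_iff_false, iff_false]
          rintro ⟨⟨_, h1⟩, h2⟩
          exact hsa (h1.trans ((hle ω).trans h2))
        rw [this]
        exact @MeasurableSet.empty _ (pathFilt w wt a)
  intro B hB
  have h1 : MeasurableSet[pathFilt w wt a] (f ⁻¹' B ∩ {ω | H ω ≤ a}) := hG _ (hf hB)
  classical
  rw [Set.indicator_preimage, Set.ite]
  refine @MeasurableSet.union _ (pathFilt w wt a) _ _ h1 (@MeasurableSet.diff _ (pathFilt w wt a) _ _ ?_ hS)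
  have hc : Measurable[pathFilt w wt a] (0 : Ω → Eu m) := measurable_const
  exact hc hB

/-- The Riemann sums of the stochastic integral against the time-changed process `w̃(η)`. -/
lemma discrete_transform [IsProbabilityMeasure P] {ν : Eu m} (hν : ‖ν‖ = 1) {w wt : ℝ → Ω → Eu m}
    (hw : ∀ t, Measurable (w t)) (hwt : IsWienerIn P ν wt) (hind : IndepProc P w wt)
    {η : ℝ → Ω → ℝ} (hη : NiceEta P w η) {x : ℝ → Ω → Eu m}
    (hx : ∀ t, 0 ≤ t → Measurable[MFilt w wt η t] (x t)) {γ : Eu m → Eu m →L[ℝ] Eu m}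
    (hγ : Continuous γ) {K : ℝ} (hK : ∀ v, ‖γ v‖ ≤ K) (θ : Eu m) {t : ℝ} (ht : 0 ≤ t)
    (hfin : ∫⁻ ω, ENNReal.ofReal (η t ω) ∂P ≠ ⊤) {n : ℕ} (hn : 0 < n) :
    let T := fun ω => ⟪∑ k ∈ Finset.range n, γ (x (partPt 0 t n k) ω)
      (wt (η (partPt 0 t n (k + 1)) ω) ω - wt (η (partPt 0 t n k) ω) ω), θ⟫
    AEMeasurable T P ∧ ∫ ω, T ω ∂P = 0 ∧ ∀ g : Ω → ℝ, Measurable[pathSig w] g → (∀ ω, 0 ≤ g ω) →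
      (∃ C, ∀ ω, g ω ≤ C) → ∫⁻ ω, ENNReal.ofReal (g ω) * ‖T ω‖ₑ ^ 2 ∂P ≤
        ENNReal.ofReal (m * (K * ‖θ‖) ^ 2) * ∫⁻ ω, ENNReal.ofReal (g ω) * ENNReal.ofReal (η t ω) ∂P := by
  intro T
  have hτ0 : ∀ k, 0 ≤ partPt 0 t n k := fun k => by
    have := partPt_mono ht n (Nat.zero_le k)
    simpa [partPt_zero] using this
  set e : ℕ → Ω → ℝ := fun k => η (partPt 0 t n k) with he
  have hem : ∀ k, Measurable[pathSig w] (e k) := fun k =>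
    (hη.adapted _ (hτ0 k)).mono (natFilt_le_pathSig w _) le_rfl
  set H : ℕ → Ω → ℝ := fun k ω => runMax (fun i => e i ω) k with hH
  have hHe : ∀ᵐ ω ∂P, ∀ k, H k ω = e k ω := by
    filter_upwards [hη.mono, hη.zero] with ω h1 h2 k
    refine runMax_eq ?_ (h1.comp (partPt_mono ht n)) k
    simp [partPt_zero, h2]
  have hHm : ∀ k, Measurable[pathSig w] (H k) := fun k => measurable_runMax (G := pathSig w) hem k
  set B : ℕ → Ω → Eu m := fun k ω => (γ (x (partPt 0 t n k) ω)).adjoint θ with hB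
  have hBc : Continuous fun v => (γ v).adjoint θ :=
    (((ContinuousLinearMap.adjoint (𝕜 := ℝ) (E := Eu m) (F := Eu m)).continuous.comp hγ).clm_apply
      continuous_const)
  have hBm : ∀ k, Measurable[MFilt w wt η (partPt 0 t n k)] (B k) := fun k =>
    hBc.measurable.comp (hx _ (hτ0 k))
  have hB' : ∀ k a, 0 ≤ a → Measurable[pathFilt w wt a] ({ω | H k ω ≤ a}.indicator (B k)) :=
    fun k a _ => measurable_indicator_of_MFilt (hem k) (hHm k)
      (fun ω => le_runMax (fun i => e i ω) k) (hBm k)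
  have hR : ∀ k ω, ‖B k ω‖ ≤ K * ‖θ‖ := fun k ω => by
    refine (ContinuousLinearMap.le_opNorm _ _).trans ?_
    rw [LinearIsometryEquiv.norm_map]
    gcongr
    exact hK _
  have hHn : ∀ᵐ ω ∂P, H n ω = η t ω := by
    filter_upwards [hHe] with ω h
    rw [h n]
    simp only [he, partPt_last _ _ hn]
  have hfin' : ∫⁻ ω, ENNReal.ofReal (H n ω) ∂P ≠ ⊤ := by
    rw [lintegral_congr_ae (g := fun ω => ENNReal.ofReal (η t ω))]
    · exact hfin
    · filter_upwards [hHn] with ω h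
      rw [h]
  obtain ⟨h1, h2, h3⟩ := transform_random hν hw hwt hind hHm (fun ω => runMax_monotone _)
    (fun k ω => runMax_nonneg _ k) hB' hR n hfin'
  have hT : ∀ᵐ ω ∂P, (∑ k ∈ Finset.range n, ⟪B k ω, wt (H (k+1) ω) ω - wt (H k ω) ω⟫) = T ω := by
    filter_upwards [hHe] with ω h
    simp only [T, sum_inner]
    refine Finset.sum_congr rfl fun k _ => ?_
    rw [h, h, real_inner_comm, hB]
    simp only [he]
    rw [ContinuousLinearMap.adjoint_inner_right]
  refine ⟨h1.congr hT, (integral_congr_ae hT).symm.trans h2, fun g hg hg0 hgC => ?_⟩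
  have h4 := h3 g hg hg0 hgC
  rw [lintegral_congr_ae (g := fun ω => ENNReal.ofReal (g ω) * ‖T ω‖ₑ ^ 2)
    (by filter_upwards [hT] with ω h; rw [h]),
    lintegral_congr_ae (f := fun ω => ENNReal.ofReal (g ω) * ENNReal.ofReal (H n ω))
    (g := fun ω => ENNReal.ofReal (g ω) * ENNReal.ofReal (η t ω))
    (by filter_upwards [hHn] with ω h; rw [h])] at h4
  exact h4

lemma tendstoInMeasure_inner {F : ℕ → Ω → Eu m} {M : Ω → Eu m}
    (h : TendstoInMeasure P F atTop M) (θ : Eu m) :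
    TendstoInMeasure P (fun n ω => ⟪F n ω, θ⟫) atTop (fun ω => ⟪M ω, θ⟫) := by
  rw [tendstoInMeasure_iff_norm] at h ⊢
  intro ε hε
  have hθ : 0 < ‖θ‖ + 1 := by positivity
  refine tendsto_of_tendsto_of_tendsto_of_le_of_le tendsto_const_nhds
    (h (ε / (‖θ‖ + 1)) (by positivity)) (fun _ => by simp) fun n => ?_
  refine measure_mono fun ω hω => ?_
  simp only [Set.mem_ofPred_eq] at hω ⊢
  rw [div_le_iff₀ hθ]
  rw [← inner_sub_left] at hω
  calc ε ≤ _ := hω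
    _ ≤ ‖F n ω - M ω‖ * ‖θ‖ := norm_inner_le_norm _ _
    _ ≤ _ := by gcongr; linarith

/-- The Itô integral against `w̃(η)` is centred, and its second moment conditional on `w` is at
most a multiple of `η_t`. -/
lemma stoch_integral_bounds [IsProbabilityMeasure P] {ν : Eu m} (hν : ‖ν‖ = 1)
    {w wt : ℝ → Ω → Eu m}
    (hw : ∀ t, Measurable (w t)) (hwt : IsWienerIn P ν wt) (hind : IndepProc P w wt)
    {η : ℝ → Ω → ℝ} (hη : NiceEta P w η) {x : ℝ → Ω → Eu m}
    (hx : ∀ t, 0 ≤ t → Measurable[MFilt w wt η t] (x t)) {γ : Eu m → Eu m →L[ℝ] Eu m}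
    (hγ : Continuous γ) {K : ℝ} (hK : ∀ v, ‖γ v‖ ≤ K) {t : ℝ} (ht : 0 ≤ t)
    (hfin : ∫⁻ ω, ENNReal.ofReal (η t ω) ∂P ≠ ⊤) {M : Ω → Eu m}
    (hM : TendstoInMeasure P (fun n ω => ∑ k ∈ Finset.range n, γ (x (partPt 0 t n k) ω)
      (wt (η (partPt 0 t n (k + 1)) ω) ω - wt (η (partPt 0 t n k) ω) ω)) atTop M) :
    (∀ θ, Integrable (fun ω => ⟪M ω, θ⟫) P ∧ ∫ ω, ⟪M ω, θ⟫ ∂P = 0) ∧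
    ∀ G : Ω → ENNReal, Measurable[pathSig w] G → ∫⁻ ω, G ω * ‖M ω‖ₑ ^ 2 ∂P ≤
      m * (ENNReal.ofReal (m * K ^ 2) * ∫⁻ ω, G ω * ENNReal.ofReal (η t ω) ∂P) := by
  have hM' := fun θ => (tendstoInMeasure_inner hM θ).comp (tendsto_add_atTop_nat 1)
  have hT := fun (θ : Eu m) (n : ℕ) =>
    discrete_transform hν hw hwt hind hη hx hγ hK θ ht hfin n.succ_pos
  have hηm : Measurable (η t) :=
    (hη.adapted t ht).mono ((natFilt_le_pathSig w t).trans (pathSig_le hw)) le_rfl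
  constructor
  · intro θ
    obtain ⟨h1, h2⟩ := tendsto_integral_of_L2_bdd P (fun n => (hT θ n).1.aestronglyMeasurable)
      (hM' θ) (C := ENNReal.ofReal (m * (K * ‖θ‖) ^ 2) * ∫⁻ ω, ENNReal.ofReal (η t ω) ∂P)
      (ENNReal.mul_ne_top ENNReal.ofReal_ne_top hfin) (fun n => by
        have hc : Measurable[pathSig w] (fun _ : Ω => (1:ℝ)) := measurable_const
        have := (hT θ n).2.2 (fun _ => 1) hc (fun _ => zero_le_one) ⟨1, fun _ => le_rfl⟩
        simpa using this)
    refine ⟨h1, tendsto_nhds_unique h2 ?_⟩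
    refine tendsto_const_nhds.congr fun n => ?_
    exact ((hT θ n).2.1).symm
  · intro G hG
    have hGm : Measurable G := hG.mono (pathSig_le hw) le_rfl
    -- bounded weights suffice: truncate `G` at level `N` and use monotone convergence
    have h1 : ∀ (i : Fin m) (g : Ω → ℝ), Measurable[pathSig w] g → (∀ ω, 0 ≤ g ω) →
        (∃ C, ∀ ω, g ω ≤ C) → ∫⁻ ω, ENNReal.ofReal (g ω) * ‖M ω i‖ₑ ^ 2 ∂P ≤
          ENNReal.ofReal (m * K ^ 2) * ∫⁻ ω, ENNReal.ofReal (g ω) * ENNReal.ofReal (η t ω) ∂P := by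
      intro i g hg hg0 hgC
      have hgm : Measurable g := hg.mono (pathSig_le hw) le_rfl
      have h := lintegral_le_of_tendstoInMeasure
        (Φ := fun ω (y : ℝ) => ENNReal.ofReal (g ω) * ‖y‖ₑ ^ 2) (fun ω => by
          refine ENNReal.continuous_const_mul ENNReal.ofReal_ne_top |>.comp ?_
          fun_prop)
        (fun n => hgm.ennreal_ofReal.aemeasurable.mul
          ((hT (EuclideanSpace.single i 1) n).1.enorm.pow_const 2))
        (hM' (EuclideanSpace.single i 1))
        (fun n => (hT (EuclideanSpace.single i 1) n).2.2 g hg hg0 hgC)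
      simpa [EuclideanSpace.inner_single_right] using h
    have hMi : ∀ i : Fin m, AEMeasurable (fun ω => M ω i) P := fun i => by
      have h := (hM' (EuclideanSpace.single i 1)).aemeasurable
        (fun n => (hT (EuclideanSpace.single i 1) n).1)
      simpa [EuclideanSpace.inner_single_right] using h
    have h2 : ∀ i : Fin m, ∫⁻ ω, G ω * ‖M ω i‖ₑ ^ 2 ∂P ≤
        ENNReal.ofReal (m * K ^ 2) * ∫⁻ ω, G ω * ENNReal.ofReal (η t ω) ∂P := by
      intro i
      have hlim : Tendsto (fun N : ℕ => ∫⁻ ω, min (G ω) N * ‖M ω i‖ₑ ^ 2 ∂P) atTop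
          (nhds (∫⁻ ω, G ω * ‖M ω i‖ₑ ^ 2 ∂P)) := by
        refine lintegral_tendsto_of_tendsto_of_monotone
          (fun N => (hGm.min measurable_const).aemeasurable.mul ((hMi i).enorm.pow_const 2))
          (Eventually.of_forall fun ω N N' hN => by dsimp only; gcongr)
          (Eventually.of_forall fun ω => ?_)
        have hlt : ‖M ω i‖ₑ ^ 2 ≠ ⊤ := by simp
        refine ENNReal.Tendsto.mul_const ?_ (Or.inr hlt)
        have := (tendsto_const_nhds (x := G ω)).min ENNReal.tendsto_nat_nhds_top
        simpa using this
      refine le_of_tendsto' hlim fun N => ?_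
      have hne : ∀ ω, min (G ω) (N : ENNReal) ≠ ⊤ := fun ω =>
        ((min_le_right _ _).trans_lt (ENNReal.natCast_lt_top N)).ne
      have hc : Measurable[pathSig w] (fun _ : Ω => (N:ENNReal)) := measurable_const
      have h := h1 i (fun ω => (min (G ω) N).toReal) (hG.min hc).ennreal_toReal
        (fun _ => ENNReal.toReal_nonneg) ⟨N, fun ω => by
          have := ENNReal.toReal_mono (ENNReal.natCast_ne_top N) (min_le_right (G ω) N)
          simpa using this⟩
      simp only [ENNReal.ofReal_toReal (hne _)] at h
      refine h.trans ?_
      gcongr with ω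
      exact min_le_left _ _
    simp_rw [enorm_sq_eq_sum, Finset.mul_sum]
    rw [lintegral_finsetSum' (f := fun i ω => G ω * ‖M ω i‖ₑ ^ 2) _
      fun i _ => hGm.aemeasurable.mul ((hMi i).enorm.pow_const 2)]
    refine (Finset.sum_le_sum fun i _ => h2 i).trans ?_
    simp

/-! ### The drift term -/

lemma tildeFilt_le {wt : ℝ → Ω → Eu m} (hwt : ∀ t, Measurable (wt t)) {η : ℝ → Ω → ℝ} {t : ℝ}
    (hη : Measurable (η t)) : tildeFilt wt η t ≤ ‹MeasurableSpace Ω› := by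
  refine MeasurableSpace.generateFrom_le ?_
  rintro A ⟨s, -, Γ, hΓ, rfl⟩
  exact (hwt s hΓ).inter (measurableSet_le measurable_const hη)

lemma MFilt_le {w wt : ℝ → Ω → Eu m} (hw : ∀ t, Measurable (w t)) (hwt : ∀ t, Measurable (wt t))
    {η : ℝ → Ω → ℝ} {t : ℝ} (hη : Measurable (η t)) : MFilt w wt η t ≤ ‹MeasurableSpace Ω› :=
  sup_le (natFilt_le hw t) (tildeFilt_le hwt hη)

lemma natFilt_inner_le (w : ℝ → Ω → Eu m) (ν : Eu m) (t : ℝ) :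
    natFilt (fun t ω => ⟪w t ω, ν⟫) t ≤ natFilt w t := by
  refine iSup₂_mono fun u _ => ?_
  rintro _ ⟨B, hB, rfl⟩
  have hf : Measurable fun x : Eu m => ⟪x, ν⟫ := by fun_prop
  exact ⟨_, hf hB, rfl⟩

lemma projS_sub (ν x y : Eu m) : projS ν (x - y) = projS ν x - projS ν y := by
  simp only [projS, inner_sub_left, sub_smul]; abel

lemma projS_add (ν x y : Eu m) : projS ν (x + y) = projS ν x + projS ν y := by
  simp only [projS, inner_add_left, add_smul]; abel

lemma inner_projS {ν : Eu m} (hν : ‖ν‖ = 1) (x : Eu m) : ⟪projS ν x, ν⟫ = 0 := by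
  simp [projS, inner_sub_left, inner_smul_left, hν]

lemma continuous_projS (ν : Eu m) : Continuous (projS ν) := by
  unfold projS; fun_prop

/-- An almost sure bound on the norm passes to limits in probability. -/
lemma norm_le_of_tendstoInMeasure {F : ℕ → Ω → Eu m} {A : Ω → Eu m} {b : Ω → ℝ}
    (h : TendstoInMeasure P F atTop A) (hb : ∀ n, ∀ᵐ ω ∂P, ‖F n ω‖ ≤ b ω) :
    ∀ᵐ ω ∂P, ‖A ω‖ ≤ b ω := by
  obtain ⟨ns, -, hns⟩ := h.exists_seq_tendsto_ae
  filter_upwards [hns, ae_all_iff.2 hb] with ω h1 h2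
  exact le_of_tendsto' h1.norm fun n => h2 _

lemma tendstoInMeasure_sub_const {F : ℕ → Ω → Eu m} {A c : Ω → Eu m}
    (h : TendstoInMeasure P F atTop A) :
    TendstoInMeasure P (fun n ω => F n ω - c ω) atTop (fun ω => A ω - c ω) := by
  rw [tendstoInMeasure_iff_norm] at h ⊢
  simpa only [sub_sub_sub_cancel_right] using h

lemma sum_partPt_sub {f : ℝ → ℝ} (hf : f 0 = 0) (t : ℝ) {n : ℕ} (hn : 0 < n) :
    ∑ k ∈ Finset.range n, (f (partPt 0 t n (k + 1)) - f (partPt 0 t n k)) = f t := by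
  rw [Finset.sum_range_sub (fun k => f (partPt 0 t n k)), partPt_zero, partPt_last _ _ hn, hf,
    sub_zero]

/-- The Riemann sums of a Stieltjes integral of a bounded integrand. -/
lemma norm_riemann_sum_le {f : ℝ → ℝ} (hf : Monotone f) (hf0 : f 0 = 0) {t : ℝ} (ht : 0 ≤ t) {n : ℕ}
    (hn : 0 < n) {c : ℕ → Eu m} {R : ℝ} (hc : ∀ k, ‖c k‖ ≤ R) :
    ‖∑ k ∈ Finset.range n, (f (partPt 0 t n (k + 1)) - f (partPt 0 t n k)) • c k‖ ≤ R * f t := by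
  rw [← sum_partPt_sub hf0 t hn, Finset.mul_sum]
  refine norm_sum_le_of_le _ fun k _ => ?_
  have h : 0 ≤ f (partPt 0 t n (k + 1)) - f (partPt 0 t n k) :=
    sub_nonneg.2 (hf (partPt_mono ht n k.le_succ))
  rw [norm_smul, Real.norm_of_nonneg h, mul_comm]
  gcongr
  exact hc k

/-- A weighted form of `y ≤ r + y² / r`, used to pass from second to first moments. -/
lemma le_add_sq_div (y : ENNReal) {r : ℝ} (hr : 0 < r) :
    y ≤ ENNReal.ofReal r + ENNReal.ofReal r⁻¹ * y ^ 2 := by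
  induction y with
  | top => simp [hr, ENNReal.mul_top]
  | coe y =>
    rw [← ENNReal.ofReal_coe_nnreal, ← ENNReal.ofReal_pow y.coe_nonneg, ← ENNReal.ofReal_mul (by positivity),
      ← ENNReal.ofReal_add hr.le (by positivity)]
    refine ENNReal.ofReal_le_ofReal ?_
    have h : (y:ℝ) * r ≤ r * r + y ^ 2 := by nlinarith [sq_nonneg ((y:ℝ) - r), sq_nonneg (r), sq_nonneg ((y:ℝ)), y.coe_nonneg]
    calc (y:ℝ) = r⁻¹ * (y * r) := by field_simp
      _ ≤ r⁻¹ * (r * r + y ^ 2) := by gcongr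
      _ = _ := by field_simp

/-- The modulus controlling the relative error in freezing the drift at its starting value over a
time `t`. -/
def rho (m : ℕ) (K t : ℝ) : ℝ :=
  √K * ((1 + K) * (2 * √t) + 2 * √(√t) + (√(√t))⁻¹ * (m * t) +
    (√(√t))⁻¹ * (m * (m * K ^ 2)) * (2 * √t))

lemma tendsto_rho (m : ℕ) (K : ℝ) : Tendsto (rho m K) (nhdsWithin 0 (Set.Ioi 0)) (nhds 0) := by
  have h : Tendsto (fun t : ℝ => √K * ((1 + K) * (2 * √t) + 2 * √(√t) +  (m * (√t * √(√t))) +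
    (m * (m * K ^ 2)) * (2 * √(√t)))) (nhdsWithin 0 (Set.Ioi 0)) (nhds 0) := by
    have hc : Continuous (fun t : ℝ => √K * ((1 + K) * (2 * √t) + 2 * √(√t) +  (m * (√t * √(√t))) +
      (m * (m * K ^ 2)) * (2 * √(√t)))) := by fun_prop
    have := hc.tendsto 0
    simp only [Real.sqrt_zero, mul_zero, add_zero] at this
    exact this.mono_left nhdsWithin_le_nhds
  refine h.congr' ?_
  filter_upwards [self_mem_nhdsWithin] with t ht
  have ht : (0:ℝ) < t := ht
  have h1 : 0 < √(√t) := by positivity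
  have h2 : √(√t) * √(√t) = √t := Real.mul_self_sqrt (by positivity)
  have h3 : √t * √t = t := Real.mul_self_sqrt ht.le
  have h4 : (√(√t))⁻¹ * (m * t) = m * (√t * √(√t)) := by
    rw [inv_mul_eq_iff_eq_mul₀ h1.ne']
    linear_combination (-(m:ℝ)) * h3 - m * √t * h2
  have h5 : (√(√t))⁻¹ * (m * (m * K ^ 2)) * (2 * √t) = (m * (m * K ^ 2)) * (2 * √(√t)) := by
    rw [mul_assoc, inv_mul_eq_iff_eq_mul₀ h1.ne']
    linear_combination (-2 * (m:ℝ) * (m * K ^ 2)) * h2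
  rw [rho, h4, h5]

/-- The weighted second moments that bound how far the solution moves up to a time `τ`, tested
against a weight depending on the `ν`-component of `w` only. -/
lemma weighted_displacement [IsProbabilityMeasure P] {ν : Eu m} (hν : ‖ν‖ = 1)
    {w : ℝ → Ω → Eu m} (hw : IsWiener P w) {η : ℝ → Ω → ℝ} {K : ℝ} (hK : 0 < K)
    {t τ : ℝ} (hτ : 0 ≤ τ) (hτt : τ ≤ t) (hηt : Measurable (η t))
    (hmono : ∀ᵐ ω ∂P, η τ ω ≤ η t ω)
    {A M x : Ω → Eu m} {z : Eu m} (hA : ∀ᵐ ω ∂P, ‖A ω‖ ≤ (1 + K) * η τ ω)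
    {D : Ω → ENNReal} (hD : Measurable[natFilt (fun t ω => ⟪w t ω, ν⟫) t] D)
    (hM : ∫⁻ ω, D ω * ‖M ω‖ₑ ^ 2 ∂P ≤
      ENNReal.ofReal (m * (m * K ^ 2)) * ∫⁻ ω, D ω * ENNReal.ofReal (η τ ω) ∂P)
    (hx : ∀ᵐ ω ∂P, x ω = z + A ω + M ω + (w τ ω - w 0 ω))
    {a : Eu m → Eu m} (ha : ∀ v v', ‖a v - a v'‖ ≤ √K * ‖projS ν v - projS ν v'‖)
    {r : ℝ} (hr : 0 < r) :
    ∫⁻ ω, D ω * ‖a (x ω) - a z‖ₑ ∂P ≤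
      ENNReal.ofReal (√K) * (ENNReal.ofReal (1 + K) * ∫⁻ ω, D ω * ENNReal.ofReal (η t ω) ∂P +
        ENNReal.ofReal (2 * r) * ∫⁻ ω, D ω ∂P +
        ENNReal.ofReal (r⁻¹ * (m * t)) * ∫⁻ ω, D ω ∂P +
        ENNReal.ofReal (r⁻¹ * (m * (m * K ^ 2))) * ∫⁻ ω, D ω * ENNReal.ofReal (η t ω) ∂P) := by
  have hw1 : ∀ t, Measurable (fun ω => ⟪w t ω, ν⟫) := fun t => by
    have hf : Measurable fun x : Eu m => ⟪x, ν⟫ := by fun_prop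
    exact hf.comp (hw.meas t)
  have hDm : Measurable D := hD.mono (natFilt_le hw1 t) le_rfl
  set p : Ω → Eu m := fun ω => projS ν (w τ ω - w 0 ω) with hp
  have hpm : Measurable p :=
    (continuous_projS ν).measurable.comp ((hw.meas τ).sub (hw.meas 0))
  have hpt : ∀ᵐ ω ∂P, D ω * ‖a (x ω) - a z‖ₑ ≤ ENNReal.ofReal (√K) *
      (ENNReal.ofReal (1 + K) * (D ω * ENNReal.ofReal (η t ω)) + ENNReal.ofReal (2 * r) * D ω +
        ENNReal.ofReal r⁻¹ * (D ω * ‖p ω‖ₑ ^ 2) + ENNReal.ofReal r⁻¹ * (D ω * ‖M ω‖ₑ ^ 2)) := by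
    filter_upwards [hmono, hA, hx] with ω h1 h2 h3
    have h4 : ‖a (x ω) - a z‖ₑ ≤ ENNReal.ofReal (√K) *
        (ENNReal.ofReal (1 + K) * ENNReal.ofReal (η t ω) + ‖M ω‖ₑ + ‖p ω‖ₑ) := by
      rw [← ofReal_norm, ← ofReal_norm, ← ofReal_norm, ← ENNReal.ofReal_mul (by positivity)]
      by_cases h0 : η t ω < 0
      · exfalso
        have := norm_nonneg (A ω)
        nlinarith
      push Not at h0
      rw [← ENNReal.ofReal_add (by positivity) (by positivity),
        ← ENNReal.ofReal_add (by positivity) (by positivity), ← ENNReal.ofReal_mul (by positivity)]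
      refine ENNReal.ofReal_le_ofReal ((ha _ _).trans ?_)
      gcongr
      have h5 : projS ν (x ω) - projS ν z = projS ν (A ω) + projS ν (M ω) + p ω := by
        rw [← projS_sub, hp, ← projS_add, ← projS_add, h3]
        congr 1; abel
      rw [h5]
      refine (norm_add₃_le).trans ?_
      gcongr
      · exact (norm_projS_le hν _).trans (h2.trans (by gcongr))
      · exact norm_projS_le hν _
    have h6 := le_add_sq_div ‖M ω‖ₑ hr
    have h7 := le_add_sq_div ‖p ω‖ₑ hr
    have h8 : ENNReal.ofReal (2 * r) = ENNReal.ofReal r + ENNReal.ofReal r := by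
      rw [two_mul, ENNReal.ofReal_add hr.le hr.le]
    calc D ω * ‖a (x ω) - a z‖ₑ ≤ D ω * (ENNReal.ofReal (√K) *
        (ENNReal.ofReal (1 + K) * ENNReal.ofReal (η t ω) +
          (ENNReal.ofReal r + ENNReal.ofReal r⁻¹ * ‖M ω‖ₑ ^ 2) +
          (ENNReal.ofReal r + ENNReal.ofReal r⁻¹ * ‖p ω‖ₑ ^ 2))) := by
          gcongr
          exact h4.trans (by gcongr)
      _ = _ := by rw [h8]; ring
  have hp2 := hw.lintegral_mul_proj_sq_le hν hτ hD
  have hpt' : ENNReal.ofReal (m * τ) ≤ ENNReal.ofReal (m * t) :=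
    ENNReal.ofReal_le_ofReal (by gcongr)
  have hmη : ∫⁻ ω, D ω * ENNReal.ofReal (η τ ω) ∂P ≤ ∫⁻ ω, D ω * ENNReal.ofReal (η t ω) ∂P := by
    refine lintegral_mono_ae ?_
    filter_upwards [hmono] with ω h
    gcongr
  refine (lintegral_mono_ae hpt).trans ?_
  rw [lintegral_const_mul' _ _ ENNReal.ofReal_ne_top]
  have m1 : Measurable fun ω => ENNReal.ofReal (1 + K) * (D ω * ENNReal.ofReal (η t ω)) :=
    (hDm.mul hηt.ennreal_ofReal).const_mul _
  have m2 : Measurable fun ω => ENNReal.ofReal (2 * r) * D ω := hDm.const_mul _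
  have m3 : Measurable fun ω => ENNReal.ofReal r⁻¹ * (D ω * ‖p ω‖ₑ ^ 2) :=
    (hDm.mul (hpm.enorm.pow_const 2)).const_mul _
  rw [lintegral_add_left (by exact (m1.add m2).add m3), lintegral_add_left (by exact m1.add m2),
    lintegral_add_left m1, lintegral_const_mul' _ _ ENNReal.ofReal_ne_top,
    lintegral_const_mul' _ _ ENNReal.ofReal_ne_top, lintegral_const_mul' _ _ ENNReal.ofReal_ne_top,
    lintegral_const_mul' _ _ ENNReal.ofReal_ne_top]
  rw [ENNReal.ofReal_mul (p := r⁻¹) (by positivity), ENNReal.ofReal_mul (p := r⁻¹) (by positivity),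
    mul_assoc, mul_assoc]
  gcongr
  · exact hp2.trans (by gcongr)
  · exact hM.trans (by gcongr)

/-- The drift term of the equation differs from `η_t (qν + α(z^S))` by `o(E η_t)` in mean,
uniformly in the starting point. -/
lemma drift_error [IsProbabilityMeasure P] {ν : Eu m} (hν : ‖ν‖ = 1) {q : ℝ} (hq : |q| ≤ 1)
    {w wt : ℝ → Ω → Eu m} (hw : IsWiener P w) (hwt : IsWienerIn P ν wt) (hind : IndepProc P w wt)
    {α : Eu m → Eu m} {βt : Eu m → Eu m →L[ℝ] Eu m} {K : ℝ} (hK : 0 < K)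
    (hα : ∀ v, ‖α (projS ν v)‖ ≤ K)
    (hαl : ∀ v v', ‖α (projS ν v) - α (projS ν v')‖ ≤ √K * ‖projS ν v - projS ν v'‖)
    (hβ : ∀ v, ‖βt (projS ν v)‖ ≤ K) (hβc : Continuous fun v => βt (projS ν v))
    {x : ℝ → Ω → Eu m} {η : ℝ → Ω → ℝ} {z : Eu m}
    (hskew : IsSkewLT P q (fun t ω => ⟪w t ω, ν⟫) ⟪z, ν⟫ (fun t ω => ⟪x t ω, ν⟫) η)
    (hsol : SolvesFrom P (MFilt w wt η) ν q α βt w η (fun u ω => wt (η u ω) ω) 0 (fun _ => z) x)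
    {t : ℝ} (ht : 0 < t) :
    ∀ θ : Eu m, |∫ ω, ⟪x t ω - z, θ⟫ ∂P - ⟪q • ν + α (projS ν z), θ⟫ * (expLT t ⟪z, ν⟫).toReal| ≤
      ‖θ‖ * (rho m K t * (expLT t ⟪z, ν⟫).toReal) := by
  have hwm := hw.meas
  have hw1 : ∀ t, Measurable (fun ω => ⟪w t ω, ν⟫) := fun t => by
    have hf : Measurable fun x : Eu m => ⟪x, ν⟫ := by fun_prop
    exact hf.comp (hw.meas t)
  have hη : NiceEta P w η := ⟨fun t ht => (hskew.adapted_eta t ht).mono (natFilt_inner_le w ν t)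
    le_rfl, hskew.cont, hskew.mono, hskew.zero⟩
  have hηm : ∀ s, 0 ≤ s → Measurable (η s) := fun s hs =>
    (hskew.adapted_eta s hs).mono (natFilt_le hw1 s) le_rfl
  have hcont : ∀ᵐ ω ∂P, ContinuousOn (fun t => ⟪x t ω, ν⟫) (Set.Ici 0) := by
    filter_upwards [hsol.cont] with ω h
    exact h.inner continuousOn_const
  have hone := hskew.skewOne (hw.isBM1 hν) hcont
  set a : Eu m → Eu m := fun v => α (projS ν v) with hadef
  set γ : Eu m → Eu m →L[ℝ] Eu m := fun v => βt (projS ν v) with hγdef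
  set c : Eu m := q • ν + a z with hc
  have hac : Continuous a := by
    refine (LipschitzWith.of_dist_le_mul (K := Real.toNNReal √K) fun v v' => ?_).continuous
    rw [dist_eq_norm, dist_eq_norm, Real.coe_toNNReal _ (Real.sqrt_nonneg K)]
    refine (hαl v v').trans ?_
    gcongr
    rw [← projS_sub]
    exact norm_projS_le hν _
  have hxm : ∀ s, 0 ≤ s → Measurable (x s) := fun s hs =>
    (hsol.adapted s hs).mono (MFilt_le hwm hwt.meas (hηm s hs)) le_rfl
  have hηint : ∀ s, 0 ≤ s → ∫⁻ ω, ENNReal.ofReal (η s ω) ∂P = expLT s ⟪z, ν⟫ := fun s hs => by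
    obtain ⟨h1, h2, -⟩ := hone.moments hs
    rw [← ofReal_integral_eq_lintegral_ofReal h1, h2, ENNReal.ofReal_toReal]
    · exact ((expLT_le hs _).trans_lt ENNReal.ofReal_lt_top).ne
    · filter_upwards [hskew.mono, hskew.zero] with ω h3 h4
      have := h3 hs
      simpa [h4] using this
  have hηfin : ∀ s, 0 ≤ s → expLT s ⟪z, ν⟫ ≠ ⊤ := fun s hs =>
    ((expLT_le hs _).trans_lt ENNReal.ofReal_lt_top).ne
  have hcast : ∀ (n k : ℕ) (s : ℝ), 0 + ((k:ℝ) + 1) * (s - 0) / n = partPt 0 s n (k + 1) := by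
    intro n k s; simp [partPt]
  have hcast' : ∀ (n k : ℕ) (s : ℝ), 0 + (k:ℝ) * (s - 0) / n = partPt 0 s n k := by
    intro n k s; simp [partPt]
  have heqn := hsol.eqn
  simp only [hcast, hcast'] at heqn
  choose! A M hA hM hxe using heqn
  have hMb := fun s (hs : 0 ≤ s) => stoch_integral_bounds hν hwm hwt hind hη hsol.adapted
    (γ := γ) hβc hβ hs (by rw [hηint s hs]; exact hηfin s hs) (hM s hs)
  have hcn : ∀ v, ‖q • ν + a v‖ ≤ 1 + K := fun v => by
    refine (norm_add_le _ _).trans ?_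
    rw [norm_smul, hν, mul_one]
    exact add_le_add hq (hα v)
  have hAb : ∀ s, 0 ≤ s → ∀ᵐ ω ∂P, ‖A s ω‖ ≤ (1 + K) * η s ω := fun s hs => by
    refine norm_le_of_tendstoInMeasure ((hA s hs).comp (tendsto_add_atTop_nat 1)) fun n => ?_
    filter_upwards [hskew.mono, hskew.zero] with ω h1 h2
    exact norm_riemann_sum_le h1 h2 hs n.succ_pos fun k => hcn _
  -- weighting by the increments of `η` turns the drift error into weighted displacements of `x`,
  -- to which `weighted_displacement` applies with `r = √(√t)`
  have hsum : ∀ n : ℕ, ∫⁻ ω, ‖(∑ k ∈ Finset.range (n + 1), (η (partPt 0 t (n + 1) (k + 1)) ω -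
      η (partPt 0 t (n + 1) k) ω) • (q • ν + a (x (partPt 0 t (n + 1) k) ω))) - η t ω • c‖ₑ ∂P ≤
      ENNReal.ofReal (rho m K t) * expLT t ⟪z, ν⟫ := by
    intro n
    have hτ0 : ∀ k, 0 ≤ partPt 0 t (n + 1) k := fun k => by
      have := partPt_mono ht.le (n + 1) (Nat.zero_le k)
      simpa [partPt_zero] using this
    have hτt : ∀ k, k ≤ n + 1 → partPt 0 t (n + 1) k ≤ t := fun k hk => by
      have := partPt_mono ht.le (n + 1) hk
      simpa [partPt_last _ _ n.succ_pos] using this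
    set D : ℕ → Ω → ENNReal := fun k ω => ENNReal.ofReal
      (η (partPt 0 t (n + 1) (k + 1)) ω - η (partPt 0 t (n + 1) k) ω) with hD
    have hDm : ∀ k, k < n + 1 → Measurable[natFilt (fun t ω => ⟪w t ω, ν⟫) t] (D k) := by
      intro k hk
      refine Measurable.ennreal_ofReal (Measurable.sub ?_ ?_)
      · exact (hskew.adapted_eta _ (hτ0 _)).mono (natFilt_mono _ (hτt _ hk)) le_rfl
      · exact (hskew.adapted_eta _ (hτ0 _)).mono (natFilt_mono _ (hτt _ hk.le)) le_rfl
    have hDm0 : ∀ k, Measurable (D k) := fun k =>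
      ((hηm _ (hτ0 _)).sub (hηm _ (hτ0 _))).ennreal_ofReal
    have hDsum : ∀ᵐ ω ∂P, ∑ k ∈ Finset.range (n + 1), D k ω = ENNReal.ofReal (η t ω) := by
      filter_upwards [hskew.mono, hskew.zero] with ω h1 h2
      rw [← ENNReal.ofReal_sum_of_nonneg, sum_partPt_sub (f := fun s => η s ω) h2 t n.succ_pos]
      intro k _
      exact sub_nonneg.2 (h1 (partPt_mono ht.le (n + 1) k.le_succ))
    have hpt : ∀ᵐ ω ∂P, ‖(∑ k ∈ Finset.range (n + 1), (η (partPt 0 t (n + 1) (k + 1)) ω -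
        η (partPt 0 t (n + 1) k) ω) • (q • ν + a (x (partPt 0 t (n + 1) k) ω))) - η t ω • c‖ₑ ≤
        ∑ k ∈ Finset.range (n + 1), D k ω * ‖a (x (partPt 0 t (n + 1) k) ω) - a z‖ₑ := by
      filter_upwards [hskew.mono, hskew.zero] with ω h1 h2
      rw [← sum_partPt_sub (f := fun s => η s ω) h2 t n.succ_pos, Finset.sum_smul,
        ← Finset.sum_sub_distrib]
      refine (enorm_sum_le _ _).trans (Finset.sum_le_sum fun k _ => ?_)
      rw [← smul_sub, enorm_smul, hc, add_sub_add_left_eq_sub, ← ofReal_norm (η _ ω - η _ ω),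
        Real.norm_of_nonneg (sub_nonneg.2 (h1 (partPt_mono ht.le (n + 1) k.le_succ)))]
    have hX : ∑ k ∈ Finset.range (n + 1), ∫⁻ ω, D k ω ∂P = expLT t ⟪z, ν⟫ := by
      rw [← lintegral_finsetSum _ fun k _ => hDm0 k, lintegral_congr_ae hDsum, hηint t ht.le]
    have hY : ∑ k ∈ Finset.range (n + 1), ∫⁻ ω, D k ω * ENNReal.ofReal (η t ω) ∂P ≤
        ENNReal.ofReal (2 * √t) * expLT t ⟪z, ν⟫ := by
      rw [← lintegral_finsetSum (f := fun k ω => D k ω * ENNReal.ofReal (η t ω)) _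
        fun k _ => (hDm0 k).mul (hηm t ht.le).ennreal_ofReal]
      refine le_trans (le_of_eq ?_) (hone.moments ht.le).2.2
      refine lintegral_congr_ae ?_
      filter_upwards [hDsum] with ω h
      rw [← Finset.sum_mul, h, sq]
    set r : ℝ := √(√t) with hr
    have hr0 : 0 < r := by positivity
    have hk : ∀ k ∈ Finset.range (n + 1),
        ∫⁻ ω, D k ω * ‖a (x (partPt 0 t (n + 1) k) ω) - a z‖ₑ ∂P ≤
      ENNReal.ofReal (√K) * (ENNReal.ofReal (1 + K) * ∫⁻ ω, D k ω * ENNReal.ofReal (η t ω) ∂P +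
        ENNReal.ofReal (2 * r) * ∫⁻ ω, D k ω ∂P +
        ENNReal.ofReal (r⁻¹ * (m * t)) * ∫⁻ ω, D k ω ∂P +
        ENNReal.ofReal (r⁻¹ * (m * (m * K ^ 2))) *
          ∫⁻ ω, D k ω * ENNReal.ofReal (η t ω) ∂P) := by
      intro k hk
      have hkn := Finset.mem_range.1 hk
      refine weighted_displacement hν hw hK (hτ0 k) (hτt k hkn.le) (hηm t ht.le) ?_
        (hAb _ (hτ0 k)) (hDm k hkn) ?_ (hxe _ (hτ0 k)) hαl hr0
      · filter_upwards [hskew.mono] with ω h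
        exact h (hτt k hkn.le)
      · have hG : Measurable[pathSig w] (D k) := (hDm k hkn).mono
          ((natFilt_inner_le w ν t).trans (natFilt_le_pathSig w t)) le_rfl
        refine ((hMb _ (hτ0 k)).2 _ hG).trans (le_of_eq ?_)
        rw [ENNReal.ofReal_mul (p := (m:ℝ)) (q := m * K ^ 2) (by positivity), ENNReal.ofReal_natCast,
          mul_assoc]
    refine (lintegral_mono_ae hpt).trans ?_
    rw [lintegral_finsetSum (f := fun k ω => D k ω * ‖a (x (partPt 0 t (n + 1) k) ω) - a z‖ₑ) _
      fun k _ => (hDm0 k).mul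
        ((hac.measurable.comp (hxm _ (hτ0 k))).sub measurable_const).enorm]
    refine (Finset.sum_le_sum hk).trans ?_
    rw [← Finset.mul_sum, Finset.sum_add_distrib, Finset.sum_add_distrib, Finset.sum_add_distrib,
      ← Finset.mul_sum, ← Finset.mul_sum, ← Finset.mul_sum, ← Finset.mul_sum, hX]
    calc _ ≤ ENNReal.ofReal (√K) * (ENNReal.ofReal (1 + K) *
          (ENNReal.ofReal (2 * √t) * expLT t ⟪z, ν⟫) +
          ENNReal.ofReal (2 * r) * expLT t ⟪z, ν⟫ +
          ENNReal.ofReal (r⁻¹ * (m * t)) * expLT t ⟪z, ν⟫ +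
          ENNReal.ofReal (r⁻¹ * (m * (m * K ^ 2))) *
            (ENNReal.ofReal (2 * √t) * expLT t ⟪z, ν⟫)) := by gcongr
      _ = _ := by
        conv_rhs => rw [rho, ← hr, ENNReal.ofReal_mul (p := √K) (by positivity),
          ENNReal.ofReal_add (by positivity) (by positivity),
          ENNReal.ofReal_add (by positivity) (by positivity),
          ENNReal.ofReal_add (by positivity) (by positivity),
          ENNReal.ofReal_mul (p := 1 + K) (by positivity),
          ENNReal.ofReal_mul (p := r⁻¹ * (m * (m * K ^ 2))) (by positivity)]
        ring
  have hFm : ∀ n : ℕ, Measurable fun ω => ∑ k ∈ Finset.range (n + 1),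
      (η (partPt 0 t (n + 1) (k + 1)) ω -
      η (partPt 0 t (n + 1) k) ω) • (q • ν + a (x (partPt 0 t (n + 1) k) ω)) := by
    intro n
    have hτ0 : ∀ k, 0 ≤ partPt 0 t (n + 1) k := fun k => by
      have := partPt_mono ht.le (n + 1) (Nat.zero_le k)
      simpa [partPt_zero] using this
    refine Finset.measurable_fun_sum _ fun k _ => ?_
    exact ((hηm _ (hτ0 _)).sub (hηm _ (hτ0 _))).smul
      (measurable_const.add (hac.measurable.comp (hxm _ (hτ0 k))))
  have hA' := (hA t ht.le).comp (tendsto_add_atTop_nat 1)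
  have hAm : AEMeasurable (A t) P := hA'.aemeasurable fun n => (hFm n).aemeasurable
  have hηc : Measurable fun ω => η t ω • c := (hηm t ht.le).smul_const c
  have herr : ∫⁻ ω, ‖A t ω - η t ω • c‖ₑ ∂P ≤ ENNReal.ofReal (rho m K t) * expLT t ⟪z, ν⟫ :=
    lintegral_le_of_tendstoInMeasure (Φ := fun _ y => ‖y‖ₑ) (fun _ => by fun_prop)
      (fun n => ((hFm n).sub hηc).enorm.aemeasurable)
      (tendstoInMeasure_sub_const hA') hsum
  have hρ : 0 ≤ rho m K t := by unfold rho; positivity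
  have hfinr : ENNReal.ofReal (rho m K t) * expLT t ⟪z, ν⟫ ≠ ⊤ :=
    ENNReal.mul_ne_top ENNReal.ofReal_ne_top (hηfin t ht.le)
  have hEi : Integrable (fun ω => A t ω - η t ω • c) P :=
    ⟨(hAm.sub hηc.aemeasurable).aestronglyMeasurable, herr.trans_lt hfinr.lt_top⟩
  have hnorm : ∫ ω, ‖A t ω - η t ω • c‖ ∂P ≤ rho m K t * (expLT t ⟪z, ν⟫).toReal := by
    rw [integral_norm_eq_lintegral_enorm hEi.aestronglyMeasurable]
    refine (ENNReal.toReal_mono hfinr herr).trans (le_of_eq ?_)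
    rw [ENNReal.toReal_mul, ENNReal.toReal_ofReal hρ]
  obtain ⟨hηi, hηe, -⟩ := hone.moments ht.le
  intro θ
  obtain ⟨hMi, hM0⟩ := (hMb t ht.le).1 θ
  have hwl := moments_of_map_gaussian ((hwm t).sub (hwm 0) |>.inner_const) (hw.law_inner le_rfl ht.le θ)
  have hwi : Integrable (fun ω => ⟪w t ω - w 0 ω, θ⟫) P := hwl.1.integrable (by norm_num)
  have hw0 : ∫ ω, ⟪w t ω - w 0 ω, θ⟫ ∂P = 0 := hwl.2.1
  have hdec : ∀ᵐ ω ∂P, ⟪x t ω - z, θ⟫ = ⟪A t ω - η t ω • c, θ⟫ + η t ω * ⟪c, θ⟫ + ⟪M t ω, θ⟫ +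
      ⟪w t ω - w 0 ω, θ⟫ := by
    filter_upwards [hxe t ht.le] with ω h
    rw [h, inner_sub_left (A t ω), inner_smul_left]
    simp only [inner_sub_left, inner_add_left, RCLike.conj_to_real]
    ring
  have hE1 : Integrable (fun ω => ⟪A t ω - η t ω • c, θ⟫) P := hEi.inner_const θ
  rw [integral_congr_ae hdec, integral_add (by exact (hE1.add (hηi.mul_const _)).add hMi) hwi,
    integral_add (by exact hE1.add (hηi.mul_const _)) (by exact hMi),
    integral_add (by exact hE1) (by exact hηi.mul_const _), hM0,
    hw0, integral_mul_const, hηe]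
  have : ∫ ω, ⟪A t ω - η t ω • c, θ⟫ ∂P + (expLT t ⟪z, ν⟫).toReal * ⟪c, θ⟫ + 0 + 0 -
      ⟪c, θ⟫ * (expLT t ⟪z, ν⟫).toReal = ∫ ω, ⟪A t ω - η t ω • c, θ⟫ ∂P := by ring
  rw [this, ← Real.norm_eq_abs]
  calc _ ≤ ∫ ω, ‖⟪A t ω - η t ω • c, θ⟫‖ ∂P := norm_integral_le_integral_norm _
    _ ≤ ∫ ω, ‖θ‖ * ‖A t ω - η t ω • c‖ ∂P := by
      refine integral_mono hE1.norm (hEi.norm.const_mul _) fun ω => ?_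
      rw [mul_comm]
      exact norm_inner_le_norm _ _
    _ ≤ _ := by
      rw [integral_const_mul]
      gcongr

end Paths

/-! ### The expected local time as an approximate identity -/

lemma measurable_gaussianPDF_zero :
    Measurable fun p : ℝ × ℝ => gaussianPDF p.2 p.1.toNNReal 0 := by
  unfold gaussianPDF gaussianPDFReal
  fun_prop

lemma measurable_expLT (t : ℝ) : Measurable (expLT t) := by
  have h : Measurable fun p : ℝ × ℝ => gaussianPDF p.1 p.2.toNNReal 0 :=
    measurable_gaussianPDF_zero.comp measurable_swap
  exact h.lintegral_prod_right'

/-- Integrating against `E η_t`, as a function of the starting point, amounts to averaging over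
the heat semigroup, because the heat kernel is symmetric. -/
lemma lintegral_mul_expLT (t : ℝ) {F : ℝ → ENNReal} (hF : Measurable F) :
    ∫⁻ a, F a * expLT t a = ∫⁻ s in Set.Ioc 0 t, ∫⁻ a, F a ∂(gaussianReal 0 s.toNNReal) := by
  have h1 : ∀ a, F a * expLT t a = ∫⁻ s in Set.Ioc 0 t, F a * gaussianPDF a s.toNNReal 0 := fun a => by
    rw [expLT, lintegral_const_mul]
    exact measurable_gaussianPDF_zero.comp (measurable_id.prodMk measurable_const)
  simp_rw [h1]
  rw [lintegral_lintegral_swap]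
  · refine setLIntegral_congr_fun measurableSet_Ioc fun s hs => ?_
    have hs0 : s.toNNReal ≠ 0 := by
      have : 0 < s := hs.1
      simpa using this
    rw [gaussianReal_of_var_ne_zero _ hs0, lintegral_withDensity_eq_lintegral_mul _
      (measurable_gaussianPDF _ _) hF]
    refine lintegral_congr fun a => ?_
    simp only [Pi.mul_apply]
    rw [mul_comm]
    congr 1
    simp [gaussianPDF, gaussianPDFReal]
  · exact ((hF.comp measurable_fst).mul (measurable_gaussianPDF_zero.comp measurable_swap)).aemeasurable

lemma lintegral_expLT {t : ℝ} : ∫⁻ a, expLT t a = ENNReal.ofReal t := by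
  have := lintegral_mul_expLT t (F := fun _ => 1) measurable_const
  simpa using this

/-- The second moment of the starting point under `E η_t` is of order `t²`; by Chebyshev, the mass
of `E η_t / t` concentrates at `0`. -/
lemma lintegral_sq_mul_expLT {t : ℝ} :
    ∫⁻ a, ENNReal.ofReal (a ^ 2) * expLT t a ≤ ENNReal.ofReal t * ENNReal.ofReal t := by
  rw [lintegral_mul_expLT t (by fun_prop)]
  calc _ ≤ ∫⁻ s in Set.Ioc 0 t, ENNReal.ofReal t := by
        refine setLIntegral_mono measurable_const fun s hs => ?_
        have hm : ∀ v : NNReal, ∫⁻ a, ENNReal.ofReal (a ^ 2) ∂(gaussianReal 0 v) = v := by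
          intro v
          obtain ⟨h1, h2, h3⟩ := moments_of_map_gaussian (P := gaussianReal 0 v) (f := id)
            measurable_id (v := v) (by simp)
          have h4 : Integrable (fun a : ℝ => a ^ 2) (gaussianReal 0 v) := h1.integrable_sq
          rw [← ofReal_integral_eq_lintegral_ofReal h4
            (Eventually.of_forall fun a => sq_nonneg _)]
          simp only [id] at h3 ⊢
          rw [h3]; simp
        rw [hm]
        exact ENNReal.ofReal_le_ofReal hs.2
    _ = _ := by simp

lemma expLT_ne_top (t a : ℝ) : expLT t a ≠ ⊤ := by
  rcases le_total 0 t with h | h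
  · exact ((expLT_le h a).trans_lt ENNReal.ofReal_lt_top).ne
  · simp [expLT, Set.Ioc_eq_empty_of_le h]

lemma integrable_expLT {t : ℝ} : Integrable fun a => (expLT t a).toReal :=
  integrable_toReal_of_lintegral_ne_top (measurable_expLT t).aemeasurable
    (by rw [lintegral_expLT]; exact ENNReal.ofReal_ne_top)

lemma integral_expLT {t : ℝ} (ht : 0 ≤ t) : ∫ a, (expLT t a).toReal = t := by
  rw [integral_toReal (measurable_expLT t).aemeasurable
    (Eventually.of_forall fun a => (expLT_ne_top t a).lt_top), lintegral_expLT,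
    ENNReal.toReal_ofReal ht]

lemma integrable_sq_mul_expLT {t : ℝ} : Integrable fun a => a ^ 2 * (expLT t a).toReal := by
  have h : Integrable fun a => (ENNReal.ofReal (a ^ 2) * expLT t a).toReal := by
    refine integrable_toReal_of_lintegral_ne_top ?_ ?_
    · exact (Measurable.mul (by fun_prop) (measurable_expLT t)).aemeasurable
    · exact (lintegral_sq_mul_expLT.trans_lt (by finiteness)).ne
  refine h.congr (Eventually.of_forall fun a => ?_)
  simp [ENNReal.toReal_mul, ENNReal.toReal_ofReal (sq_nonneg a)]

lemma integral_sq_mul_expLT {t : ℝ} (ht : 0 ≤ t) : ∫ a, a ^ 2 * (expLT t a).toReal ≤ t * t := by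
  rw [integral_eq_lintegral_of_nonneg_ae
    (Eventually.of_forall fun a => mul_nonneg (sq_nonneg _) ENNReal.toReal_nonneg)
    integrable_sq_mul_expLT.aestronglyMeasurable]
  refine ENNReal.toReal_le_of_le_ofReal (by positivity) ?_
  rw [ENNReal.ofReal_mul ht]
  refine le_trans (le_of_eq ?_) lintegral_sq_mul_expLT
  refine lintegral_congr fun a => ?_
  rw [ENNReal.ofReal_mul (sq_nonneg a), ENNReal.ofReal_toReal (expLT_ne_top t a)]

/-- The functions `E η_t / t` of the starting point are an approximate identity at `0`. -/
lemma tendsto_expLT_integral {Ψ : ℝ → ℝ} (hΨm : Measurable Ψ) (hΨ : ContinuousAt Ψ 0) {C : ℝ}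
    (hC : ∀ a, |Ψ a| ≤ C) :
    Tendsto (fun t : ℝ => (1 / t) * ∫ a, Ψ a * (expLT t a).toReal) (nhdsWithin 0 (Set.Ioi 0))
      (nhds (Ψ 0)) := by
  have hC0 : 0 ≤ C := (abs_nonneg _).trans (hC 0)
  rw [Metric.tendsto_nhds]
  intro ε hε
  obtain ⟨δ, hδ, hδ'⟩ := Metric.continuousAt_iff.1 hΨ (ε / 2) (by positivity)
  have hpt : ∀ a, |Ψ a - Ψ 0| ≤ ε / 2 + 2 * C / δ ^ 2 * a ^ 2 := by
    intro a
    by_cases ha : |a| < δ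
    · have := hδ' (x := a) (by simpa [Real.dist_eq] using ha)
      rw [Real.dist_eq] at this
      have h2 : 0 ≤ 2 * C / δ ^ 2 * a ^ 2 := by positivity
      linarith
    · push Not at ha
      have h1 : δ ^ 2 ≤ a ^ 2 := by
        rw [← sq_abs a]; gcongr
      have h2 : 2 * C ≤ 2 * C / δ ^ 2 * a ^ 2 := by
        rw [div_mul_eq_mul_div, le_div_iff₀ (by positivity)]
        gcongr
      have h3 := abs_sub (Ψ a) (Ψ 0)
      linarith [hC a, hC 0]
  have hlim : ∀ᶠ t : ℝ in nhdsWithin 0 (Set.Ioi 0), 2 * C / δ ^ 2 * t < ε / 2 := by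
    have h : Tendsto (fun t : ℝ => 2 * C / δ ^ 2 * t) (nhdsWithin 0 (Set.Ioi 0)) (nhds 0) := by
      have : Continuous fun t : ℝ => 2 * C / δ ^ 2 * t := by fun_prop
      simpa using (this.tendsto 0).mono_left nhdsWithin_le_nhds
    exact h.eventually (gt_mem_nhds (by positivity))
  filter_upwards [hlim, self_mem_nhdsWithin] with t h1 ht
  have ht : (0:ℝ) < t := ht
  have hi : Integrable fun a => Ψ a * (expLT t a).toReal := by
    refine integrable_expLT.bdd_mul (c := C) hΨm.aestronglyMeasurable
      (Eventually.of_forall fun a => hC a)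
  have hi' : Integrable fun a => (Ψ a - Ψ 0) * (expLT t a).toReal := by
    simp_rw [sub_mul]
    exact hi.sub (integrable_expLT.const_mul _)
  have h3 : (∫ a, Ψ a * (expLT t a).toReal) - t * Ψ 0 =
      ∫ a, (Ψ a - Ψ 0) * (expLT t a).toReal := by
    simp_rw [sub_mul]
    rw [integral_sub hi (integrable_expLT.const_mul _), integral_const_mul, integral_expLT ht.le,
      mul_comm t]
  have h4 : |∫ a, (Ψ a - Ψ 0) * (expLT t a).toReal| ≤ ε / 2 * t + 2 * C / δ ^ 2 * (t * t) := by
    rw [← Real.norm_eq_abs]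
    calc _ ≤ ∫ a, ‖(Ψ a - Ψ 0) * (expLT t a).toReal‖ := norm_integral_le_integral_norm _
      _ ≤ ∫ a, (ε / 2 * (expLT t a).toReal + 2 * C / δ ^ 2 * (a ^ 2 * (expLT t a).toReal)) := by
        refine integral_mono hi'.norm
          ((integrable_expLT.const_mul _).add (integrable_sq_mul_expLT.const_mul _)) fun a => ?_
        dsimp only
        rw [norm_mul, Real.norm_eq_abs, Real.norm_of_nonneg ENNReal.toReal_nonneg]
        calc _ ≤ (ε / 2 + 2 * C / δ ^ 2 * a ^ 2) * (expLT t a).toReal := by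
              gcongr
              exact hpt a
          _ = _ := by ring
      _ = ε / 2 * t + 2 * C / δ ^ 2 * ∫ a, a ^ 2 * (expLT t a).toReal := by
        rw [integral_add (integrable_expLT.const_mul _) (integrable_sq_mul_expLT.const_mul _),
          integral_const_mul, integral_const_mul, integral_expLT ht.le]
      _ ≤ _ := by
        gcongr
        exact integral_sq_mul_expLT ht.le
  rw [Real.dist_eq]
  have h5 : 1 / t * (∫ a, Ψ a * (expLT t a).toReal) - Ψ 0 =
      1 / t * ∫ a, (Ψ a - Ψ 0) * (expLT t a).toReal := by
    rw [← h3]; field_simp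
  rw [h5, abs_mul, abs_of_pos (by positivity)]
  calc _ ≤ 1 / t * (ε / 2 * t + 2 * C / δ ^ 2 * (t * t)) := by gcongr
    _ = ε / 2 + 2 * C / δ ^ 2 * t := by field_simp
    _ < ε := by linarith

/-! ### Slicing along `ν` -/

/-- The orthogonal decomposition `(a, y) ↦ aν + Jy`, as an isometry. -/
def sliceIsometry {d : ℕ} {ν : Eu (d + 1)} (hν : ‖ν‖ = 1) (J : Eu d →ₗᵢ[ℝ] Eu (d + 1))
    (hJ : ∀ y, ⟪J y, ν⟫ = 0) : WithLp 2 (ℝ × Eu d) →ₗᵢ[ℝ] Eu (d + 1) where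
  toFun p := p.fst • ν + J p.snd
  map_add' p p' := by
    simp only [WithLp.add_fst, WithLp.add_snd, add_smul, map_add]; abel
  map_smul' c p := by
    simp [WithLp.smul_fst, WithLp.smul_snd, smul_smul]
  norm_map' p := by
    have h : ‖p.fst • ν + J p.snd‖ ^ 2 = ‖p‖ ^ 2 := by
      rw [WithLp.prod_norm_sq_eq_of_L2, norm_add_sq_real, inner_smul_left, real_inner_comm, hJ,
        norm_smul, hν, LinearIsometry.norm_map]
      simp
    exact (pow_left_inj₀ (norm_nonneg _) (norm_nonneg _) two_ne_zero).1 h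

/-- Fubini along `ν`: Lebesgue measure is the product of Lebesgue measure on the line and on the
hyperplane. -/
lemma slice_measurePreserving {d : ℕ} {ν : Eu (d + 1)} (hν : ‖ν‖ = 1) (J : Eu d →ₗᵢ[ℝ] Eu (d + 1))
    (hJ : ∀ y, ⟪J y, ν⟫ = 0) :
    MeasurePreserving (fun p : ℝ × Eu d => p.1 • ν + J p.2) (volume.prod volume) volume ∧
      MeasurableEmbedding (fun p : ℝ × Eu d => p.1 • ν + J p.2) := by
  have hfr : Module.finrank ℝ (WithLp 2 (ℝ × Eu d)) = Module.finrank ℝ (Eu (d + 1)) := by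
    rw [(WithLp.linearEquiv 2 ℝ (ℝ × Eu d)).finrank_eq, Module.finrank_prod]
    simp [add_comm]
  set L := (sliceIsometry hν J hJ).toLinearIsometryEquiv hfr with hL
  have h1 : (fun p : ℝ × Eu d => p.1 • ν + J p.2) = fun p => L (WithLp.toLp 2 p) := rfl
  rw [h1]
  constructor
  · exact L.measurePreserving.comp (WithLp.volume_preserving_toLp ℝ (Eu d))
  · exact L.toHomeomorph.measurableEmbedding.comp
      (MeasurableEquiv.toLp 2 (ℝ × Eu d)).measurableEmbedding

lemma projS_slice {d : ℕ} {ν : Eu (d + 1)} (hν : ‖ν‖ = 1) {y : Eu (d + 1)}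
    (hy : ⟪y, ν⟫ = 0) (a : ℝ) : projS ν (a • ν + y) = y ∧ ⟪a • ν + y, ν⟫ = a := by
  have h : ⟪a • ν + y, ν⟫ = a := by
    rw [inner_add_left, inner_smul_left, hy, real_inner_self_eq_norm_sq, hν]; simp
  refine ⟨?_, h⟩
  rw [projS, h]; simp

/-- Over small times, `E η_t / t` as a function of the starting point converges to Lebesgue measure
on the hyperplane. -/
lemma tendsto_slice {d : ℕ} {ν : Eu (d + 1)} (hν : ‖ν‖ = 1) (J : Eu d →ₗᵢ[ℝ] Eu (d + 1))
    (hJ : ∀ y, ⟪J y, ν⟫ = 0) {ψ : Eu (d + 1) → ℝ} (hψ : Continuous ψ) (hψs : HasCompactSupport ψ) :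
    (∀ t, Integrable fun z => ψ z * (expLT t ⟪z, ν⟫).toReal) ∧
    Tendsto (fun t : ℝ => (1 / t) * ∫ z, ψ z * (expLT t ⟪z, ν⟫).toReal)
      (nhdsWithin 0 (Set.Ioi 0)) (nhds (∫ y, ψ (J y))) := by
  obtain ⟨hmp, hme⟩ := slice_measurePreserving hν J hJ
  set T : ℝ × Eu d → Eu (d + 1) := fun p => p.1 • ν + J p.2 with hT
  have hTc : Continuous T := by
    have := J.continuous
    fun_prop
  obtain ⟨C, hC⟩ := hψ.bounded_above_of_compact_support hψs
  obtain ⟨R, hR⟩ := hψs.isBounded.subset_closedBall 0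
  have hJT : ∀ p : ℝ × Eu d, ⟪T p, ν⟫ = p.1 := fun p => (projS_slice hν (hJ p.2) p.1).2
  have hle : ∀ p : ℝ × Eu d, ‖p.2‖ ≤ ‖T p‖ := fun p => by
    have h := norm_projS_le hν (T p)
    rw [hT, (projS_slice hν (hJ p.2) p.1).1, J.norm_map] at h
    exact h
  set B : Eu d → ℝ := (Metric.closedBall 0 R).indicator fun _ => C with hB
  have hBi : Integrable B :=
    (integrableOn_const (by exact measure_closedBall_lt_top.ne)).integrable_indicator
      measurableSet_closedBall
  have hψB : ∀ p : ℝ × Eu d, ‖ψ (T p)‖ ≤ B p.2 := by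
    intro p
    by_cases h : T p ∈ tsupport ψ
    · have h1 : p.2 ∈ Metric.closedBall (0 : Eu d) R := by
        have h2 := hR h
        rw [mem_closedBall_zero_iff] at h2 ⊢
        exact (hle p).trans h2
      rw [hB, Set.indicator_of_mem h1]
      exact hC _
    · rw [image_eq_zero_of_notMem_tsupport h, norm_zero, hB]
      exact Set.indicator_nonneg (fun _ _ => (norm_nonneg _).trans (hC 0)) _
  have hψTm : Continuous fun p => ψ (T p) := hψ.comp hTc
  have hint : ∀ t, Integrable (fun p : ℝ × Eu d => ψ (T p) * (expLT t p.1).toReal)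
      (volume.prod volume) := by
    intro t
    have h1 : Integrable (fun p : ℝ × Eu d => (expLT t p.1).toReal * B p.2) (volume.prod volume) :=
      integrable_expLT.mul_prod hBi
    refine h1.mono' ?_ (Eventually.of_forall fun p => ?_)
    · exact hψTm.aestronglyMeasurable.mul
        ((measurable_expLT t).ennreal_toReal.comp measurable_fst).aestronglyMeasurable
    · rw [norm_mul, Real.norm_of_nonneg ENNReal.toReal_nonneg, mul_comm]
      exact mul_le_mul_of_nonneg_left (hψB p) ENNReal.toReal_nonneg
  have hcomp : ∀ t, (fun z => ψ z * (expLT t ⟪z, ν⟫).toReal) ∘ T =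
      fun p : ℝ × Eu d => ψ (T p) * (expLT t p.1).toReal := fun t => by
    ext p
    simp only [Function.comp, hJT]
  have hI : ∀ t, Integrable fun z => ψ z * (expLT t ⟪z, ν⟫).toReal := fun t => by
    rw [← hmp.integrable_comp_emb hme, hcomp]
    exact hint t
  refine ⟨hI, ?_⟩
  set Ψ : ℝ → ℝ := fun a => ∫ y, ψ (T (a, y)) with hΨ
  have hsec : ∀ a : ℝ, Continuous fun y : Eu d => ψ (T (a, y)) := fun a =>
    hψTm.comp (by fun_prop)
  have hΨc : Continuous Ψ := by
    refine continuous_of_dominated (bound := B) (fun a => (hsec a).aestronglyMeasurable)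
      (fun a => Eventually.of_forall fun y => hψB (a, y)) hBi
      (Eventually.of_forall fun y => hψTm.comp (by fun_prop))
  have hΨb : ∀ a, |Ψ a| ≤ ∫ y, B y := fun a => by
    rw [← Real.norm_eq_abs]
    exact norm_integral_le_of_norm_le hBi (Eventually.of_forall fun y => hψB (a, y))
  have hlim := tendsto_expLT_integral hΨc.measurable hΨc.continuousAt hΨb
  have h0 : Ψ 0 = ∫ y, ψ (J y) := by simp [hΨ, hT]
  rw [h0] at hlim
  refine hlim.congr fun t => ?_
  congr 1
  rw [← hmp.integral_comp hme]
  simp_rw [hJT]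
  rw [integral_prod _ (hint t)]
  congr 1
  ext a
  exact (integral_mul_const _ _).symm

/-! ### The limit -/

lemma continuous_of_projS_lipschitz {m : ℕ} {F : Type*} [NormedAddCommGroup F] {ν : Eu m}
    (hν : ‖ν‖ = 1) {f : Eu m → F} {K : ℝ}
    (hf : ∀ v v', ‖f (projS ν v) - f (projS ν v')‖ ≤ √K * ‖projS ν v - projS ν v'‖) :
    Continuous fun v => f (projS ν v) := by
  refine (LipschitzWith.of_dist_le_mul (K := Real.toNNReal √K) fun v v' => ?_).continuous
  rw [dist_eq_norm, dist_eq_norm, Real.coe_toNNReal _ (Real.sqrt_nonneg K)]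
  refine (hf v v').trans ?_
  gcongr
  rw [← projS_sub]
  exact norm_projS_le hν _

/-- Generalized drift identification: for every `θ` and every continuous
compactly supported `φ`,
`lim_{t↓0} (1/t) ∫ φ(z) E(x(t,z) - z, θ) dz = ∫_S φ(z) (qν + α(z), θ) dσ_z`,
the hyperplane `S` being parametrized by the linear isometry `J`. -/
theorem generalized_drift_identification
    {d : ℕ}
    (P : Measure Ω) [IsProbabilityMeasure P]
    (ν : EuclideanSpace ℝ (Fin (d + 1))) (hν : ‖ν‖ = 1)
    (q : ℝ) (hq : q ∈ Set.Icc (-1 : ℝ) 1)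
    (α : EuclideanSpace ℝ (Fin (d + 1)) → EuclideanSpace ℝ (Fin (d + 1)))
    (βt : EuclideanSpace ℝ (Fin (d + 1)) →
      EuclideanSpace ℝ (Fin (d + 1)) →L[ℝ] EuclideanSpace ℝ (Fin (d + 1)))
    (hαS : ∀ v, ⟪α v, ν⟫ = 0) (hβS : ∀ v u, ⟪βt v u, ν⟫ = 0)
    (K : ℝ) (hK : 0 < K)
    (hbd : ∀ v, ⟪v, ν⟫ = 0 → ‖α v‖ + ‖βt v‖ ≤ K)
    (hlip : ∀ v v', ⟪v, ν⟫ = 0 → ⟪v', ν⟫ = 0 →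
      ‖α v - α v'‖ ^ 2 + ‖βt v - βt v'‖ ^ 2 ≤ K * ‖v - v'‖ ^ 2)
    (w : ℝ → Ω → EuclideanSpace ℝ (Fin (d + 1))) (hw : IsWiener P w)
    (wt : ℝ → Ω → EuclideanSpace ℝ (Fin (d + 1))) (hwt : IsWienerIn P ν wt)
    (hind : IndepProc P w wt)
    (X : EuclideanSpace ℝ (Fin (d + 1)) → ℝ → Ω → EuclideanSpace ℝ (Fin (d + 1)))
    (η : EuclideanSpace ℝ (Fin (d + 1)) → ℝ → Ω → ℝ)
    (hXmeas : ∀ t : ℝ, 0 ≤ t →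
      Measurable fun p : EuclideanSpace ℝ (Fin (d + 1)) × Ω => X p.1 t p.2)
    (hskew : ∀ z, IsSkewLT P q (fun t ω => ⟪w t ω, ν⟫) ⟪z, ν⟫
      (fun t ω => ⟪X z t ω, ν⟫) (η z))
    (hsol : ∀ z, SolvesFrom P (MFilt w wt (η z)) ν q α βt w (η z)
      (fun u ω => wt (η z u ω) ω) 0 (fun _ => z) (X z))
    (J : EuclideanSpace ℝ (Fin d) →ₗᵢ[ℝ] EuclideanSpace ℝ (Fin (d + 1)))
    (hJ : LinearMap.range J.toLinearMap = (Submodule.span ℝ {ν})ᗮ)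
    (θ : EuclideanSpace ℝ (Fin (d + 1)))
    (φ : EuclideanSpace ℝ (Fin (d + 1)) → ℝ)
    (hφc : Continuous φ) (hφs : HasCompactSupport φ) :
    Tendsto
      (fun t : ℝ => (1 / t) * ∫ z, φ z * ∫ ω, ⟪X z t ω - z, θ⟫ ∂P)
      (nhdsWithin 0 (Set.Ioi 0))
      (nhds (∫ y : EuclideanSpace ℝ (Fin d), φ (J y) * ⟪q • ν + α (J y), θ⟫)) := by
  have hJ' : ∀ y, ⟪J y, ν⟫ = 0 := fun y => by
    have h : J y ∈ (Submodule.span ℝ {ν})ᗮ := hJ ▸ ⟨y, rfl⟩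
    exact Submodule.mem_orthogonal_singleton_iff_inner_left.1 h
  have hq' : |q| ≤ 1 := abs_le.2 hq
  have hα : ∀ v, ‖α (projS ν v)‖ ≤ K := fun v =>
    (le_add_of_nonneg_right (norm_nonneg _)).trans (hbd _ (inner_projS hν v))
  have hβ : ∀ v, ‖βt (projS ν v)‖ ≤ K := fun v =>
    (le_add_of_nonneg_left (norm_nonneg _)).trans (hbd _ (inner_projS hν v))
  have hroot : ∀ {a b : ℝ}, 0 ≤ b → a ^ 2 ≤ K * b ^ 2 → a ≤ √K * b := fun {a b} hb h => by
    refine le_of_abs_le (abs_le_of_sq_le_sq ?_ (by positivity))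
    rwa [mul_pow, Real.sq_sqrt hK.le]
  have hαl : ∀ v v', ‖α (projS ν v) - α (projS ν v')‖ ≤ √K * ‖projS ν v - projS ν v'‖ :=
    fun v v' => hroot (norm_nonneg _) ((le_add_of_nonneg_right (sq_nonneg _)).trans
      (hlip _ _ (inner_projS hν v) (inner_projS hν v')))
  have hβl : ∀ v v', ‖βt (projS ν v) - βt (projS ν v')‖ ≤ √K * ‖projS ν v - projS ν v'‖ :=
    fun v v' => hroot (norm_nonneg _) ((le_add_of_nonneg_left (sq_nonneg _)).trans
      (hlip _ _ (inner_projS hν v) (inner_projS hν v')))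
  have hαc : Continuous fun v => α (projS ν v) := continuous_of_projS_lipschitz hν hαl
  have hβc : Continuous fun v => βt (projS ν v) := continuous_of_projS_lipschitz hν hβl
  -- the target density `ψ` and the weight `|φ|` controlling the error
  set ψ : EuclideanSpace ℝ (Fin (d + 1)) → ℝ :=
    fun z => φ z * ⟪q • ν + α (projS ν z), θ⟫ with hψ
  have hψc : Continuous ψ := hφc.mul ((continuous_const.add hαc).inner continuous_const)
  have hψs : HasCompactSupport ψ := hφs.mul_right
  obtain ⟨hψi, hψl⟩ := tendsto_slice hν J hJ' hψc hψs
  obtain ⟨hai, hal⟩ := tendsto_slice hν J hJ' (ψ := fun z => |φ z|) hφc.abs hφs.norm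
  have hψJ : ∫ y, ψ (J y) = ∫ y, φ (J y) * ⟪q • ν + α (J y), θ⟫ := by
    refine integral_congr_ae (Eventually.of_forall fun y => ?_)
    have h : projS ν (J y) = J y := by simp [projS, hJ' y]
    simp only [hψ, h]
  rw [← hψJ]
  set M : ℝ → EuclideanSpace ℝ (Fin (d + 1)) → ℝ :=
    fun t z => ∫ ω, ⟪X z t ω - z, θ⟫ ∂P with hM
  have hMm : ∀ t, 0 ≤ t → StronglyMeasurable (M t) := fun t ht => by
    have h : Measurable fun p : EuclideanSpace ℝ (Fin (d + 1)) × Ω =>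
        ⟪X p.1 t p.2 - p.1, θ⟫ :=
      ((hXmeas t ht).sub measurable_fst).inner measurable_const
    exact h.stronglyMeasurable.integral_prod_right (ν := P)
  have herr : ∀ t, 0 < t → ∀ z, ‖φ z * M t z - ψ z * (expLT t ⟪z, ν⟫).toReal‖ ≤
      ‖θ‖ * rho (d + 1) K t * (|φ z| * (expLT t ⟪z, ν⟫).toReal) := fun t ht z => by
    have h := drift_error hν hq' hw hwt hind hK hα hαl hβ hβc (hskew z) (hsol z) ht θ
    have h2 : φ z * M t z - ψ z * (expLT t ⟪z, ν⟫).toReal =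
        φ z * (M t z - ⟪q • ν + α (projS ν z), θ⟫ * (expLT t ⟪z, ν⟫).toReal) := by
      simp only [hψ]; ring
    rw [h2, norm_mul, Real.norm_eq_abs, Real.norm_eq_abs]
    calc _ ≤ |φ z| * (‖θ‖ * (rho (d + 1) K t * (expLT t ⟪z, ν⟫).toReal)) :=
          mul_le_mul_of_nonneg_left h (abs_nonneg _)
      _ = _ := by ring
  have hbi : ∀ t, Integrable fun z =>
      ‖θ‖ * rho (d + 1) K t * (|φ z| * (expLT t ⟪z, ν⟫).toReal) := fun t => (hai t).const_mul _
  have hei : ∀ t, 0 < t → Integrable fun z => φ z * M t z - ψ z * (expLT t ⟪z, ν⟫).toReal :=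
    fun t ht => (hbi t).mono' ((hφc.aestronglyMeasurable.mul
      (hMm t ht.le).aestronglyMeasurable).sub (hψi t).aestronglyMeasurable)
      (Eventually.of_forall (herr t ht))
  -- the error is `o(1)` times a convergent quantity
  have hez : Tendsto (fun t : ℝ => (1 / t) * ∫ z, (φ z * M t z - ψ z * (expLT t ⟪z, ν⟫).toReal))
      (nhdsWithin 0 (Set.Ioi 0)) (nhds 0) := by
    have h0 := ((tendsto_rho (d + 1) K).const_mul ‖θ‖).mul hal
    rw [mul_zero, zero_mul] at h0
    refine squeeze_zero_norm' ?_ h0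
    filter_upwards [self_mem_nhdsWithin] with t ht
    have ht : 0 < t := ht
    have h1 := norm_integral_le_of_norm_le (hbi t) (Eventually.of_forall (herr t ht))
    rw [integral_const_mul] at h1
    rw [norm_mul, Real.norm_of_nonneg (by positivity : 0 ≤ 1 / t)]
    calc _ ≤ 1 / t * _ := mul_le_mul_of_nonneg_left h1 (by positivity)
      _ = _ := by ring
  have hsum := hψl.add hez
  rw [add_zero] at hsum
  refine hsum.congr' ?_
  filter_upwards [self_mem_nhdsWithin] with t ht
  rw [← mul_add, ← integral_add (hψi t) (hei t ht)]
  congr 2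
  ext z
  ring
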